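/- arXiv:1602.06715 — 7 statements merged into one kernel-verified Lean document; each statement's English description precedes it below -/
import Mathlib

section
/- Let n be a positive integer and let A be a subset of G = (ℤ/5ℤ)^n such that the 3-fold sumset 3A is not all of G. If |A| > 3·5^(n-1)/2, then A is contained in a union of two cosets of some subgroup of G of index 5. -/
open Pointwise

/-- `itSum k A` is the `k`-fold sumset `kA = {a₁ + ⋯ + a_k : aᵢ ∈ A}`. -/
def itSum {G : Type*} [AddCommGroup G] : ℕ → Set G → Set G
  | 0, _ => {0}
  | (k + 1), A => itSum k A + A


lemma natcard_sub {G : Type*} [AddCommGroup G] [Fintype G] [DecidableEq G] (H : AddSubgroup G)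
    [DecidablePred (fun x => x ∈ H)] :
    Nat.card H = (Finset.univ.filter (fun x => x ∈ H)).card := by
  rw [Nat.card_eq_fintype_card]
  exact Fintype.card_subtype _

lemma aux_dvd {G : Type*} [AddCommGroup G] [Finite G] (H : AddSubgroup G)
    (A : Finset G) (hA : ∀ a ∈ A, ∀ h ∈ H, a + h ∈ A) : Nat.card H ∣ A.card := by
  classical
  rw [Finset.card_eq_sum_card_image (fun a : G => (QuotientAddGroup.mk a : G ⧸ H)) A]
  apply Finset.dvd_sum
  intro q hq
  obtain ⟨a, ha, rfl⟩ := Finset.mem_image.1 hq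
  have : (A.filter (fun x => (QuotientAddGroup.mk x : G ⧸ H) = QuotientAddGroup.mk a)).card
      = Nat.card H := by
    have : Fintype G := Fintype.ofFinite G
    rw [natcard_sub]
    symm
    apply Finset.card_bij (fun h _ => a + h)
    · intro h hh
      have hh' : h ∈ H := by simpa using hh
      simp only [Finset.mem_filter]
      refine ⟨hA a ha h hh', ?_⟩
      rw [eq_comm, QuotientAddGroup.eq]
      simpa using hh'
    · intro x _ y _ hxy
      simpa using hxy
    · intro b hb
      simp only [Finset.mem_filter] at hb
      refine ⟨-a + b, ?_, by abel⟩
      have := QuotientAddGroup.eq.1 hb.2.symm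
      simpa using this
  exact this ▸ dvd_rfl

lemma aux_fiber {G : Type*} [AddCommGroup G] [Finite G] (φ : G →+ ZMod 5)
    (A : Finset G) (i : ZMod 5) (hA : ∀ a ∈ A, φ a = i) : A.card ≤ Nat.card φ.ker := by
  classical
  rcases A.eq_empty_or_nonempty with rfl | ⟨a0, ha0⟩
  · simp
  · have : Fintype G := Fintype.ofFinite G
    rw [natcard_sub]
    apply Finset.card_le_card_of_injOn (fun a => a - a0)
    · intro a ha
      simp [AddMonoidHom.mem_ker, hA a ha, hA a0 ha0]
    · intro x _ y _ h
      simpa using h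

lemma kneser_weak {G : Type*} [AddCommGroup G] [Finite G] (φ : G →+ ZMod 5)
    (m : ℕ) (hker : Nat.card φ.ker = 5 ^ m) (i j k : ZMod 5) (hijk : i + j + k = 0)
    (C : Finset G) (hC : ∀ c ∈ C, φ c = k) (hC0 : C.Nonempty) :
    ∀ (r : ℕ) (A B : Finset G), B.card = r → A.Nonempty → B.Nonempty → (∀ a ∈ A, φ a = i) →
    (∀ b ∈ B, φ b = j) → (∀ a ∈ A, ∀ b ∈ B, ∀ c ∈ C, a + b + c ≠ 0) →
    ∃ s h t : ℕ, 5 ^ m = 5 * (h * t) ∧ A.card + B.card ≤ (s + 1) * h ∧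
      s * h + C.card ≤ 5 ^ m := by
  classical
  intro r
  induction r using Nat.strong_induction_on with
  | _ r ih =>
  intro A B hr hA0 hB0 hA hB hABC
  by_cases hst : ∀ a ∈ A, ∀ b ∈ B, ∀ b' ∈ B, b' + (a - b) ∈ A
  · obtain ⟨b0, hb0⟩ := hB0
    set H : AddSubgroup G := AddSubgroup.closure ((fun b => b - b0) '' (B : Set G)) with hH
    have hinv : ∀ h ∈ H, ∀ a ∈ A, a + h ∈ A := by
      have key : ∀ h ∈ H, (∀ a ∈ A, a + h ∈ A) := by
        intro h hh
        induction hh using AddSubgroup.closure_induction with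
        | mem x hx =>
          obtain ⟨b, hb, rfl⟩ := hx
          intro a ha
          have := hst a ha b0 hb0 b hb
          convert this using 1; simp only []; abel
        | zero => intro a ha; simpa using ha
        | add x y _ _ hx hy =>
          intro a ha
          rw [← add_assoc]; exact hy _ (hx _ ha)
        | neg x _ hx =>
          intro a ha
          have himg : A.image (fun a => a + x) = A := by
            apply Finset.eq_of_subset_of_card_le
            · intro y hy
              obtain ⟨z, hz, rfl⟩ := Finset.mem_image.1 hy
              exact hx z hz
            · rw [Finset.card_image_of_injective]
              intro p q h; simpa using h
          rw [← himg] at ha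
          obtain ⟨z, hz, rfl⟩ := Finset.mem_image.1 ha
          simpa using hz
      exact key
    have hle : H ≤ φ.ker := by
      rw [hH, AddSubgroup.closure_le]
      rintro _ ⟨b, hb, rfl⟩
      simp [AddMonoidHom.mem_ker, hB b hb, hB b0 hb0]
    have hne : H ≠ φ.ker := by
      intro he
      obtain ⟨c, hc⟩ := hC0
      obtain ⟨a, ha⟩ := hA0
      have h1 : -c - b0 - a ∈ H := by
        rw [he, AddMonoidHom.mem_ker]
        simp only [map_sub, map_neg, hC c hc, hB b0 hb0, hA a ha]
        linear_combination -hijk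
      have h2 := hinv _ h1 a ha
      exact hABC _ h2 b0 hb0 c hc (by abel)
    obtain ⟨s, hs⟩ := aux_dvd H A (fun a ha h hh => hinv h hh a ha)
    have hdvd : Nat.card H ∣ 5 ^ m := hker ▸ AddSubgroup.card_dvd_of_le hle
    obtain ⟨l, hl, hcard⟩ := (Nat.dvd_prime_pow Nat.prime_five).1 hdvd
    have hlm : l < m := by
      rcases hl.lt_or_eq with h | h
      · exact h
      · exfalso
        apply hne
        apply AddSubgroup.eq_of_le_of_card_ge hle
        rw [hker, hcard, h]
    refine ⟨s, 5 ^ l, 5 ^ (m - l - 1), ?_, ?_, ?_⟩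
    · rw [← pow_add, ← pow_succ']; congr 1; omega
    · have hBH : B.card ≤ Nat.card H := by
        have : Fintype G := Fintype.ofFinite G
        rw [natcard_sub]
        apply Finset.card_le_card_of_injOn (fun a => a - b0)
        · intro b hb
          have : b - b0 ∈ H := AddSubgroup.subset_closure ⟨b, hb, rfl⟩
          simpa using this
        · intro x _ y _ h
          simpa using h
      rw [hs, ← hcard]
      linarith
    · have hdisj : Disjoint A (C.image (fun c => -c - b0)) := by
        rw [Finset.disjoint_left]
        intro a ha hc
        obtain ⟨c, hc', rfl⟩ := Finset.mem_image.1 hc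
        exact hABC _ ha b0 hb0 c hc' (by abel)
      have h1 := aux_fiber φ (A ∪ C.image (fun c => -c - b0)) i (by
        intro x hx
        rcases Finset.mem_union.1 hx with hx | hx
        · exact hA x hx
        · obtain ⟨c, hc, rfl⟩ := Finset.mem_image.1 hx
          simp only [map_sub, map_neg, hC c hc, hB b0 hb0]
          linear_combination -hijk)
      rw [Finset.card_union_of_disjoint hdisj, Finset.card_image_of_injective, hker, hs, hcard] at h1
      · linarith
      · intro x y h; simpa using h
  · push Not at hst
    obtain ⟨a, ha, b, hb, b', hb', hnot⟩ := hst
    set e := a - b with he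
    have hφe : φ e = i - j := by rw [he, map_sub, hA a ha, hB b hb]
    have hB' : B.filter (fun x => x + e ∈ A) ⊂ B := by
      rw [Finset.filter_ssubset]
      exact ⟨b', hb', hnot⟩
    have hcard : (A ∪ B.image (fun x => x + e)).card + (B.filter (fun x => x + e ∈ A)).card
        = A.card + B.card := by
      have h1 := Finset.card_union_add_card_inter A (B.image (fun x => x + e))
      have h2 : A ∩ B.image (fun x => x + e) = (B.filter (fun x => x + e ∈ A)).image (fun x => x + e) := by
        ext y
        simp only [Finset.mem_inter, Finset.mem_image, Finset.mem_filter]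
        constructor
        · rintro ⟨h, x, hx, rfl⟩; exact ⟨x, ⟨hx, h⟩, rfl⟩
        · rintro ⟨x, ⟨hx, h⟩, rfl⟩; exact ⟨h, x, hx, rfl⟩
      have hinj : Function.Injective (fun x => x + e) := add_left_injective e
      rw [h2, Finset.card_image_of_injective _ hinj, Finset.card_image_of_injective _ hinj] at h1
      exact h1
    rw [← hcard]
    refine ih _ (hr ▸ Finset.card_lt_card hB') _ _ rfl (hA0.mono Finset.subset_union_left)
      ⟨b, ?_⟩ ?_ ?_ ?_
    · simp [hb, he, ha]
    · intro x hx
      rcases Finset.mem_union.1 hx with hx | hx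
      · exact hA x hx
      · obtain ⟨c, hc, rfl⟩ := Finset.mem_image.1 hx
        rw [map_add, hB c hc, hφe]; ring
    · intro x hx
      exact hB x (Finset.filter_subset _ _ hx)
    · intro x hx y hy c hc
      rw [Finset.mem_filter] at hy
      rcases Finset.mem_union.1 hx with hx | hx
      · exact hABC x hx y hy.1 c hc
      · obtain ⟨z, hz, rfl⟩ := Finset.mem_image.1 hx
        have := hABC _ hy.2 z hz c hc
        intro h0; apply this; rw [← h0]; abel

/-- fiber -/
noncomputable def fib {G : Type*} [AddCommGroup G] (φ : G →+ ZMod 5) (A : Finset G) (i : ZMod 5) :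
    Finset G := by
  classical exact A.filter (fun a => φ a = i)

lemma mem_fib {G : Type*} [AddCommGroup G] (φ : G →+ ZMod 5) (A : Finset G) (i : ZMod 5) (a : G) :
    a ∈ fib φ A i ↔ a ∈ A ∧ φ a = i := by
  classical
  simp [fib]

lemma constr {G : Type*} [AddCommGroup G] [Finite G] (φ : G →+ ZMod 5)
    (m : ℕ) (hker : Nat.card φ.ker = 5 ^ m) (A : Finset G)
    (hA : ∀ a ∈ A, ∀ b ∈ A, ∀ c ∈ A, a + b + c ≠ 0)
    (i j k : ZMod 5) (hijk : i + j + k = 0)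
    (hi : 0 < (fib φ A i).card) (hj : 0 < (fib φ A j).card) (hk : 0 < (fib φ A k).card) :
    5 * ((fib φ A i).card + (fib φ A j).card + (fib φ A k).card) ≤ 6 * 5 ^ m ∧
    (fib φ A i).card + (fib φ A j).card ≤ 5 ^ m ∧
    (5 ^ m < 2 * (fib φ A k).card → 5 * ((fib φ A i).card + (fib φ A j).card) ≤ 3 * 5 ^ m) := by
  obtain ⟨s, h, t, h1, h2, h3⟩ := kneser_weak φ m hker i j k hijk (fib φ A k)
    (fun c hc => ((mem_fib _ _ _ _).1 hc).2) (Finset.card_pos.1 hk) _ (fib φ A i) (fib φ A j) rfl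
    (Finset.card_pos.1 hi) (Finset.card_pos.1 hj) (fun c hc => ((mem_fib _ _ _ _).1 hc).2)
    (fun c hc => ((mem_fib _ _ _ _).1 hc).2)
    (fun a ha b hb c hc => hA a ((mem_fib _ _ _ _).1 ha).1 b ((mem_fib _ _ _ _).1 hb).1
      c ((mem_fib _ _ _ _).1 hc).1)
  have hN : 0 < 5 ^ m := by positivity
  rw [h1] at h3 hN ⊢
  have ht : 0 < t := by
    rcases Nat.eq_zero_or_pos t with rfl | h
    · simp at hN
    · exact h
  have hle : h ≤ h * t := Nat.le_mul_of_pos_right h ht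
  have e2 : (s + 1) * h = s * h + h := by ring
  have hh : 0 < h := by
    rcases Nat.eq_zero_or_pos h with rfl | h
    · simp at hN
    · exact h
  refine ⟨by omega, ?_, ?_⟩
  · have : s < 5 * t := by
      by_contra hc
      push Not at hc
      have := Nat.mul_le_mul_right h hc
      have e : 5 * t * h = 5 * (h * t) := by ring
      omega
    have := Nat.mul_le_mul_right h (Nat.succ_le_of_lt this)
    have e : 5 * t * h = 5 * (h * t) := by ring
    simp only [Nat.succ_eq_add_one] at this
    omega
  · intro hC
    have : 2 * s < 5 * t := by
      by_contra hc
      push Not at hc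
      have := Nat.mul_le_mul_right h hc
      have e : 5 * t * h = 5 * (h * t) := by ring
      have e' : 2 * s * h = 2 * (s * h) := by ring
      omega
    have := Nat.mul_le_mul_right h (Nat.succ_le_of_lt this)
    have e : 5 * t * h = 5 * (h * t) := by ring
    have e' : (2 * s).succ * h = 2 * (s * h) + h := by simp only [Nat.succ_eq_add_one]; ring
    omega

lemma sum_fib {G : Type*} [AddCommGroup G] (φ : G →+ ZMod 5) (A : Finset G) :
    A.card = (fib φ A 0).card + (fib φ A 1).card + (fib φ A 2).card + (fib φ A 3).card
      + (fib φ A 4).card := by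
  classical
  rw [Finset.card_eq_sum_card_fiberwise (f := φ) (t := Finset.univ) (by intro x _; simp)]
  have : (Finset.univ : Finset (ZMod 5)) = {0, 1, 2, 3, 4} := by decide
  rw [this]
  repeat rw [Finset.sum_insert (by decide)]
  rw [Finset.sum_singleton]
  unfold fib
  ring

lemma case_one {G : Type*} [AddCommGroup G] [Finite G] (φ : G →+ ZMod 5)
    (m : ℕ) (hker : Nat.card φ.ker = 5 ^ m) (A : Finset G)
    (hA : ∀ a ∈ A, ∀ b ∈ A, ∀ c ∈ A, a + b + c ≠ 0) (hcard : 3 * 5 ^ m < 2 * A.card)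
    (h1 : 5 ^ m < 2 * (fib φ A 1).card) :
    ∃ i j : ZMod 5, ∀ a ∈ A, φ a = i ∨ φ a = j := by
  have hs := sum_fib φ A
  have c := constr φ m hker A hA
  have p1 : 0 < (fib φ A 1).card := by omega
  have hz : ∀ i, (fib φ A i).card = 0 ∨ 0 < (fib φ A i).card := fun i => Nat.eq_zero_or_pos _
  have h0 : 5 * (fib φ A 0).card ≤ 2 * 5 ^ m := by
    rcases hz 0 with h | h
    · omega
    · have := (c 0 0 0 (by decide) h h h).1
      omega
  have h3 : (fib φ A 3).card = 0 := by
    rcases hz 3 with h | h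
    · exact h
    · have := (c 1 1 3 (by decide) p1 p1 h).2.1
      omega
  have fin : ∀ x : ZMod 5, x = 0 ∨ x = 1 ∨ x = 2 ∨ x = 3 ∨ x = 4 := by decide
  have emp : ∀ i, (fib φ A i).card = 0 → ∀ a ∈ A, φ a ≠ i := by
    intro i hi a ha h
    have := (mem_fib φ A i a).2 ⟨ha, h⟩
    rw [Finset.card_eq_zero] at hi
    simp [hi] at this
  have e3 := emp 3 h3
  have hor : ((fib φ A 0).card = 0 ∧ (fib φ A 2).card = 0) ∨
    ((fib φ A 0).card = 0 ∧ (fib φ A 4).card = 0) ∨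
    ((fib φ A 2).card = 0 ∧ (fib φ A 4).card = 0) := by
    rcases hz 2 with h2 | h2
    · rcases hz 4 with h4 | h4
      · exact Or.inr (Or.inr ⟨h2, h4⟩)
      · rcases hz 0 with h5 | h5
        · exact Or.inl ⟨h5, h2⟩
        · have := (c 1 4 0 (by decide) p1 h4 h5).2.1
          omega
    · have e1 := (c 1 2 2 (by decide) p1 h2 h2).2.1
      rcases hz 4 with h4 | h4
      · rcases hz 0 with h5 | h5
        · exact Or.inr (Or.inl ⟨h5, h4⟩)
        · omega
      · have e2 := (c 4 4 2 (by decide) h4 h4 h2).2.1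
        rcases hz 0 with h5 | h5
        · omega
        · have e3 := (c 0 4 1 (by decide) h5 h4 p1).1
          have e4 := (c 2 2 1 (by decide) h2 h2 p1).2.2 h1
          omega
  rcases hor with ⟨ha, hb⟩ | ⟨ha, hb⟩ | ⟨ha, hb⟩
  · exact ⟨1, 4, fun a h => by have := fin (φ a); have := emp _ ha a h; have := emp _ hb a h; have := e3 a h; tauto⟩
  · exact ⟨1, 2, fun a h => by have := fin (φ a); have := emp _ ha a h; have := emp _ hb a h; have := e3 a h; tauto⟩
  · exact ⟨1, 0, fun a h => by have := fin (φ a); have := emp _ ha a h; have := emp _ hb a h; have := e3 a h; tauto⟩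

lemma case_big {G : Type*} [AddCommGroup G] [Finite G] (φ : G →+ ZMod 5)
    (m : ℕ) (hker : Nat.card φ.ker = 5 ^ m) (A : Finset G)
    (hA : ∀ a ∈ A, ∀ b ∈ A, ∀ c ∈ A, a + b + c ≠ 0) (hcard : 3 * 5 ^ m < 2 * A.card)
    (i : ZMod 5) (h1 : 5 ^ m < 2 * (fib φ A i).card) :
    ∃ i j : ZMod 5, ∀ a ∈ A, φ a = i ∨ φ a = j := by
  have hp5 : Fact (Nat.Prime 5) := ⟨Nat.prime_five⟩
  have hi : i ≠ 0 := by
    rintro rfl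
    have := constr φ m hker A hA 0 0 0 (by simp)
    omega
  set ψ : G →+ ZMod 5 := (AddMonoidHom.mulLeft i⁻¹).comp φ with hψ
  have hψa : ∀ a, ψ a = i⁻¹ * φ a := fun a => rfl
  have hk : ψ.ker = φ.ker := by
    ext x
    simp [AddMonoidHom.mem_ker, hψa, hi]
  have hf : fib ψ A 1 = fib φ A i := by
    ext x
    rw [mem_fib, mem_fib, hψa]
    refine and_congr_right fun _ => ?_
    rw [inv_mul_eq_one₀ hi, eq_comm]
  obtain ⟨p, q, h⟩ := case_one ψ m (hk ▸ hker) A hA hcard (hf ▸ h1)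
  refine ⟨i * p, i * q, fun a ha => ?_⟩
  have := h a ha
  rw [hψa] at this
  rcases this with h | h
  · left; rw [← h]; field_simp
  · right; rw [← h]; field_simp

lemma small_constr {G : Type*} [AddCommGroup G] [Finite G] (φ : G →+ ZMod 5)
    (m : ℕ) (hker : Nat.card φ.ker = 5 ^ m) (A : Finset G)
    (hA : ∀ a ∈ A, ∀ b ∈ A, ∀ c ∈ A, a + b + c ≠ 0)
    (hsm : ∀ i, 2 * (fib φ A i).card ≤ 5 ^ m) :
    5 * (fib φ A 0).card ≤ 2 * 5 ^ m ∧
    5 * ((fib φ A 1).card + 2 * (fib φ A 2).card) ≤ 6 * 5 ^ m ∧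
    5 * ((fib φ A 4).card + 2 * (fib φ A 3).card) ≤ 6 * 5 ^ m := by
  have c := constr φ m hker A hA
  have c000 := c 0 0 0 (by decide)
  have c221 := c 2 2 1 (by decide)
  have c334 := c 3 3 4 (by decide)
  have := hsm 0
  have := hsm 1
  have := hsm 2
  have := hsm 3
  have := hsm 4
  refine ⟨by omega, by omega, by omega⟩

lemma trig_bounds :
    Real.cos (2 * Real.pi / 5) ≥ 3 / 10 ∧ Real.cos (2 * Real.pi * 2 / 5) ≥ - (81 / 100) ∧
    Real.cos (2 * Real.pi / 5 - Real.pi / 3) ≤ 1 ∧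
    Real.cos (2 * Real.pi * 2 / 5 - Real.pi / 3) ≤ 11 / 100 ∧
    Real.cos (2 * Real.pi * 3 / 5 - Real.pi / 3) ≤ - (1 / 2) ∧
    Real.cos (2 * Real.pi * 4 / 5 - Real.pi / 3) ≤ - (1 / 2) := by
  have hpi := Real.pi_pos
  have hpi' := Real.pi_lt_d2
  have h5 : (2.236 : ℝ) < √5 := by
    apply Real.lt_sqrt_of_sq_lt; norm_num
  have h5' : √5 < (2.237 : ℝ) := by
    rw [Real.sqrt_lt' (by norm_num)]; norm_num
  have hsq : √5 ^ 2 = 5 := Real.sq_sqrt (by norm_num)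
  have hc := Real.cos_pi_div_five
  refine ⟨?_, ?_, Real.cos_le_one _, ?_, ?_, ?_⟩
  · have : 2 * Real.pi / 5 = 2 * (Real.pi / 5) := by ring
    rw [this, Real.cos_two_mul, hc]
    nlinarith
  · have : 2 * Real.pi * 2 / 5 = Real.pi - Real.pi / 5 := by ring
    rw [this, Real.cos_pi_sub, hc]
    linarith
  · have : 2 * Real.pi * 2 / 5 - Real.pi / 3 = Real.pi / 2 - Real.pi / 30 := by ring
    rw [this, Real.cos_pi_div_two_sub]
    have := Real.sin_le (x := Real.pi / 30) (by positivity)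
    norm_num at hpi'
    linarith
  · have : 2 * Real.pi * 3 / 5 - Real.pi / 3 = Real.pi - 2 * Real.pi / 15 := by ring
    rw [this, Real.cos_pi_sub]
    have : Real.cos (Real.pi / 3) ≤ Real.cos (2 * Real.pi / 15) := by
      apply Real.cos_le_cos_of_nonneg_of_le_pi <;> linarith
    rw [Real.cos_pi_div_three] at this
    linarith
  · have : 2 * Real.pi * 4 / 5 - Real.pi / 3 = 4 * Real.pi / 15 + Real.pi := by ring
    rw [this, Real.cos_add_pi]
    have : Real.cos (Real.pi / 3) ≤ Real.cos (4 * Real.pi / 15) := by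
      apply Real.cos_le_cos_of_nonneg_of_le_pi <;> linarith
    rw [Real.cos_pi_div_three] at this
    linarith

lemma lp_bounds (N x0 x1 x2 x3 x4 : ℝ) (h0 : 0 ≤ x0) (h1 : 0 ≤ x1) (h2 : 0 ≤ x2) (h3 : 0 ≤ x3)
    (h4 : 0 ≤ x4) (u1 : 2 * x1 ≤ N) (u2 : 2 * x2 ≤ N) (u3 : 2 * x3 ≤ N)
    (k0 : 5 * x0 ≤ 2 * N) (k12 : 5 * (x1 + 2 * x2) ≤ 6 * N) (k43 : 5 * (x4 + 2 * x3) ≤ 6 * N)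
    (hs : 3 * N ≤ 2 * (x0 + x1 + x2 + x3 + x4))
    (R I : ℝ)
    (hR : R = x0 + x1 * Real.cos (2 * Real.pi / 5) + x2 * Real.cos (2 * Real.pi * 2 / 5)
      + x3 * Real.cos (2 * Real.pi * 3 / 5) + x4 * Real.cos (2 * Real.pi * 4 / 5))
    (hI : I = x1 * Real.sin (2 * Real.pi / 5) + x2 * Real.sin (2 * Real.pi * 2 / 5)
      + x3 * Real.sin (2 * Real.pi * 3 / 5) + x4 * Real.sin (2 * Real.pi * 4 / 5)) :
    -R ≤ 64 / 100 * N ∧ R / 2 + √3 / 2 * I ≤ 64 / 100 * N := by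
  obtain ⟨t1, t2, s1, s2, s3, s4⟩ := trig_bounds
  have e3 : Real.cos (2 * Real.pi * 3 / 5) = Real.cos (2 * Real.pi * 2 / 5) := by
    rw [← Real.cos_two_pi_sub]; congr 1; ring
  have e4 : Real.cos (2 * Real.pi * 4 / 5) = Real.cos (2 * Real.pi / 5) := by
    rw [← Real.cos_two_pi_sub]; congr 1; ring
  constructor
  · rw [hR, e3, e4]
    have a1 := mul_le_mul_of_nonneg_left t1 h1
    have a4 := mul_le_mul_of_nonneg_left t1 h4
    have a2 := mul_le_mul_of_nonneg_left t2 h2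
    have a3 := mul_le_mul_of_nonneg_left t2 h3
    linarith
  · have : R / 2 + √3 / 2 * I = x0 / 2 + x1 * Real.cos (2 * Real.pi / 5 - Real.pi / 3)
      + x2 * Real.cos (2 * Real.pi * 2 / 5 - Real.pi / 3)
      + x3 * Real.cos (2 * Real.pi * 3 / 5 - Real.pi / 3)
      + x4 * Real.cos (2 * Real.pi * 4 / 5 - Real.pi / 3) := by
      simp only [Real.cos_sub, Real.cos_pi_div_three, Real.sin_pi_div_three, hR, hI]
      ring
    rw [this]
    have a1 := mul_le_mul_of_nonneg_left s1 h1
    have a4 := mul_le_mul_of_nonneg_left s4 h4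
    have a2 := mul_le_mul_of_nonneg_left s2 h2
    have a3 := mul_le_mul_of_nonneg_left s3 h3
    linarith

lemma lp_bounds' (N x0 x1 x2 x3 x4 : ℝ) (h0 : 0 ≤ x0) (h1 : 0 ≤ x1) (h2 : 0 ≤ x2) (h3 : 0 ≤ x3)
    (h4 : 0 ≤ x4) (u1 : 2 * x1 ≤ N) (u2 : 2 * x2 ≤ N) (u3 : 2 * x3 ≤ N) (u4 : 2 * x4 ≤ N)
    (k0 : 5 * x0 ≤ 2 * N) (k12 : 5 * (x1 + 2 * x2) ≤ 6 * N) (k43 : 5 * (x4 + 2 * x3) ≤ 6 * N)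
    (hs : 3 * N ≤ 2 * (x0 + x1 + x2 + x3 + x4))
    (R I : ℝ)
    (hR : R = x0 + x1 * Real.cos (2 * Real.pi / 5) + x2 * Real.cos (2 * Real.pi * 2 / 5)
      + x3 * Real.cos (2 * Real.pi * 3 / 5) + x4 * Real.cos (2 * Real.pi * 4 / 5))
    (hI : I = x1 * Real.sin (2 * Real.pi / 5) + x2 * Real.sin (2 * Real.pi * 2 / 5)
      + x3 * Real.sin (2 * Real.pi * 3 / 5) + x4 * Real.sin (2 * Real.pi * 4 / 5)) :
    -(R ^ 3 - 3 * R * I ^ 2) ≤ 64 / 100 * N * (R ^ 2 + I ^ 2) := by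
  obtain ⟨b1, b2⟩ := lp_bounds N x0 x1 x2 x3 x4 h0 h1 h2 h3 h4 u1 u2 u3 k0 k12 k43 hs R I hR hI
  have e3 : Real.cos (2 * Real.pi * 3 / 5) = Real.cos (2 * Real.pi * 2 / 5) := by
    rw [← Real.cos_two_pi_sub]; congr 1; ring
  have e4 : Real.cos (2 * Real.pi * 4 / 5) = Real.cos (2 * Real.pi / 5) := by
    rw [← Real.cos_two_pi_sub]; congr 1; ring
  have f3 : Real.sin (2 * Real.pi * 3 / 5) = - Real.sin (2 * Real.pi * 2 / 5) := by
    rw [← Real.sin_two_pi_sub]; congr 1; ring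
  have f4 : Real.sin (2 * Real.pi * 4 / 5) = - Real.sin (2 * Real.pi / 5) := by
    rw [← Real.sin_two_pi_sub]; congr 1; ring
  obtain ⟨-, b3⟩ := lp_bounds N x0 x4 x3 x2 x1 h0 h4 h3 h2 h1 u4 u3 u2 k0 k43 k12 (by linarith) R (-I)
    (by rw [hR, e3, e4]; ring) (by rw [hI, f3, f4]; ring)
  have hN : 0 ≤ N := by linarith
  set c := 64 / 100 * N with hc
  have hc0 : 0 ≤ c := by positivity
  have h3s : √3 ^ 2 = 3 := Real.sq_sqrt (by norm_num)
  set q := √3 * I with hq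
  have hqI : I ^ 2 = q ^ 2 / 3 := by rw [hq, mul_pow, h3s]; ring
  have b2' : R + q ≤ 2 * c := by rw [hq]; linarith
  have b3' : R - q ≤ 2 * c := by rw [hq]; linarith
  rw [hqI]
  -- goal: -R (R^2 - q^2) ≤ c (R^2 + q^2/3)
  have key : -(R * ((R + q) * (R - q))) ≤ c * (R ^ 2 + q ^ 2 / 3) := by
    rcases le_total 0 (-(R * ((R + q) * (R - q)))) with h | h
    · have gen : ∀ y z w : ℝ, 0 ≤ y → y ≤ c → 0 ≤ w → 4 * z ≤ w → y * (4 * z) ≤ c * w := by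
        intro y z w hy hyc hw hzw
        calc y * (4 * z) ≤ y * w := mul_le_mul_of_nonneg_left hzw hy
          _ ≤ c * w := mul_le_mul_of_nonneg_right hyc hw
      have hw : 0 ≤ R ^ 2 + q ^ 2 / 3 := by positivity
      rcases le_total R 0 with hR0 | hR0
      · have := gen (-R) ((R + q) * (R - q) / 4) _ (by linarith) b1 hw (by nlinarith [sq_nonneg q])
        linarith
      · rcases le_total 0 q with hq0 | hq0
        · have := gen ((R + q) / 2) (-R * (R - q) / 2) (R ^ 2 + q ^ 2 / 3) (by linarith) (by linarith) hw
            (by nlinarith [sq_nonneg (3 * R - q)])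
          linarith
        · have := gen ((R - q) / 2) (-R * (R + q) / 2) (R ^ 2 + q ^ 2 / 3) (by linarith) (by linarith) hw
            (by nlinarith [sq_nonneg (3 * R + q)])
          linarith
    · exact h.trans (by positivity)
  linarith

/-- dot product hom -/
def dotHom (n : ℕ) (v : Fin n → ZMod 5) : (Fin n → ZMod 5) →+ ZMod 5 where
  toFun x := v ⬝ᵥ x
  map_zero' := by simp
  map_add' := by simp [dotProduct_add]

lemma dotHom_ker (n : ℕ) (hn : 1 ≤ n) (v : Fin n → ZMod 5) (hv : v ≠ 0) :
    (dotHom n v).ker.index = 5 ∧ Nat.card (dotHom n v).ker = 5 ^ (n - 1) := by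
  have hp5 : Fact (Nat.Prime 5) := ⟨Nat.prime_five⟩
  obtain ⟨i, hi⟩ := Function.ne_iff.1 hv
  have hsurj : Function.Surjective (dotHom n v) := by
    intro y
    refine ⟨Pi.single i ((v i)⁻¹ * y), ?_⟩
    change v ⬝ᵥ _ = y
    rw [dotProduct_single]
    have : v i ≠ 0 := hi
    field_simp
  have hidx : (dotHom n v).ker.index = 5 := by
    rw [AddSubgroup.index_ker, AddMonoidHom.range_eq_top.2 hsurj]
    simp
  refine ⟨hidx, ?_⟩
  have h := (dotHom n v).ker.card_mul_index
  rw [hidx] at h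
  have h2 : Nat.card (Fin n → ZMod 5) = 5 ^ (n - 1) * 5 := by
    rw [← pow_succ, Nat.sub_add_cancel hn]
    simp
  rw [h2] at h
  exact Nat.eq_of_mul_eq_mul_right (by norm_num) h

/-- the character -/
noncomputable def ee (n : ℕ) (v x : Fin n → ZMod 5) : ℂ := ZMod.stdAddChar (v ⬝ᵥ x)

lemma orth (n : ℕ) (x : Fin n → ZMod 5) :
    ∑ v, ee n v x = if x = 0 then (5 : ℂ) ^ n else 0 := by
  classical
  have hp5 : Fact (Nat.Prime 5) := ⟨Nat.prime_five⟩
  split_ifs with h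
  · subst h
    simp [ee]
  · let χ : AddChar (Fin n → ZMod 5) ℂ :=
      { toFun := fun v => ee n v x
        map_zero_eq_one' := by simp [ee]
        map_add_eq_mul' := by intro a b; simp [ee, add_dotProduct, AddChar.map_add_eq_mul] }
    have hχ : χ ≠ 0 := by
      obtain ⟨i, hi⟩ := Function.ne_iff.1 h
      intro h0
      have h1 : χ (Pi.single i (x i)⁻¹) = 1 := by rw [h0]; simp
      have hi' : x i ≠ 0 := hi
      have h2 : χ (Pi.single i (x i)⁻¹) = ZMod.stdAddChar (1 : ZMod 5) := by
        change ZMod.stdAddChar (_ ⬝ᵥ _) = _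
        rw [single_dotProduct, inv_mul_cancel₀ hi']
      rw [h2] at h1
      have h3 := ZMod.injective_stdAddChar (N := 5) (h1.trans (AddChar.map_zero_eq_one _).symm)
      exact one_ne_zero h3
    exact AddChar.sum_eq_zero_iff_ne_zero.2 hχ

/-- character sum -/
noncomputable def SS (n : ℕ) (A : Finset (Fin n → ZMod 5)) (v : Fin n → ZMod 5) : ℂ :=
  ∑ a ∈ A, ee n v a

lemma ee_add (n : ℕ) (v x y : Fin n → ZMod 5) : ee n v (x + y) = ee n v x * ee n v y := by
  simp [ee, dotProduct_add, AddChar.map_add_eq_mul]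

lemma sum_cube (n : ℕ) (A : Finset (Fin n → ZMod 5))
    (hA : ∀ a ∈ A, ∀ b ∈ A, ∀ c ∈ A, a + b + c ≠ 0) : ∑ v, SS n A v ^ 3 = 0 := by
  have : ∀ v, SS n A v ^ 3 = ∑ a ∈ A, ∑ b ∈ A, ∑ c ∈ A, ee n v (a + b + c) := by
    intro v
    simp only [ee_add, ← Finset.mul_sum, ← Finset.sum_mul]
    simp only [SS]
    ring
  simp only [this]
  rw [Finset.sum_comm]
  refine Finset.sum_eq_zero fun a ha => ?_
  rw [Finset.sum_comm]
  refine Finset.sum_eq_zero fun b hb => ?_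
  rw [Finset.sum_comm]
  refine Finset.sum_eq_zero fun c hc => ?_
  rw [orth, if_neg (hA a ha b hb c hc)]

lemma sum_sq (n : ℕ) (A : Finset (Fin n → ZMod 5)) :
    ∑ v, Complex.normSq (SS n A v) = 5 ^ n * A.card := by
  have hconj : ∀ v a, (starRingEnd ℂ) (ee n v a) = ee n v (-a) := by
    intro v a
    simp only [ee, dotProduct_neg]
    rw [AddChar.map_neg_eq_conj]
  have : ∀ v, ((Complex.normSq (SS n A v) : ℝ) : ℂ) = ∑ a ∈ A, ∑ b ∈ A, ee n v (a + -b) := by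
    intro v
    rw [Complex.normSq_eq_conj_mul_self]
    simp only [ee_add, ← Finset.mul_sum, ← Finset.sum_mul]
    simp only [SS, map_sum, hconj]
    ring
  have h : ((∑ v, Complex.normSq (SS n A v) : ℝ) : ℂ) = ((5 ^ n * A.card : ℝ) : ℂ) := by
    push_cast
    simp only [this]
    rw [Finset.sum_comm]
    have : ∀ a ∈ A, ∑ v, ∑ b ∈ A, ee n v (a + -b) = 5 ^ n := by
      intro a ha
      rw [Finset.sum_comm]
      simp only [orth, ← sub_eq_add_neg, sub_eq_zero]
      simp [ha]
    rw [Finset.sum_congr rfl this]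
    simp [mul_comm]
  exact_mod_cast h

lemma SS_zero (n : ℕ) (A : Finset (Fin n → ZMod 5)) : SS n A 0 = A.card := by
  simp [SS, ee]

lemma SS_fib (n : ℕ) (A : Finset (Fin n → ZMod 5)) (v : Fin n → ZMod 5) :
    SS n A v = ∑ j : ZMod 5, ((fib (dotHom n v) A j).card : ℂ) * ZMod.stdAddChar j := by
  classical
  rw [SS, ← Finset.sum_fiberwise_of_maps_to (g := dotHom n v) (t := Finset.univ) (by simp)]
  refine Finset.sum_congr rfl fun j _ => ?_
  unfold fib
  rw [← nsmul_eq_mul, ← Finset.sum_const]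
  refine Finset.sum_congr rfl fun a ha => ?_
  rw [Finset.mem_filter] at ha
  rw [← ha.2]
  rfl

lemma std_val (j : ℕ) : (ZMod.stdAddChar ((j : ℕ) : ZMod 5) : ℂ).re = Real.cos (2 * Real.pi * j / 5) ∧
   (ZMod.stdAddChar ((j : ℕ) : ZMod 5) : ℂ).im = Real.sin (2 * Real.pi * j / 5) := by
  have h : (ZMod.stdAddChar ((j : ℕ) : ZMod 5) : ℂ)
      = Complex.exp ((2 * Real.pi * j / 5 : ℝ) * Complex.I) := by
    have := ZMod.stdAddChar_coe (N := 5) (j : ℤ)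
    push_cast at this ⊢
    rw [this]
    congr 1
    ring
  rw [h, Complex.exp_ofReal_mul_I_re, Complex.exp_ofReal_mul_I_im]
  exact ⟨rfl, rfl⟩

lemma univ5 (f : ZMod 5 → ℝ) : ∑ j, f j = f (0 : ℕ) + f (1 : ℕ) + f (2 : ℕ) + f (3 : ℕ) + f (4 : ℕ) := by
  have : (Finset.univ : Finset (ZMod 5)) = {0, 1, 2, 3, 4} := by decide
  rw [this]
  repeat rw [Finset.sum_insert (by decide)]
  rw [Finset.sum_singleton]
  push_cast
  ring

lemma main_free (n : ℕ) (hn : 1 ≤ n) (A : Finset (Fin n → ZMod 5))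
    (hA : ∀ a ∈ A, ∀ b ∈ A, ∀ c ∈ A, a + b + c ≠ 0) (hcard : 3 * 5 ^ (n - 1) < 2 * A.card) :
    ∃ v : Fin n → ZMod 5, v ≠ 0 ∧ ∃ i j : ZMod 5, ∀ a ∈ A, dotHom n v a = i ∨ dotHom n v a = j := by
  by_contra hcon
  push Not at hcon
  have hsm : ∀ v : Fin n → ZMod 5, v ≠ 0 → ∀ i, 2 * (fib (dotHom n v) A i).card ≤ 5 ^ (n - 1) := by
    intro v hv i
    by_contra h
    push Not at h
    obtain ⟨p, q, hpq⟩ := case_big (dotHom n v) (n - 1) (dotHom_ker n hn v hv).2 A hA hcard i h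
    obtain ⟨a, ha, h1, h2⟩ := hcon v hv p q
    rcases hpq a ha with h | h
    · exact h1 h
    · exact h2 h
  set N : ℝ := 5 ^ (n - 1) with hN
  have hN0 : 0 < N := by positivity
  have hcR : 3 * N < 2 * (A.card : ℝ) := by rw [hN]; exact_mod_cast hcard
  have hv : ∀ v : Fin n → ZMod 5, v ≠ 0 →
      -(SS n A v ^ 3).re ≤ 64 / 100 * N * Complex.normSq (SS n A v) := by
    intro v hv
    obtain ⟨k1, k2, k3⟩ := small_constr (dotHom n v) (n - 1) (dotHom_ker n hn v hv).2 A hA (hsm v hv)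
    have hs := sum_fib (dotHom n v) A
    have u := hsm v hv
    have := lp_bounds' N (fib (dotHom n v) A 0).card (fib (dotHom n v) A 1).card
      (fib (dotHom n v) A 2).card (fib (dotHom n v) A 3).card (fib (dotHom n v) A 4).card
      (by positivity) (by positivity) (by positivity) (by positivity) (by positivity)
      (by rw [hN]; exact_mod_cast u 1) (by rw [hN]; exact_mod_cast u 2)
      (by rw [hN]; exact_mod_cast u 3) (by rw [hN]; exact_mod_cast u 4)
      (by rw [hN]; exact_mod_cast k1) (by rw [hN]; exact_mod_cast k2)
      (by rw [hN]; exact_mod_cast k3)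
      (by rw [hs] at hcR; push_cast at hcR; linarith)
      (SS n A v).re (SS n A v).im 
      (by
        rw [SS_fib, Complex.re_sum, univ5]
        simp only [← Complex.ofReal_natCast, Complex.re_ofReal_mul, (std_val _).1]
        simp)
      (by
        rw [SS_fib, Complex.im_sum, univ5]
        simp only [← Complex.ofReal_natCast, Complex.im_ofReal_mul, (std_val _).2]
        simp)
    have e1 : (SS n A v ^ 3).re = (SS n A v).re ^ 3 - 3 * (SS n A v).re * (SS n A v).im ^ 2 := by
      simp only [pow_succ, pow_zero, one_mul, Complex.mul_re, Complex.mul_im]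
      ring
    rw [e1, Complex.normSq_apply, ← sq, ← sq]
    exact this
  have hc := congrArg Complex.re (sum_cube n A hA)
  have hq := sum_sq n A
  rw [Complex.re_sum, ← Finset.add_sum_erase _ _ (Finset.mem_univ 0), SS_zero] at hc
  rw [← Finset.add_sum_erase _ _ (Finset.mem_univ 0), SS_zero] at hq
  have hle := Finset.sum_le_sum (s := Finset.univ.erase (0 : Fin n → ZMod 5))
    (fun v h => hv v (Finset.ne_of_mem_erase h))
  rw [← Finset.mul_sum, Finset.sum_neg_distrib] at hle
  have hr : ((A.card : ℂ) ^ 3).re = (A.card : ℝ) ^ 3 := by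
    rw [← Complex.ofReal_natCast, ← Complex.ofReal_pow, Complex.ofReal_re]
  rw [hr] at hc
  rw [Complex.normSq_natCast] at hq
  have h5 : (5 : ℝ) ^ n = 5 * N := by
    rw [hN, ← pow_succ', Nat.sub_add_cancel hn]
  rw [h5] at hq
  simp only [Complex.zero_re] at hc
  set a : ℝ := (A.card : ℝ) with ha
  have ha0 : 0 < a := by linarith
  have hf : a ^ 3 ≤ 64 / 100 * N * (5 * N * a - a * a) := by
    rw [← hq]; linarith
  have hf2 : a ^ 2 ≤ 64 / 100 * N * (5 * N - a) := by
    have : a * a ^ 2 ≤ a * (64 / 100 * N * (5 * N - a)) := by linarith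
    exact le_of_mul_le_mul_left this ha0
  nlinarith

/-- If `A ⊆ (ℤ/5ℤ)ⁿ` satisfies `3A ≠ G` and `|A| > 3·5^(n-1)/2`, then `A` is contained
in a union of two cosets of a subgroup of index 5. -/
theorem stmt0 (n : ℕ) (hn : 1 ≤ n) (A : Set (Fin n → ZMod 5))
    (h3A : itSum 3 A ≠ Set.univ)
    (hA : (A.ncard : ℝ) > 3 * 5 ^ (n - 1) / 2) :
    ∃ (F : AddSubgroup (Fin n → ZMod 5)) (c₁ c₂ : Fin n → ZMod 5),
      F.index = 5 ∧
      A ⊆ (c₁ +ᵥ (F : Set (Fin n → ZMod 5))) ∪ (c₂ +ᵥ (F : Set (Fin n → ZMod 5))) := by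
  classical
  obtain ⟨g, hg⟩ := (Set.ne_univ_iff_exists_notMem _).1 h3A
  have hfree : ∀ a ∈ A, ∀ b ∈ A, ∀ c ∈ A, a + b + c ≠ g := by
    intro a ha b hb c hc h
    apply hg
    simp only [itSum]
    exact Set.mem_add.2 ⟨a + b, Set.mem_add.2 ⟨a, Set.mem_add.2 ⟨0, rfl, a, ha, by simp⟩, b, hb, rfl⟩,
      c, hc, h⟩
  have h6 : ∀ x : ZMod 5, 2 * x + 2 * x + 2 * x = x := by decide
  set t : Fin n → ZMod 5 := fun i => 2 * g i with ht
  have htt : t + t + t = g := by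
    funext i
    exact h6 (g i)
  have hinj : Function.Injective (fun a : Fin n → ZMod 5 => a - t) := sub_left_injective
  set B : Finset (Fin n → ZMod 5) := A.toFinset.image (fun a => a - t) with hB
  have hBc : B.card = A.ncard := by
    rw [hB, Finset.card_image_of_injective _ hinj, Set.ncard_eq_toFinset_card']
  obtain ⟨v, hv, i, j, hij⟩ := main_free n hn B (by
    intro a ha b hb c hc h
    simp only [hB, Finset.mem_image, Set.mem_toFinset] at ha hb hc
    obtain ⟨a, ha, rfl⟩ := ha
    obtain ⟨b, hb, rfl⟩ := hb
    obtain ⟨c, hc, rfl⟩ := hc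
    apply hfree a ha b hb c hc
    rw [← htt, ← sub_eq_zero, ← h]
    abel) (by
    rw [hBc]
    have : (3 * 5 ^ (n - 1) : ℝ) < 2 * A.ncard := by linarith
    exact_mod_cast this)
  have pick : ∀ i : ZMod 5, ∃ c : Fin n → ZMod 5, ∀ a ∈ A, dotHom n v (a - t) = i →
      a ∈ c +ᵥ ((dotHom n v).ker : Set (Fin n → ZMod 5)) := by
    intro i
    by_cases h : ∃ c ∈ A, dotHom n v (c - t) = i
    · obtain ⟨c, _, hc⟩ := h
      refine ⟨c, fun a _ ha => ?_⟩
      rw [Set.mem_vadd_set_iff_neg_vadd_mem]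
      change -c + a ∈ (dotHom n v).ker
      rw [AddMonoidHom.mem_ker]
      have : -c + a = (a - t) - (c - t) := by abel
      rw [this, map_sub, ha, hc, sub_self]
    · push Not at h
      exact ⟨0, fun a ha h' => absurd h' (h a ha)⟩
  obtain ⟨c₁, h1⟩ := pick i
  obtain ⟨c₂, h2⟩ := pick j
  refine ⟨(dotHom n v).ker, c₁, c₂, (dotHom_ker n hn v hv).1, fun a ha => ?_⟩
  rcases hij (a - t) (by simp [hB, ha]) with h | h
  · exact Or.inl (h1 a ha h)
  · exact Or.inr (h2 a ha h)
end

section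
/- For the elementary abelian group G = (ℤ/5ℤ)^n, N₃(G) = 2 if n = 1, and N₃(G) = (3·5^(n-1) − 1)/2 if n ≥ 2. -/
open Pointwise

/-- `Nk G k` is the largest size of an aperiodic subset `A ⊆ G` with `kA ≠ G` which is
maximal with this property; `0` if no such subset exists. -/
noncomputable def Nk (G : Type*) [AddCommGroup G] (k : ℕ) : ℕ :=
  sSup {m : ℕ | ∃ A : Set G,
    {g : G | g +ᵥ A = A} = {0} ∧
    itSum k A ≠ Set.univ ∧
    (∀ g ∉ A, itSum k (A ∪ {g}) = Set.univ) ∧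
    m = A.ncard}


/-- linear constraints on slice densities -/
def Good (a b c d e : ℝ) : Prop :=
  0 ≤ a ∧ 0 ≤ b ∧ 0 ≤ c ∧ 0 ≤ d ∧ 0 ≤ e ∧ a ≤ 2/5 ∧ b ≤ 1/2 ∧ c ≤ 1/2 ∧ d ≤ 1/2 ∧ e ≤ 1/2 ∧
  (b ≤ 2/5 ∨ d ≤ 1/5) ∧ (c ≤ 2/5 ∨ b ≤ 1/5) ∧ (e ≤ 2/5 ∨ c ≤ 1/5) ∧ (d ≤ 2/5 ∨ e ≤ 1/5) ∧
  3/2 ≤ a + b + c + d + e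

theorem Good.conj {a b c d e : ℝ} (h : Good a b c d e) : Good a e d c b := by
  unfold Good at *
  obtain ⟨h1,h2,h3,h4,h5,h6,h7,h8,h9,h10,h11,h12,h13,h14,h15⟩ := h
  exact ⟨h1,h5,h4,h3,h2,h6,h10,h9,h8,h7,h13,h14,h11,h12, by linarith⟩

theorem Good.dil {a b c d e : ℝ} (h : Good a b c d e) : Good a c e b d := by
  unfold Good at *
  obtain ⟨h1,h2,h3,h4,h5,h6,h7,h8,h9,h10,h11,h12,h13,h14,h15⟩ := h
  exact ⟨h1,h3,h5,h2,h4,h6,h8,h10,h7,h9,h12,h13,h14,h11, by linarith⟩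

theorem Good.lin {a b c d e t : ℝ} (h : Good a b c d e) (ht1 : 309/500 ≤ t) (ht2 : t ≤ 3091/5000) :
    -(a + t*(b+e)/2 - (1+t)*(c+d)/2) ≤ 16/25 ∧
    (a + t*(b+e)/2 - (1+t)*(c+d)/2) + 8/5 * ((b-e) + t*(c-d)) ≤ 6/5 := by
  obtain ⟨h1,h2,h3,h4,h5,h6,h7,h8,h9,h10,h11,h12,h13,h14,h15⟩ := h
  have b1 := mul_le_mul_of_nonneg_right ht1 h2
  have b2 := mul_le_mul_of_nonneg_right ht2 h2
  have c1 := mul_le_mul_of_nonneg_right ht1 h3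
  have c2 := mul_le_mul_of_nonneg_right ht2 h3
  have d1 := mul_le_mul_of_nonneg_right ht1 h4
  have d2 := mul_le_mul_of_nonneg_right ht2 h4
  have e1 := mul_le_mul_of_nonneg_right ht1 h5
  have e2 := mul_le_mul_of_nonneg_right ht2 h5
  constructor
  · rcases h12 with h12 | h12 <;> rcases h14 with h14 | h14 <;> linarith
  · rcases h11 with h11 | h11 <;> rcases h12 with h12 | h12 <;> rcases h13 with h13 | h13 <;>
      rcases h14 with h14 | h14 <;> linarith

theorem quad {x Y t : ℝ} (ht1 : 309/500 ≤ t) (ht2 : t ≤ 3091/5000) (h1 : -x ≤ 16/25)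
    (h2 : x + 8/5*Y ≤ 6/5) (h3 : x - 8/5*Y ≤ 6/5) :
    0 ≤ x^3 - 3*x*((3+t)/4*Y^2) + 16/25*(x^2 + (3+t)/4*Y^2) := by
  have hY : Y^2 ≤ (5/8)^2*(6/5-x)^2 := by
    nlinarith [mul_nonneg (sub_nonneg.2 h2) (sub_nonneg.2 h3)]
  set y2 := (3+t)/4*Y^2 with hy2
  have hy0 : 0 ≤ y2 := by positivity
  have hy1 : y2 ≤ 9046/10000*((5/8)^2*(6/5-x)^2) := by
    calc y2 ≤ 9046/10000 * Y^2 := by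
          rw [hy2]; exact mul_le_mul_of_nonneg_right (by linarith) (sq_nonneg _)
      _ ≤ _ := by linarith
  rcases le_total x 0 with hx | hx
  · nlinarith [mul_nonneg (sq_nonneg x) (by linarith : 0 ≤ x + 16/25), mul_nonneg (neg_nonneg.2 hx) hy0]
  · rcases le_total (3*x) (16/25) with h | h
    · nlinarith [mul_nonneg (sub_nonneg.2 h) hy0, pow_nonneg hx 3, sq_nonneg x]
    · have := mul_le_mul_of_nonneg_left hy1 (sub_nonneg.2 h)
      have hx2 : x ≤ 6/5 := by linarith
      have key : (3*x-16/25)*(9046/10000*((5/8)^2*(6/5-x)^2)) ≤ x^3 + 16/25*x^2 := by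
        nlinarith [mul_nonneg hx (sq_nonneg (x - 1/3)), mul_nonneg hx (sq_nonneg (x - 3/10)), sq_nonneg (x-3/10), sq_nonneg (x-1/3), pow_nonneg hx 3]
      nlinarith

theorem identV (a b c d e t : ℝ) (ht : t^2 = 1 - t) :
    (a^2+b^2+c^2+d^2+e^2) - (a+b+c+d+e)^2/5 =
      2/5 * (((a + t*(b+e)/2 - (1+t)*(c+d)/2)^2 + ((3+t)/4*((b-e) + t*(c-d))^2)) + ((a + t*(c+d)/2 - (1+t)*(e+b)/2)^2 + ((3+t)/4*((c-d) + t*(e-b))^2))) := by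
  grind

theorem identT (a b c d e t : ℝ) (ht : t^2 = 1 - t) :
    (a^3 + 6*a*b*e + 6*a*c*d + 3*b^2*d + 3*c^2*b + 3*e^2*c + 3*d^2*e) - (a+b+c+d+e)^3/5 =
      2/5 * (((a + t*(b+e)/2 - (1+t)*(c+d)/2)^3 - 3*(a + t*(b+e)/2 - (1+t)*(c+d)/2)*((3+t)/4*((b-e) + t*(c-d))^2)) + ((a + t*(c+d)/2 - (1+t)*(e+b)/2)^3 - 3*(a + t*(c+d)/2 - (1+t)*(e+b)/2)*((3+t)/4*((c-d) + t*(e-b))^2))) := by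
  linear_combination ((3/20)*e^3 + (-9/20)*e^3*t + (-3/20)*e^3*t^2 + (21/20)*d*e^2 + (9/10)*d*e^2*t + (3/20)*d*e^2*t^2 + (-39/20)*d^2*e + (-3/10)*d^2*e*t + (3/20)*d^2*e*t^2 + (3/20)*d^3 + (-9/20)*d^3*t + (-3/20)*d^3*t^2 + (-39/20)*c*e^2 + (-3/10)*c*e^2*t + (3/20)*c*e^2*t^2 + (3/10)*c*d*e + (-3/5)*c*d*e*t + (-3/10)*c*d*e*t^2 + (9/20)*c*d^2 + (9/20)*c*d^2*t + (3/20)*c*d^2*t^2 + (21/20)*c^2*e + (9/10)*c^2*e*t + (3/20)*c^2*e*t^2 + (9/20)*c^2*d + (9/20)*c^2*d*t + (3/20)*c^2*d*t^2 + (3/20)*c^3 + (-9/20)*c^3*t + (-3/20)*c^3*t^2 + (9/20)*b*e^2 + (9/20)*b*e^2*t + (3/20)*b*e^2*t^2 + (3/10)*b*d*e + (-3/5)*b*d*e*t + (-3/10)*b*d*e*t^2 + (21/20)*b*d^2 + (9/10)*b*d^2*t + (3/20)*b*d^2*t^2 + (3/10)*b*c*e + (-3/5)*b*c*e*t + (-3/10)*b*c*e*t^2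 + (3/10)*b*c*d + (-3/5)*b*c*d*t + (-3/10)*b*c*d*t^2 + (-39/20)*b*c^2 + (-3/10)*b*c^2*t + (3/20)*b*c^2*t^2 + (9/20)*b^2*e + (9/20)*b^2*e*t + (3/20)*b^2*e*t^2 + (-39/20)*b^2*d + (-3/10)*b^2*d*t + (3/20)*b^2*d*t^2 + (21/20)*b^2*c + (9/10)*b^2*c*t + (3/20)*b^2*c*t^2 + (3/20)*b^3 + (-9/20)*b^3*t + (-3/20)*b^3*t^2 + (3/10)*a*e^2*t + (6/5)*a*d*e + (3/10)*a*d^2*t + (6/5)*a*c*e + (-12/5)*a*c*d + (-3/5)*a*c*d*t + (3/10)*a*c^2*t + (-12/5)*a*b*e + (-3/5)*a*b*e*t + (6/5)*a*b*d + (6/5)*a*b*c + (3/10)*a*b^2*t) * ht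

theorem aux_s (s : ℝ) (h : 3/2 ≤ s) : 1/100 ≤ s^2 - 16/25*(5-s) := by nlinarith

theorem key_ineq {a b c d e : ℝ} (h : Good a b c d e) (s T S : ℝ) (hs : s = a + b + c + d + e)
    (hT : T = a^3 + 6*a*b*e + 6*a*c*d + 3*b^2*d + 3*c^2*b + 3*e^2*c + 3*d^2*e)
    (hS : S = a^2+b^2+c^2+d^2+e^2) :
    (1/100) * (S - s^2/5) ≤ (5-s)*T + s^2*S - s^3 := by
  obtain ⟨t, ht, ht1, ht2⟩ : ∃ t : ℝ, t^2 = 1 - t ∧ 309/500 ≤ t ∧ t ≤ 3091/5000 := by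
    have h5 : (Real.sqrt 5)^2 = 5 := Real.sq_sqrt (by norm_num)
    refine ⟨(Real.sqrt 5 - 1)/2, by linarith, ?_, ?_⟩
    · have : (2.236 : ℝ) ≤ Real.sqrt 5 := Real.le_sqrt_of_sq_le (by norm_num)
      linarith
    · have : Real.sqrt 5 ≤ 2.2362 := Real.sqrt_le_iff.2 (by norm_num)
      linarith
  have q1 := quad ht1 ht2 (h.lin ht1 ht2).1 (h.lin ht1 ht2).2
    (by have := (h.conj.lin ht1 ht2).2; linarith)
  have q2 := quad ht1 ht2 (h.dil.lin ht1 ht2).1 (h.dil.lin ht1 ht2).2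
    (by have := (h.dil.conj.lin ht1 ht2).2; linarith)
  have hV := identV a b c d e t ht
  have hTb := identT a b c d e t ht
  rw [← hS, ← hs] at hV
  rw [← hT, ← hs] at hTb
  have hVn : 0 ≤ S - s^2/5 := by
    rw [hV]
    have : 0 ≤ (3+t)/4 := by linarith
    positivity
  have h0 : 0 ≤ (T - s^3/5) + 16/25*(S-s^2/5) := by
    generalize (a + t*(b+e)/2 - (1+t)*(c+d)/2) = x1 at *
    generalize (a + t*(c+d)/2 - (1+t)*(e+b)/2) = x2 at *
    generalize ((3+t)/4*((b-e) + t*(c-d))^2) = y1 at *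
    generalize ((3+t)/4*((c-d) + t*(e-b))^2) = y2 at *
    rw [hV, hTb]; linarith
  have hs1 : 3/2 ≤ s := by rw [hs]; exact h.2.2.2.2.2.2.2.2.2.2.2.2.2.2
  have hs2 : s ≤ 5 := by
    obtain ⟨h1,h2,h3,h4,h5,h6,h7,h8,h9,h10,-⟩ := h
    linarith
  have e : (5-s)*T + s^2*S - s^3 = (5-s)*((T - s^3/5) + 16/25*(S-s^2/5)) + (s^2 - 16/25*(5-s))*(S-s^2/5) := by ring
  rw [e]
  have := mul_nonneg (sub_nonneg.2 hs2) h0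
  have : (1/100) * (S-s^2/5) ≤ (s^2 - 16/25*(5-s))*(S-s^2/5) := by
    exact mul_le_mul_of_nonneg_right (aux_s s hs1) hVn
  linarith


theorem card_dvd_of_periodic {V : Type*} [AddCommGroup V] (H : AddSubgroup V) (X : Finset V)
    (h : ∀ x ∈ X, ∀ g ∈ H, x + g ∈ X) : Nat.card H ∣ X.card := by
  have e := QuotientAddGroup.preimageMkEquivAddSubgroupProdSet H
    ((QuotientAddGroup.mk : V → V ⧸ H) '' (X : Set V))
  have h1 : (QuotientAddGroup.mk : V → V ⧸ H) ⁻¹' ((QuotientAddGroup.mk : V → V ⧸ H) '' (X : Set V)) = X := by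
    apply Set.Subset.antisymm
    · rintro y ⟨x, hx, hxy⟩
      have := h x hx _ (QuotientAddGroup.eq.1 hxy)
      simpa using this
    · exact Set.subset_preimage_image _ _
  have h2 := Nat.card_congr e
  rw [h1, Nat.card_prod] at h2
  rw [show X.card = Nat.card (X : Set V) by simp, h2]
  exact dvd_mul_right _ _

theorem mann {V : Type*} [AddCommGroup V] [DecidableEq V] [Finite V] (F : AddSubgroup V) :
    ∀ m : ℕ, ∀ X Y : Finset V, Y.card ≤ m → X.Nonempty → Y.Nonempty →
      (∀ y ∈ Y, ∀ y' ∈ Y, y - y' ∈ F) →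
      ∃ H : AddSubgroup V, H ≤ F ∧ ∃ k : ℕ, 1 ≤ k ∧ k * Nat.card H ≤ (X + Y).card ∧
        X.card + Y.card ≤ (k + 1) * Nat.card H := by
  intro m
  induction m with
  | zero =>
    intro X Y h _ h2
    have := h2.card_pos
    omega
  | succ m ih =>
    intro X Y hm hX hY hF
    by_cases hc : ∃ x ∈ X, ∃ y ∈ Y, ∃ y' ∈ Y, y' + (x - y) ∉ X
    · obtain ⟨x, hx, y, hy, y', hy', hn⟩ := hc
      set e := x - y with he
      set X' := X ∪ (Y.filter (fun z => z + e ∉ X)).image (fun z => z + e) with hX'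
      set Y' := Y.filter (fun z => z + e ∈ X) with hY'
      have hsub : X' + Y' ⊆ X + Y := by
        intro v hv
        obtain ⟨p, hp, q, hq, rfl⟩ := Finset.mem_add.1 hv
        rw [hY', Finset.mem_filter] at hq
        rw [hX', Finset.mem_union, Finset.mem_image] at hp
        rcases hp with hp | ⟨z, hz, rfl⟩
        · exact Finset.add_mem_add hp hq.1
        · rw [Finset.mem_filter] at hz
          have : z + e + q = (q + e) + z := by abel
          rw [this]
          exact Finset.add_mem_add hq.2 hz.1
      have hlt : Y'.card < Y.card := by
        apply Finset.card_lt_card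
        rw [Finset.ssubset_iff_of_subset (Finset.filter_subset _ _)]
        exact ⟨y', hy', by simp [hn]⟩
      have hX'c : X'.card = X.card + (Y.filter (fun z => z + e ∉ X)).card := by
        rw [hX', Finset.card_union_of_disjoint, Finset.card_image_of_injective _ (add_left_injective e)]
        rw [Finset.disjoint_left]
        intro v hv hv'
        obtain ⟨z, hz, rfl⟩ := Finset.mem_image.1 hv'
        exact (Finset.mem_filter.1 hz).2 hv
      have hYc : Y'.card + (Y.filter (fun z => z + e ∉ X)).card = Y.card :=
        Finset.card_filter_add_card_filter_not (s := Y) (fun z => z + e ∈ X)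
      obtain ⟨H, hH, k, hk, h1, h2⟩ := ih X' Y' (by omega) (hX.mono Finset.subset_union_left)
        ⟨y, by simp [hY', he, hy, hx]⟩
        (fun a ha b hb => hF a (Finset.mem_filter.1 ha).1 b (Finset.mem_filter.1 hb).1)
      refine ⟨H, hH, k, hk, h1.trans (Finset.card_le_card hsub), ?_⟩
      omega
    · push Not at hc
      set H := AddSubgroup.closure {v : V | ∃ y ∈ Y, ∃ y' ∈ Y, v = y' - y} with hHd
      obtain ⟨y0, hy0⟩ := hY
      have hper : ∀ g ∈ H, ∀ x ∈ X, x + g ∈ X := by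
        intro g hg
        induction hg using AddSubgroup.closure_induction'' with
        | zero => simp
        | mem v hv =>
          obtain ⟨y, hy, y', hy', rfl⟩ := hv
          intro x hx
          have := hc x hx y hy y' hy'
          rwa [show x + (y' - y) = y' + (x - y) by abel]
        | neg_mem v hv =>
          obtain ⟨y, hy, y', hy', rfl⟩ := hv
          intro x hx
          have := hc x hx y' hy' y hy
          rwa [show x + -(y' - y) = y + (x - y') by abel]
        | add a b _ _ ha hb =>
          intro x hx
          rw [← add_assoc]
          exact hb _ (ha _ hx)
      obtain ⟨k, hk⟩ := card_dvd_of_periodic H X (fun x hx g hg => hper g hg x hx)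
      have hYH : Y.card ≤ Nat.card H := by
        have : Nat.card H = (H : Set V).ncard := rfl
        rw [this, ← Set.ncard_coe_finset]
        apply Set.ncard_le_ncard_of_injOn (fun y => y - y0)
        · intro y hy
          exact AddSubgroup.subset_closure ⟨y0, hy0, y, hy, rfl⟩
        · intro a _ b _ h
          exact sub_left_injective h
      have hXY : X.card ≤ (X + Y).card := by
        apply Finset.card_le_card_of_injOn (fun x => x + y0)
        · intro x hx
          exact Finset.add_mem_add hx hy0
        · intro a _ b _ h
          exact add_left_injective _ h
      refine ⟨H, ?_, k, ?_, ?_, ?_⟩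
      · rw [hHd, AddSubgroup.closure_le]
        rintro v ⟨y, hy, y', hy', rfl⟩
        exact hF _ hy' _ hy
      · have := hX.card_pos
        rcases Nat.eq_zero_or_pos k with h | h
        · rw [h, mul_zero] at hk; omega
        · exact h
      · rw [mul_comm, ← hk]; exact hXY
      · rw [hk]; linarith

/-- density Cauchy--Davenport -/
theorem dens {V : Type*} [AddCommGroup V] [DecidableEq V] [Finite V] (F : AddSubgroup V) (r : ℕ)
    (hr : Nat.card F = 5 ^ r) (X Y : Finset V) (hX : X.Nonempty) (hY : Y.Nonempty)
    (hF : ∀ y ∈ Y, ∀ y' ∈ Y, y - y' ∈ F) (j : ℕ) (hj : j ≤ 5)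
    (h : j * Nat.card F < 5 * (X.card + Y.card)) : j * Nat.card F ≤ 5 * (X + Y).card := by
  obtain ⟨H, hH, k, hk, h1, h2⟩ := mann F _ X Y le_rfl hX hY hF
  have hd := AddSubgroup.card_dvd_of_le hH
  have hd' := hd
  rw [hr, Nat.dvd_prime_pow Nat.prime_five] at hd'
  obtain ⟨i, hi, hi'⟩ := hd'
  have hpos : 0 < Nat.card H := Nat.card_pos
  rcases Nat.eq_or_lt_of_le hi with h3 | h3
  · have : Nat.card F = Nat.card H := by rw [hr, hi', h3]
    rw [this]
    calc j * Nat.card H ≤ 5 * (k * Nat.card H) := by nlinarith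
      _ ≤ _ := by omega
  · obtain ⟨u, hu⟩ : ∃ u, Nat.card F = 5 * (u * Nat.card H) := by
      refine ⟨5 ^ (r - i - 1), ?_⟩
      rw [hr, hi', ← pow_add, ← pow_succ']
      congr 1; omega
    rw [hu] at h ⊢
    have h4 : j * u < k + 1 := by
      have : (j * u) * Nat.card H < (k+1) * Nat.card H := by nlinarith
      exact lt_of_mul_lt_mul_right this (Nat.zero_le _)
    have h5 : (j * u) * Nat.card H ≤ k * Nat.card H := Nat.mul_le_mul_right _ (by omega)
    nlinarith


def hom {n : ℕ} (w : Fin n → ZMod 5) : (Fin n → ZMod 5) →+ ZMod 5 where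
  toFun x := w ⬝ᵥ x
  map_zero' := by simp
  map_add' x y := dotProduct_add w x y

theorem exists_dot {n : ℕ} {w : Fin n → ZMod 5} (hw : w ≠ 0) (c : ZMod 5) : ∃ v, w ⬝ᵥ v = c := by
  haveI : Fact (Nat.Prime 5) := ⟨Nat.prime_five⟩
  obtain ⟨i, hi⟩ := Function.ne_iff.1 hw
  refine ⟨Pi.single i ((w i)⁻¹ * c), ?_⟩
  rw [dotProduct_single, mul_inv_cancel_left₀ hi]

theorem fib_card {n : ℕ} (hn : 1 ≤ n) {w : Fin n → ZMod 5} (hw : w ≠ 0) (c : ZMod 5) :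
    (Finset.univ.filter (fun x => w ⬝ᵥ x = c)).card = 5 ^ (n - 1) := by
  have h1 : ∀ c, (Finset.univ.filter (fun x => w ⬝ᵥ x = c)).card =
      (Finset.univ.filter (fun x => w ⬝ᵥ x = 0)).card := by
    intro c
    obtain ⟨v, hv⟩ := exists_dot hw c
    symm
    apply Finset.card_bij (fun x _ => x + v)
    · intro x hx
      simp only [Finset.mem_filter, Finset.mem_univ, true_and] at hx ⊢
      rw [dotProduct_add, hx, hv, zero_add]
    · intro a _ b _ h
      exact add_left_injective _ h
    · intro x hx
      simp only [Finset.mem_filter, Finset.mem_univ, true_and] at hx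
      refine ⟨x - v, ?_, by simp⟩
      simp only [Finset.mem_filter, Finset.mem_univ, true_and]
      rw [dotProduct_sub, hx, hv, sub_self]
  have h2 := Finset.card_eq_sum_card_fiberwise (s := (Finset.univ : Finset (Fin n → ZMod 5)))
    (t := (Finset.univ : Finset (ZMod 5))) (f := fun x => w ⬝ᵥ x) (fun _ _ => Finset.mem_univ _)
  rw [Finset.sum_congr rfl (fun c _ => h1 c)] at h2
  simp only [Finset.card_univ, Fintype.card_pi, ZMod.card, Finset.prod_const, Finset.sum_const,
    smul_eq_mul, Fintype.card_fin] at h2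
  rw [h1]
  obtain ⟨m, rfl⟩ : ∃ m, n = m + 1 := ⟨n - 1, by omega⟩
  rw [pow_succ] at h2
  simp only [Nat.add_sub_cancel]
  omega

theorem ker_card {n : ℕ} (hn : 1 ≤ n) {w : Fin n → ZMod 5} (hw : w ≠ 0) :
    Nat.card (hom w).ker = 5 ^ (n - 1) := by
  rw [← fib_card hn hw 0, ← Set.ncard_coe_finset]
  have : Nat.card (hom w).ker = ((hom w).ker : Set (Fin n → ZMod 5)).ncard := rfl
  rw [this]
  congr 1
  ext x
  simp [hom, AddMonoidHom.mem_ker]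

/-- slices -/
def sl {n : ℕ} (A : Finset (Fin n → ZMod 5)) (w : Fin n → ZMod 5) (i : ZMod 5) :
    Finset (Fin n → ZMod 5) := A.filter (fun x => w ⬝ᵥ x = i)

theorem mem_sl {n : ℕ} {A : Finset (Fin n → ZMod 5)} {w : Fin n → ZMod 5} {i : ZMod 5}
    {x : Fin n → ZMod 5} : x ∈ sl A w i ↔ x ∈ A ∧ w ⬝ᵥ x = i := by
  simp [sl]

theorem triple {n : ℕ} (hn : 1 ≤ n) {A : Finset (Fin n → ZMod 5)}
    (hA : ∀ x ∈ A, ∀ y ∈ A, ∀ z ∈ A, x + y + z ≠ 0) {w : Fin n → ZMod 5} (hw : w ≠ 0)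
    (i j k : ZMod 5) (hijk : i + j + k = 0) (m : ℕ) (hm : m ≤ 5)
    (hi : (sl A w i).card ≠ 0) (hj : (sl A w j).card ≠ 0)
    (h : m * 5 ^ (n - 1) < 5 * ((sl A w i).card + (sl A w j).card)) :
    m * 5 ^ (n - 1) + 5 * (sl A w k).card ≤ 5 * 5 ^ (n - 1) := by
  have hd := dens (hom w).ker (n-1) (ker_card hn hw) (sl A w i) (sl A w j)
    (Finset.card_ne_zero.1 hi) (Finset.card_ne_zero.1 hj)
    (by
      intro y hy y' hy'
      rw [AddMonoidHom.mem_ker, map_sub]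
      change w ⬝ᵥ y - w ⬝ᵥ y' = 0
      rw [(mem_sl.1 hy).2, (mem_sl.1 hy').2, sub_self]) m hm
  rw [ker_card hn hw] at hd
  have hd := hd h
  have hdis : Disjoint (sl A w i + sl A w j) (-(sl A w k)) := by
    rw [Finset.disjoint_left]
    intro v hv hv'
    obtain ⟨x, hx, y, hy, rfl⟩ := Finset.mem_add.1 hv
    rw [Finset.mem_neg'] at hv'
    exact hA x (mem_sl.1 hx).1 y (mem_sl.1 hy).1 _ (mem_sl.1 hv').1 (by abel)
  have hsub : (sl A w i + sl A w j) ∪ (-(sl A w k)) ⊆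
      Finset.univ.filter (fun x => w ⬝ᵥ x = i + j) := by
    intro v hv
    simp only [Finset.mem_filter, Finset.mem_univ, true_and]
    rcases Finset.mem_union.1 hv with hv | hv
    · obtain ⟨x, hx, y, hy, rfl⟩ := Finset.mem_add.1 hv
      rw [dotProduct_add, (mem_sl.1 hx).2, (mem_sl.1 hy).2]
    · rw [Finset.mem_neg'] at hv
      have := (mem_sl.1 hv).2
      rw [dotProduct_neg] at this
      rw [← neg_eq_iff_add_eq_zero.2 hijk] at this
      exact neg_injective this
  have := Finset.card_le_card hsub
  rw [fib_card hn hw, Finset.card_union_of_disjoint hdis, Finset.card_neg] at this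
  omega

theorem sum5 {M : Type*} [AddCommMonoid M] (g : ZMod 5 → M) :
    ∑ i, g i = g 0 + g 1 + g 2 + g 3 + g 4 := Fin.sum_univ_five g

theorem card_sl_sum {n : ℕ} (A : Finset (Fin n → ZMod 5)) (w : Fin n → ZMod 5) :
    A.card = (sl A w 0).card + (sl A w 1).card + (sl A w 2).card + (sl A w 3).card
      + (sl A w 4).card := by
  have h2 := Finset.card_eq_sum_card_fiberwise (s := A)
    (t := (Finset.univ : Finset (ZMod 5))) (f := fun x => w ⬝ᵥ x) (fun _ _ => Finset.mem_univ _)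
  rw [sum5] at h2
  exact h2

theorem slices_good {n : ℕ} (hn : 1 ≤ n) {A : Finset (Fin n → ZMod 5)}
    (hA : ∀ x ∈ A, ∀ y ∈ A, ∀ z ∈ A, x + y + z ≠ 0) (hc : 3 * 5 ^ (n - 1) < 2 * A.card)
    {w : Fin n → ZMod 5} (hw : w ≠ 0)
    (hs : ∀ i, 2 * (sl A w i).card ≤ 5 ^ (n - 1)) :
    Good ((sl A w 0).card / 5 ^ (n-1)) ((sl A w 1).card / 5 ^ (n-1)) ((sl A w 2).card / 5 ^ (n-1))
      ((sl A w 3).card / 5 ^ (n-1)) ((sl A w 4).card / 5 ^ (n-1)) := by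
  have hT := fun i k hik h => triple hn hA hw i i k hik 4 (by norm_num) h h
  have h0 := hT 0 0 (by decide)
  have h1 := hT 1 3 (by decide)
  have h2 := hT 2 1 (by decide)
  have h4 := hT 4 2 (by decide)
  have h3 := hT 3 4 (by decide)
  have b0 := hs 0
  have b1 := hs 1
  have b2 := hs 2
  have b3 := hs 3
  have b4 := hs 4
  rw [card_sl_sum A w] at hc
  generalize (sl A w 0).card = a0 at *
  generalize (sl A w 1).card = a1 at *
  generalize (sl A w 2).card = a2 at *
  generalize (sl A w 3).card = a3 at *
  generalize (sl A w 4).card = a4 at *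
  have hMp : 0 < 5 ^ (n-1) := by positivity
  have hMr : ((5:ℝ) ^ (n-1)) = ((5 ^ (n-1) : ℕ) : ℝ) := by push_cast; rfl
  rw [hMr]
  generalize 5 ^ (n-1) = M at *
  have hM : (0:ℝ) < M := by exact_mod_cast hMp
  have key : ∀ (x p q : ℕ), 0 < q → q * x ≤ p * M → (x : ℝ) / M ≤ (p:ℝ) / q := by
    intro x p q hq h
    have hq' : (0:ℝ) < q := by exact_mod_cast hq
    rw [div_le_div_iff₀ hM hq']
    have : (q:ℝ) * x ≤ p * M := by exact_mod_cast h
    linarith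
  have or1 : ∀ x y : ℕ, (x ≠ 0 → 4 * M < 5 * (x + x) → 4 * M + 5 * y ≤ 5 * M) →
      ((x : ℝ) / M ≤ 2/5 ∨ (y : ℝ) / M ≤ 1/5) := by
    intro x y h
    by_cases hx : 5 * x ≤ 2 * M
    · left; exact_mod_cast key x 2 5 (by norm_num) hx
    · right
      have := h (by omega) (by omega)
      exact_mod_cast key y 1 5 (by norm_num) (by omega)
  have hf : ∀ x : ℕ, 2 * x ≤ M → (x:ℝ)/M ≤ 1/2 := fun x h => by
    exact_mod_cast key x 1 2 (by norm_num) (by omega)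
  refine ⟨by positivity, by positivity, by positivity, by positivity, by positivity, ?_, hf _ b1,
    hf _ b2, hf _ b3, hf _ b4, or1 _ _ h1, or1 _ _ h2, or1 _ _ h4, or1 _ _ h3, ?_⟩
  · rcases or1 _ _ h0 with h | h <;> linarith
  · rw [← add_div, ← add_div, ← add_div, ← add_div, div_le_div_iff₀ (by norm_num) hM]
    have : (3 * M : ℝ) < 2 * (a0 + a1 + a2 + a3 + a4) := by exact_mod_cast hc
    linarith

theorem big_one {n : ℕ} (hn : 1 ≤ n) {A : Finset (Fin n → ZMod 5)}
    (hA : ∀ x ∈ A, ∀ y ∈ A, ∀ z ∈ A, x + y + z ≠ 0) (hc : 3 * 5 ^ (n - 1) < 2 * A.card)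
    {w : Fin n → ZMod 5} (hw : w ≠ 0) (h1 : 5 ^ (n - 1) < 2 * (sl A w 1).card) :
    ∃ j, ∀ x ∈ A, w ⬝ᵥ x = 1 ∨ w ⬝ᵥ x = j := by
  have hT := triple hn hA hw
  have t113 := hT 1 1 3 (by decide) 5 le_rfl
  have t122 := hT 1 2 2 (by decide) 5 le_rfl
  have t221 := hT 2 2 1 (by decide) 3 (by norm_num)
  have t000 := hT 0 0 0 (by decide) 4 (by norm_num)
  have t442 := hT 4 4 2 (by decide) 5 (by norm_num)
  have t014 := fun m => hT 0 1 4 (by decide) m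
  have t014_2 := t014 2 (by norm_num)
  have t014_3 := t014 3 (by norm_num)
  have t014_4 := t014 4 (by norm_num)
  have t014_5 := t014 5 (by norm_num)
  have hsum := card_sl_sum A w
  have hz : ∀ i, (sl A w i).card = 0 → ∀ x ∈ A, w ⬝ᵥ x ≠ i := by
    intro i hi x hx h
    have : x ∈ sl A w i := mem_sl.2 ⟨hx, h⟩
    rw [Finset.card_eq_zero.1 hi] at this
    simp at this
  have fin5 : ∀ i : ZMod 5, i = 0 ∨ i = 1 ∨ i = 2 ∨ i = 3 ∨ i = 4 := by decide
  have hz0 := hz 0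
  have hz2 := hz 2
  have hz3 := hz 3
  have hz4 := hz 4
  rw [hsum] at hc
  clear hsum hT t014 hz
  have hMp : 0 < 5 ^ (n-1) := by positivity
  generalize (sl A w 0).card = a0 at *
  generalize (sl A w 1).card = a1 at *
  generalize (sl A w 2).card = a2 at *
  generalize (sl A w 3).card = a3 at *
  generalize (sl A w 4).card = a4 at *
  generalize 5 ^ (n-1) = M at *
  have e3 : a3 = 0 := by omega
  have hcase : (a2 = 0 ∧ a0 = 0) ∨ (a2 = 0 ∧ a4 = 0) := by omega
  rcases hcase with ⟨e2, e0⟩ | ⟨e2, e4⟩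
  · refine ⟨4, fun x hx => ?_⟩
    rcases fin5 (w ⬝ᵥ x) with h | h | h | h | h
    · exact absurd h (hz0 e0 x hx)
    · exact Or.inl h
    · exact absurd h (hz2 e2 x hx)
    · exact absurd h (hz3 e3 x hx)
    · exact Or.inr h
  · refine ⟨0, fun x hx => ?_⟩
    rcases fin5 (w ⬝ᵥ x) with h | h | h | h | h
    · exact Or.inr h
    · exact Or.inl h
    · exact absurd h (hz2 e2 x hx)
    · exact absurd h (hz3 e3 x hx)
    · exact absurd h (hz4 e4 x hx)

theorem big_any {n : ℕ} (hn : 1 ≤ n) {A : Finset (Fin n → ZMod 5)}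
    (hA : ∀ x ∈ A, ∀ y ∈ A, ∀ z ∈ A, x + y + z ≠ 0) (hc : 3 * 5 ^ (n - 1) < 2 * A.card)
    {w : Fin n → ZMod 5} (hw : w ≠ 0) (i : ZMod 5) (h1 : 5 ^ (n - 1) < 2 * (sl A w i).card) :
    ∃ w : Fin n → ZMod 5, w ≠ 0 ∧ ∃ i j, ∀ x ∈ A, w ⬝ᵥ x = i ∨ w ⬝ᵥ x = j := by
  haveI : Fact (Nat.Prime 5) := ⟨Nat.prime_five⟩
  have hi : i ≠ 0 := by
    rintro rfl
    have := triple hn hA hw 0 0 0 (by simp) 5 le_rfl (by omega) (by omega) (by omega)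
    omega
  have hw' : i⁻¹ • w ≠ 0 := smul_ne_zero (inv_ne_zero hi) hw
  have : sl A (i⁻¹ • w) 1 = sl A w i := by
    ext x
    rw [mem_sl, mem_sl, smul_dotProduct, smul_eq_mul, inv_mul_eq_one₀ hi, eq_comm (a := i)]
  obtain ⟨j, hj⟩ := big_one hn hA hc hw' (by rw [this]; exact h1)
  exact ⟨_, hw', 1, j, hj⟩


theorem fibsum {n : ℕ} (A : Finset (Fin n → ZMod 5)) (w : Fin n → ZMod 5) (g : ZMod 5 → ℝ) :
    ∑ x ∈ A, g (w ⬝ᵥ x) = ∑ i, ((sl A w i).card : ℝ) * g i := by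
  rw [← Finset.sum_fiberwise A (fun x => w ⬝ᵥ x) (fun x => g (w ⬝ᵥ x))]
  refine Finset.sum_congr rfl fun i _ => ?_
  rw [Finset.sum_congr rfl (g := fun _ => g i)]
  · rw [Finset.sum_const, nsmul_eq_mul]; rfl
  · intro x hx
    rw [(Finset.mem_filter.1 hx).2]

theorem card_sl_ite {n : ℕ} (A : Finset (Fin n → ZMod 5)) (w : Fin n → ZMod 5) (i : ZMod 5) :
    ((sl A w i).card : ℝ) = ∑ x ∈ A, if w ⬝ᵥ x = i then 1 else 0 := by
  rw [sl, Finset.card_filter]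
  push_cast
  rfl

theorem ortho {n : ℕ} (hn : 1 ≤ n) (v : Fin n → ZMod 5) :
    ∑ w : Fin n → ZMod 5, (if w ⬝ᵥ v = 0 then (1:ℝ) else 0) =
      if v = 0 then 5 * 5 ^ (n-1) else 5 ^ (n-1) := by
  split_ifs with h
  · subst h
    simp
    obtain ⟨m, rfl⟩ : ∃ m, n = m + 1 := ⟨n - 1, by omega⟩
    rw [pow_succ]; simp; ring
  · have := fib_card hn h 0
    rw [Finset.card_filter] at this
    have h2 : ((∑ i, if v ⬝ᵥ i = 0 then 1 else 0 : ℕ) : ℝ) = ((5 ^ (n-1) : ℕ) : ℝ) := by rw [this]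
    push_cast at h2
    rw [← h2]
    refine Finset.sum_congr rfl fun w _ => ?_
    rw [dotProduct_comm]

theorem sumS {n : ℕ} (hn : 1 ≤ n) (A : Finset (Fin n → ZMod 5)) :
    ∑ w : Fin n → ZMod 5, ∑ i, ((sl A w i).card : ℝ) ^ 2 =
      A.card * (5 * 5 ^ (n-1)) + (A.card ^ 2 - A.card) * 5 ^ (n-1) := by
  have h1 : ∀ w : Fin n → ZMod 5, ∑ i, ((sl A w i).card : ℝ) ^ 2 =
      ∑ x ∈ A, ∑ y ∈ A, if w ⬝ᵥ (y - x) = 0 then (1:ℝ) else 0 := by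
    intro w
    have := fibsum A w (fun i => ((sl A w i).card : ℝ))
    simp only [← sq] at this
    rw [← this]
    refine Finset.sum_congr rfl fun x _ => ?_
    rw [card_sl_ite]
    refine Finset.sum_congr rfl fun y _ => ?_
    simp only [dotProduct_sub, sub_eq_zero]
  simp only [h1]
  rw [Finset.sum_comm]
  have h2 : ∀ x ∈ A, ∑ w : Fin n → ZMod 5, ∑ y ∈ A, (if w ⬝ᵥ (y - x) = 0 then (1:ℝ) else 0) =
      5 * 5 ^ (n-1) + (A.card - 1) * 5 ^ (n-1) := by
    intro x hx
    rw [Finset.sum_comm]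
    simp only [ortho hn, sub_eq_zero]
    rw [← Finset.add_sum_erase A _ hx, if_pos rfl]
    rw [Finset.sum_congr rfl (g := fun _ => (5:ℝ) ^ (n-1))]
    · rw [Finset.sum_const, nsmul_eq_mul, Finset.cast_card_erase_of_mem hx]
    · intro y hy
      rw [if_neg (Finset.ne_of_mem_erase hy)]
  rw [Finset.sum_congr rfl h2, Finset.sum_const, nsmul_eq_mul]
  ring

def TT (c : ZMod 5 → ℝ) : ℝ := c 0^3 + 6*c 0*c 1*c 4 + 6*c 0*c 2*c 3 + 3*c 1^2*c 3 + 3*c 2^2*c 1 + 3*c 4^2*c 2 + 3*c 3^2*c 4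

theorem TT_eq (c : ZMod 5 → ℝ) : TT c = ∑ i, c i * ∑ j, c j * c (-(i+j)) := by
  simp only [sum5]
  have e : ∀ i j k : ZMod 5, i + j + k = 0 → c (-(i+j)) = c k := fun i j k h => by
    rw [neg_eq_iff_add_eq_zero.2 h]
  rw [e 0 0 0 rfl, e 0 1 4 rfl, e 0 2 3 rfl, e 0 3 2 rfl, e 0 4 1 rfl,
    e 1 0 4 rfl, e 1 1 3 rfl, e 1 2 2 rfl, e 1 3 1 rfl, e 1 4 0 rfl,
    e 2 0 3 rfl, e 2 1 2 rfl, e 2 2 1 rfl, e 2 3 0 rfl, e 2 4 4 rfl,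
    e 3 0 2 rfl, e 3 1 1 rfl, e 3 2 0 rfl, e 3 3 4 rfl, e 3 4 3 rfl,
    e 4 0 1 rfl, e 4 1 0 rfl, e 4 2 4 rfl, e 4 3 3 rfl, e 4 4 2 rfl]
  unfold TT
  ring

theorem sumT {n : ℕ} (hn : 1 ≤ n) (A : Finset (Fin n → ZMod 5))
    (hA : ∀ x ∈ A, ∀ y ∈ A, ∀ z ∈ A, x + y + z ≠ 0) :
    ∑ w : Fin n → ZMod 5, TT (fun i => ((sl A w i).card : ℝ)) = A.card ^ 3 * 5 ^ (n-1) := by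
  have h1 : ∀ w : Fin n → ZMod 5, TT (fun i => ((sl A w i).card : ℝ)) =
      ∑ x ∈ A, ∑ y ∈ A, ∑ z ∈ A, if w ⬝ᵥ (x + y + z) = 0 then (1:ℝ) else 0 := by
    intro w
    rw [TT_eq]
    rw [← fibsum A w (fun i => ∑ j, ((sl A w j).card : ℝ) * ((sl A w (-(i+j))).card : ℝ))]
    refine Finset.sum_congr rfl fun x _ => ?_
    rw [← fibsum A w (fun j => ((sl A w (-(w ⬝ᵥ x+j))).card : ℝ))]
    refine Finset.sum_congr rfl fun y _ => ?_
    rw [card_sl_ite]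
    refine Finset.sum_congr rfl fun z _ => ?_
    simp only [dotProduct_add]
    congr 1
    rw [eq_iff_iff, eq_neg_iff_add_eq_zero, add_comm]
  simp only [h1]
  rw [Finset.sum_comm]
  have h2 : ∀ x ∈ A, ∑ w : Fin n → ZMod 5, ∑ y ∈ A, ∑ z ∈ A,
      (if w ⬝ᵥ (x + y + z) = 0 then (1:ℝ) else 0) = A.card * (A.card * 5 ^ (n-1)) := by
    intro x hx
    rw [Finset.sum_comm]
    rw [Finset.sum_congr rfl (g := fun _ => (A.card * 5 ^ (n-1) : ℝ))]
    · rw [Finset.sum_const, nsmul_eq_mul]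
    intro y hy
    rw [Finset.sum_comm]
    simp only [ortho hn]
    rw [Finset.sum_congr rfl (g := fun _ => (5 ^ (n-1) : ℝ))]
    · rw [Finset.sum_const, nsmul_eq_mul]
    intro z hz
    rw [if_neg (hA x hx y hy z hz)]
  rw [Finset.sum_congr rfl h2, Finset.sum_const, nsmul_eq_mul]
  ring

theorem finish {ι : Type*} (E : Finset ι) (S T : ι → ℝ) (N M : ℝ) (hE : (E.card : ℝ) = 5 * M - 1)
    (hS : N ^ 2 + ∑ w ∈ E, S w = N * (5 * M) + (N ^ 2 - N) * M)
    (hT : N ^ 3 + ∑ w ∈ E, T w = N ^ 3 * M)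
    (key : ∀ w ∈ E, (1/100) * (S w / M^2 - (N / M)^2/5) ≤
      (5 - N / M) * (T w / M^3) + (N/M)^2 * (S w / M^2) - (N/M)^3)
    (hN : 0 < N) (hN5 : N < 5 * M) (hM : 0 < M) : False := by
  have hsum := Finset.sum_le_sum key
  simp only [Finset.sum_sub_distrib, Finset.sum_add_distrib, ← Finset.mul_sum, ← Finset.sum_div,
    Finset.sum_const, nsmul_eq_mul, hE] at hsum
  have eS : ∑ w ∈ E, S w = N * (5 * M) + (N ^ 2 - N) * M - N^2 := by linarith
  have eT : ∑ w ∈ E, T w = N ^ 3 * M - N^3 := by linarith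
  rw [eS, eT] at hsum
  obtain ⟨s, rfl⟩ : ∃ s, N = s * M := ⟨N / M, by field_simp⟩
  have hs : 0 < s := by
    by_contra h
    nlinarith
  have hs5 : s < 5 := lt_of_mul_lt_mul_right hN5 hM.le
  have e1 : s * M / M = s := by field_simp
  have e2 : (s * M * (5 * M) + ((s * M) ^ 2 - s * M) * M - (s * M)^2) / M^2 =
    5 * s + s^2 * M - s - s^2 := by field_simp; ring
  have e3 : ((s * M) ^ 3 * M - (s * M)^3) / M^3 = s^3 * M - s^3 := by field_simp
  rw [e1, e2, e3] at hsum
  nlinarith [mul_pos hs (sub_pos.2 hs5)]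

theorem struct0 {n : ℕ} (hn : 1 ≤ n) {A : Finset (Fin n → ZMod 5)}
    (hA : ∀ x ∈ A, ∀ y ∈ A, ∀ z ∈ A, x + y + z ≠ 0) (hc : 3 * 5 ^ (n - 1) < 2 * A.card) :
    ∃ w : Fin n → ZMod 5, w ≠ 0 ∧ ∃ i j, ∀ x ∈ A, w ⬝ᵥ x = i ∨ w ⬝ᵥ x = j := by
  by_contra hcon
  have hs : ∀ w : Fin n → ZMod 5, w ≠ 0 → ∀ i, 2 * (sl A w i).card ≤ 5 ^ (n-1) := by
    intro w hw i
    by_contra h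
    exact hcon (big_any hn hA hc hw i (by omega))
  have hM : (0:ℝ) < 5 ^ (n-1) := by positivity
  have hNM : (3 * 5 ^ (n-1) : ℝ) < 2 * A.card := by exact_mod_cast hc
  have hS := sumS hn A
  have hT := sumT hn A hA
  have h5 := Fintype.card_pi_const (ZMod 5) n
  have e0 : ∀ i, sl A 0 i = if i = 0 then A else ∅ := by
    intro i
    ext x
    rw [mem_sl, zero_dotProduct]
    split_ifs with h
    · simp [h]
    · simp [Ne.symm h]
  rw [← Finset.add_sum_erase _ _ (Finset.mem_univ 0)] at hS hT
  simp only [e0, sum5] at hS hT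
  rw [TT] at hT
  have g1 : (1:ZMod 5) ≠ 0 := by decide
  have g2 : (2:ZMod 5) ≠ 0 := by decide
  have g3 : (3:ZMod 5) ≠ 0 := by decide
  have g4 : (4:ZMod 5) ≠ 0 := by decide
  simp only [if_neg g1, if_neg g2, if_neg g3, if_neg g4, if_true, Finset.card_empty, Nat.cast_zero]
    at hS hT
  have key : ∀ w ∈ Finset.univ.erase (0 : Fin n → ZMod 5),
      (1/100) * ((((sl A w 0).card:ℝ)^2 + ((sl A w 1).card:ℝ)^2 + ((sl A w 2).card:ℝ)^2 +
        ((sl A w 3).card:ℝ)^2 + ((sl A w 4).card:ℝ)^2) / (5^(n-1))^2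
        - (A.card / 5^(n-1))^2/5) ≤
      (5 - (A.card / 5^(n-1) : ℝ)) * (TT (fun i => ((sl A w i).card : ℝ)) / (5^(n-1))^3) +
      (A.card / 5^(n-1) : ℝ)^2 * ((((sl A w 0).card:ℝ)^2 + ((sl A w 1).card:ℝ)^2 + ((sl A w 2).card:ℝ)^2 +
        ((sl A w 3).card:ℝ)^2 + ((sl A w 4).card:ℝ)^2) / (5^(n-1))^2) - (A.card / 5^(n-1) : ℝ)^3 := by
    intro w hw
    have hw0 := Finset.ne_of_mem_erase hw
    refine key_ineq (slices_good hn hA hc hw0 (hs w hw0)) _ _ _ ?_ ?_ ?_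
    · rw [card_sl_sum A w]; push_cast; ring
    · unfold TT; field_simp
    · field_simp
  have h5n : 1 ≤ 5 ^ n := Nat.one_le_pow _ _ (by norm_num)
  have h5m : (5:ℝ) ^ n = 5 * 5 ^ (n-1) := by
    obtain ⟨m, rfl⟩ : ∃ m, n = m + 1 := ⟨n - 1, by omega⟩
    rw [pow_succ]; simp; ring
  obtain ⟨w, hw⟩ : ∃ w : Fin n → ZMod 5, w ≠ 0 := ⟨fun _ => 1, fun h => g1 (congrFun h ⟨0, hn⟩)⟩
  have hN5 : (A.card:ℝ) < 5 * 5 ^ (n-1) := by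
    have hh := card_sl_sum A w
    have : A.card < 5 * 5 ^ (n-1) := by
      have := hs w hw 0
      have := hs w hw 1
      have := hs w hw 2
      have := hs w hw 3
      have := hs w hw 4
      have : 0 < 5 ^ (n-1) := by positivity
      omega
    exact_mod_cast this
  have hcard : ((Finset.univ.erase (0 : Fin n → ZMod 5)).card : ℝ) = 5 * 5 ^ (n-1) - 1 := by
    rw [Finset.cast_card_erase_of_mem (Finset.mem_univ _), Finset.card_univ, h5, ← h5m]
    push_cast; rfl
  refine finish _ _ _ (A.card : ℝ) (5 ^ (n-1)) hcard ?_ ?_ key (by linarith) hN5 hM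
  · rw [← hS]; ring
  · rw [← hT]; ring

theorem mem3 {G : Type*} [AddCommGroup G] {A : Set G} {v : G} :
    v ∈ itSum 3 A ↔ ∃ x ∈ A, ∃ y ∈ A, ∃ z ∈ A, x + y + z = v := by
  simp only [itSum, Set.mem_add, Set.mem_singleton_iff]
  constructor
  · rintro ⟨_, ⟨_, ⟨_, rfl, x, hx, rfl⟩, y, hy, rfl⟩, z, hz, rfl⟩
    exact ⟨x, hx, y, hy, z, hz, by simp⟩
  · rintro ⟨x, hx, y, hy, z, hz, rfl⟩
    exact ⟨x + y, ⟨x, ⟨0, rfl, x, hx, zero_add x⟩, y, hy, rfl⟩, z, hz, rfl⟩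

theorem struct {n : ℕ} (hn : 1 ≤ n) {A : Set (Fin n → ZMod 5)} (h3 : itSum 3 A ≠ Set.univ)
    (hc : 3 * 5 ^ (n - 1) < 2 * A.ncard) :
    ∃ w : Fin n → ZMod 5, w ≠ 0 ∧ ∃ i j, ∀ x ∈ A, w ⬝ᵥ x = i ∨ w ⬝ᵥ x = j := by
  classical
  obtain ⟨g, hg⟩ := (Set.ne_univ_iff_exists_notMem _).1 h3
  have h5 : ∀ a : ZMod 5, a * 2 * 3 = a := by decide
  let A' : Finset (Fin n → ZMod 5) := A.toFinset.image (fun x => x - 2 * g)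
  have hcard : A'.card = A.ncard := by
    rw [Finset.card_image_of_injective _ (sub_left_injective), Set.ncard_eq_toFinset_card']
  obtain ⟨w, hw, i, j, hij⟩ := struct0 hn (A := A') (by
    intro x hx y hy z hz hs
    simp only [A', Finset.mem_image, Set.mem_toFinset] at hx hy hz
    obtain ⟨x, hx, rfl⟩ := hx
    obtain ⟨y, hy, rfl⟩ := hy
    obtain ⟨z, hz, rfl⟩ := hz
    refine hg (mem3.2 ⟨x, hx, y, hy, z, hz, ?_⟩)
    funext t
    have := congrFun hs t
    simp only [Pi.add_apply, Pi.sub_apply, Pi.mul_apply, Pi.zero_apply, Pi.ofNat_apply] at this ⊢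
    rw [← h5 (g t)]
    linear_combination this) (by rw [hcard]; exact hc)
  refine ⟨w, hw, i + w ⬝ᵥ (2 * g), j + w ⬝ᵥ (2 * g), fun x hx => ?_⟩
  have := hij (x - 2 * g) (Finset.mem_image.2 ⟨x, by simpa using hx, rfl⟩)
  rwa [dotProduct_sub, sub_eq_iff_eq_add, sub_eq_iff_eq_add] at this

theorem upper {n : ℕ} (hn : 2 ≤ n) {A : Set (Fin n → ZMod 5)}
    (hp : {g : Fin n → ZMod 5 | g +ᵥ A = A} = {0}) (h3 : itSum 3 A ≠ Set.univ)
    (hm : ∀ g ∉ A, itSum 3 (A ∪ {g}) = Set.univ) : 2 * A.ncard ≤ 3 * 5 ^ (n-1) := by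
  by_contra hc
  obtain ⟨w, hw, i, j, hij⟩ := struct (by omega) h3 (by omega)
  have key : ∀ i j : ZMod 5, ∃ c, ∀ x y z : ZMod 5, (x = i ∨ x = j) → (y = i ∨ y = j) →
    (z = i ∨ z = j) → x + y + z ≠ c := by decide
  obtain ⟨c, hcc⟩ := key i j
  obtain ⟨v, hv⟩ := exists_dot hw c
  have hA : ∀ x, (w ⬝ᵥ x = i ∨ w ⬝ᵥ x = j) → x ∈ A := by
    intro g hg
    by_contra hgA
    have := hm g hgA
    have hB : ∀ x ∈ A ∪ {g}, w ⬝ᵥ x = i ∨ w ⬝ᵥ x = j := by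
      rintro x (hx | hx)
      · exact hij x hx
      · rw [Set.mem_singleton_iff.1 hx]; exact hg
    have hv' : v ∈ itSum 3 (A ∪ {g}) := by rw [this]; trivial
    obtain ⟨x, hx, y, hy, z, hz, h⟩ := mem3.1 hv'
    apply hcc _ _ _ (hB x hx) (hB y hy) (hB z hz)
    rw [← hv, ← h, dotProduct_add, dotProduct_add]
  have hk := fib_card (by omega : 1 ≤ n) hw 0
  have h1 : 1 < (Finset.univ.filter (fun x => w ⬝ᵥ x = 0)).card := by
    rw [hk]
    exact Nat.one_lt_pow (by omega) (by norm_num)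
  obtain ⟨u, hu, hu0⟩ := Finset.exists_mem_ne h1 0
  have hu := (Finset.mem_filter.1 hu).2
  have : u ∈ {g : Fin n → ZMod 5 | g +ᵥ A = A} := by
    ext x
    rw [Set.mem_vadd_set_iff_neg_vadd_mem, vadd_eq_add]
    have : w ⬝ᵥ (-u + x) = w ⬝ᵥ x := by rw [dotProduct_add, dotProduct_neg, hu]; simp
    constructor
    · intro h
      exact hA x (this ▸ hij _ h)
    · intro h
      exact hA _ (this.symm ▸ hij _ h)
  rw [hp] at this
  exact hu0 this

theorem dot_succ {m : ℕ} (w x : Fin (m+1) → ZMod 5) :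
    w ⬝ᵥ x = w 0 * x 0 + Fin.tail w ⬝ᵥ Fin.tail x := by
  simp [dotProduct, Fin.sum_univ_succ, Fin.tail]

theorem half (m : ℕ) : ∃ B : Finset (Fin m → ZMod 5), (∀ x ∈ B, -x ∉ B) ∧
    2 * B.card + 1 = 5 ^ m := by
  classical
  let e := Fintype.equivFin (Fin m → ZMod 5)
  have h0 : ∀ a : ZMod 5, a = -a → a = 0 := by decide
  let B : Finset (Fin m → ZMod 5) := Finset.univ.filter (fun x => e x < e (-x))
  have hB : ∀ x, x ∈ B ↔ e x < e (-x) := by simp [B]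
  have hn : ∀ x ∈ B, -x ∉ B := by
    intro x hx
    rw [hB] at hx ⊢
    rw [neg_neg]
    exact not_lt_of_gt hx
  refine ⟨B, hn, ?_⟩
  have hu : (Finset.univ : Finset (Fin m → ZMod 5)) = insert 0 (B ∪ -B) := by
    symm
    rw [Finset.eq_univ_iff_forall]
    intro x
    rw [Finset.mem_insert, Finset.mem_union, Finset.mem_neg', hB, hB, neg_neg]
    rcases lt_trichotomy (e x) (e (-x)) with h | h | h
    · exact Or.inr (Or.inl h)
    · left
      funext t
      exact h0 _ (congrFun (e.injective h) t)
    · exact Or.inr (Or.inr h)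
  have hc := congrArg Finset.card hu
  rw [Finset.card_insert_of_notMem, Finset.card_union_of_disjoint, Finset.card_neg, Finset.card_univ,
    Fintype.card_pi_const, ZMod.card] at hc
  · omega
  · rw [Finset.disjoint_left]
    intro x hx hx'
    exact hn x hx (Finset.mem_neg'.1 hx')
  · rw [Finset.mem_union, Finset.mem_neg', hB, neg_zero, hB, neg_zero]
    simp

theorem lower (m : ℕ) (hm : 1 ≤ m) : ∃ A : Set (Fin (m+1) → ZMod 5),
    {g : Fin (m+1) → ZMod 5 | g +ᵥ A = A} = {0} ∧
    itSum 3 A ≠ Set.univ ∧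
    (∀ g ∉ A, itSum 3 (A ∪ {g}) = Set.univ) ∧
    2 * A.ncard + 1 = 3 * 5 ^ m := by
  classical
  obtain ⟨B, hBn, hBc⟩ := half m
  have hM : 5 ≤ 5 ^ m := by
    calc 5 = 5 ^ 1 := rfl
      _ ≤ 5 ^ m := Nat.pow_le_pow_right (by norm_num) hm
  let F : Finset (Fin (m+1) → ZMod 5) :=
    ({0} : Finset (Fin m → ZMod 5)).image (fun u => Fin.cons (α := fun _ => ZMod 5) 2 u) ∪
    ((Finset.univ.erase 0).image (fun u => Fin.cons (α := fun _ => ZMod 5) 0 u) ∪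
    B.image (fun u => Fin.cons (α := fun _ => ZMod 5) 1 u))
  have hF : ∀ x, x ∈ F ↔ (x 0 = 2 ∧ Fin.tail x = 0) ∨ (x 0 = 0 ∧ Fin.tail x ≠ 0) ∨
      (x 0 = 1 ∧ Fin.tail x ∈ B) := by
    intro x
    have him : ∀ (c : ZMod 5) (C : Finset (Fin m → ZMod 5)),
        x ∈ C.image (fun u => Fin.cons (α := fun _ => ZMod 5) c u) ↔ x 0 = c ∧ Fin.tail x ∈ C := by
      intro c C
      rw [Finset.mem_image]
      constructor
      · rintro ⟨u, hu, rfl⟩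
        simpa using hu
      · rintro ⟨rfl, h⟩
        exact ⟨_, h, Fin.cons_self_tail x⟩
    simp only [F, Finset.mem_union, him]
    simp
  have hFc : 2 * F.card + 1 = 3 * 5 ^ m := by
    have hinj : ∀ c : ZMod 5, Function.Injective
      (fun u : Fin m → ZMod 5 => (Fin.cons c u : Fin (m+1) → ZMod 5)) :=
      fun c => Fin.cons_right_injective (α := fun _ => ZMod 5) c
    have hd : ∀ (c d : ZMod 5) (C D : Finset (Fin m → ZMod 5)), c ≠ d →
        Disjoint (C.image (fun u => Fin.cons (α := fun _ => ZMod 5) c u))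
          (D.image (fun u => Fin.cons (α := fun _ => ZMod 5) d u)) := by
      intro c d C D hcd
      rw [Finset.disjoint_left]
      intro x hx hy
      obtain ⟨u, _, rfl⟩ := Finset.mem_image.1 hx
      obtain ⟨v, _, hv⟩ := Finset.mem_image.1 hy
      exact hcd (congrFun hv 0).symm
    rw [Finset.card_union_of_disjoint, Finset.card_union_of_disjoint, Finset.card_image_of_injective _ (hinj _),
      Finset.card_image_of_injective _ (hinj _), Finset.card_image_of_injective _ (hinj _),
      Finset.card_erase_of_mem (Finset.mem_univ _), Finset.card_univ, Fintype.card_pi_const, ZMod.card,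
      Finset.card_singleton]
    · omega
    · exact hd _ _ _ _ (by decide)
    · rw [Finset.disjoint_union_right]
      exact ⟨hd _ _ _ _ (by decide), hd _ _ _ _ (by decide)⟩
  have hp : (Fin.cons 2 0 : Fin (m+1) → ZMod 5) ∈ F := (hF _).2 (Or.inl (by simp))
  refine ⟨F, ?_, ?_, ?_, ?_⟩
  · ext g
    simp only [Set.mem_setOf_eq, Set.mem_singleton_iff]
    constructor
    · intro hg
      have hstep : ∀ x ∈ F, x + g ∈ F := by
        intro x hx
        have : g +ᵥ x ∈ g +ᵥ (F : Set (Fin (m+1) → ZMod 5)) := Set.vadd_mem_vadd_set hx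
        rw [hg, vadd_eq_add, add_comm g x] at this
        exact this
      have hk : ∀ k : ℕ, (Fin.cons 2 0 : Fin (m+1) → ZMod 5) + k • g ∈ F := by
        intro k
        induction k with
        | zero => simpa using hp
        | succ k ih => rw [succ_nsmul, ← add_assoc]; exact hstep _ ih
      have hg0 : g 0 = 0 := by
        by_contra hne
        have : ∀ a : ZMod 5, a ≠ 0 → ∃ k : Fin 5, 2 + (k : ℕ) • a = 3 := by decide
        obtain ⟨k, hk3⟩ := this _ hne
        have hx := (hF _).1 (hk k)
        have hc : ((Fin.cons 2 0 : Fin (m+1) → ZMod 5) + (k:ℕ) • g) 0 = 3 := hk3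
        rw [hc] at hx
        rcases hx with h | h | h
        · exact absurd h.1 (by decide)
        · exact absurd h.1 (by decide)
        · exact absurd h.1 (by decide)
      have hx := (hF _).1 (hstep _ hp)
      have hc : ((Fin.cons 2 0 : Fin (m+1) → ZMod 5) + g) 0 = 2 := by simp [hg0]
      have ht : Fin.tail ((Fin.cons 2 0 : Fin (m+1) → ZMod 5) + g) = Fin.tail g := by
        funext t; simp [Fin.tail]
      rw [hc, ht] at hx
      have htg : Fin.tail g = 0 := by
        rcases hx with h | h | h
        · exact h.2
        · exact absurd h.1 (by decide)
        · exact absurd h.1 (by decide)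
      rw [← Fin.cons_self_tail g, hg0, htg]
      funext t
      refine Fin.cases ?_ (fun t => ?_) t <;> simp
    · rintro rfl
      simp
  · rw [Set.ne_univ_iff_exists_notMem]
    refine ⟨Fin.cons 4 0, fun h => ?_⟩
    obtain ⟨x, hx, y, hy, z, hz, h⟩ := mem3.1 h
    have h0 : x 0 + y 0 + z 0 = 4 := congrFun h 0
    have ht : Fin.tail x + Fin.tail y + Fin.tail z = 0 := by
      funext t
      exact congrFun h t.succ
    have hx := (hF x).1 hx
    have hy := (hF y).1 hy
    have hz := (hF z).1 hz
    generalize Fin.tail x = a at *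
    generalize Fin.tail y = b at *
    generalize Fin.tail z = c at *
    generalize x 0 = x at *
    generalize y 0 = y at *
    generalize z 0 = z at *
    have hneg : ∀ a b : Fin m → ZMod 5, a ∈ B → b ∈ B → a + b ≠ 0 := by
      intro a b ha hb h
      exact hBn a ha (by rwa [← eq_neg_of_add_eq_zero_right h])
    rcases hx with ⟨rfl, hx⟩ | ⟨rfl, hx⟩ | ⟨rfl, hx⟩ <;>
    rcases hy with ⟨rfl, hy⟩ | ⟨rfl, hy⟩ | ⟨rfl, hy⟩ <;>
    rcases hz with ⟨rfl, hz⟩ | ⟨rfl, hz⟩ | ⟨rfl, hz⟩ <;>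
    first
    | exact absurd h0 (by decide)
    | (subst hx; subst hy; exact hz (by simpa using ht))
    | (subst hx; subst hz; exact hy (by simpa using ht))
    | (subst hz; subst hy; exact hx (by simpa using ht))
    | (subst hx; exact hneg _ _ hy hz (by simpa using ht))
    | (subst hy; exact hneg _ _ hx hz (by simpa using ht))
    | (subst hz; exact hneg _ _ hx hy (by simpa using ht))
  · intro g hg
    by_contra hcon
    have hcard : ((F : Set (Fin (m+1) → ZMod 5)) ∪ {g}).ncard = F.card + 1 := by
      rw [Set.union_singleton, Set.ncard_insert_of_notMem hg, Set.ncard_coe_finset]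
    obtain ⟨w, hw, i, j, hij⟩ := struct (by omega) hcon (by rw [hcard, Nat.add_sub_cancel]; omega)
    have hij' : ∀ x ∈ F, w ⬝ᵥ x = i ∨ w ⬝ᵥ x = j := fun x hx => hij x (Or.inl hx)
    by_cases hu : Fin.tail w = 0
    · have k1 := hij' _ hp
      have he : (fun _ => 1 : Fin m → ZMod 5) ≠ 0 := fun h => (by decide : ¬ (1:ZMod 5) = 0) (congrFun h ⟨0, hm⟩)
      have k2 := hij' (Fin.cons 0 (fun _ => 1)) ((hF _).2 (Or.inr (Or.inl (by simpa using he))))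
      have hBne : B.Nonempty := by rw [← Finset.card_pos]; omega
      obtain ⟨b, hb⟩ := hBne
      have k3 := hij' (Fin.cons 1 b) ((hF _).2 (Or.inr (Or.inr (by simpa using hb))))
      rw [dot_succ, hu, zero_dotProduct, Fin.cons_zero] at k1 k2 k3
      have : ∀ i j a : ZMod 5, (a * 2 + 0 = i ∨ a * 2 + 0 = j) → (a * 0 + 0 = i ∨ a * 0 + 0 = j) →
        (a * 1 + 0 = i ∨ a * 1 + 0 = j) → a = 0 := by decide
      have h0 := this _ _ _ k1 k2 k3
      apply hw
      rw [← Fin.cons_self_tail w, h0, hu]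
      funext t
      refine Fin.cases ?_ (fun t => ?_) t <;> simp
    · have hc : ∀ c : ZMod 5, c ≠ 0 → c = i ∨ c = j := by
        intro c hc
        obtain ⟨v, hv⟩ := exists_dot hu c
        have hv0 : v ≠ 0 := by
          rintro rfl
          rw [dotProduct_zero] at hv
          exact hc hv.symm
        have := hij' (Fin.cons 0 v) ((hF _).2 (Or.inr (Or.inl (by simpa using hv0))))
        rwa [dot_succ, Fin.cons_zero, Fin.tail_cons, hv, mul_zero, zero_add] at this
      have : ∀ i j : ZMod 5, ¬ (∀ c : ZMod 5, c ≠ 0 → c = i ∨ c = j) := by decide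
      exact this i j hc
  · rw [Set.ncard_coe_finset]; exact hFc

theorem case1 : Nk (Fin 1 → ZMod 5) 3 = 2 := by
  have hdot : ∀ w x : Fin 1 → ZMod 5, w ⬝ᵥ x = w 0 * x 0 := by intro w x; simp [dotProduct]
  have hext : ∀ x y : Fin 1 → ZMod 5, x 0 = y 0 → x = y := by
    intro x y h; funext t; rw [Subsingleton.elim t 0]; exact h
  have hup : ∀ A : Set (Fin 1 → ZMod 5), itSum 3 A ≠ Set.univ → A.ncard ≤ 2 := by
    intro A h3
    by_contra hc
    obtain ⟨w, hw, i, j, hij⟩ := struct le_rfl h3 (by simp; omega)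
    obtain ⟨x, y, z, hx, hy, hz, hxy, hxz, hyz⟩ := (Set.two_lt_ncard_iff).1 (by omega : 2 < A.ncard)
    have k1 := hij x hx
    have k2 := hij y hy
    have k3 := hij z hz
    rw [hdot] at k1 k2 k3
    have key : ∀ c : ZMod 5, c ≠ 0 → ∀ x y : ZMod 5, c * x = c * y → x = y := by decide
    have hw0 : w 0 ≠ 0 := fun h => hw (hext _ _ h)
    rcases k1 with k1 | k1 <;> rcases k2 with k2 | k2 <;> rcases k3 with k3 | k3 <;>
    first
    | exact hxy (hext _ _ (key _ hw0 _ _ (k1.trans k2.symm)))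
    | exact hxz (hext _ _ (key _ hw0 _ _ (k1.trans k3.symm)))
    | exact hyz (hext _ _ (key _ hw0 _ _ (k2.trans k3.symm)))
  refine IsGreatest.csSup_eq ⟨⟨{fun _ => 0, fun _ => 1}, ?_, ?_, ?_, ?_⟩, ?_⟩
  · ext g
    simp only [Set.mem_setOf_eq, Set.mem_singleton_iff]
    constructor
    · intro hg
      have hstep : ∀ x : Fin 1 → ZMod 5, (x 0 = 0 ∨ x 0 = 1) → ((g + x) 0 = 0 ∨ (g + x) 0 = 1) := by
        intro x hx
        have hx' : x ∈ ({fun _ => 0, fun _ => 1} : Set (Fin 1 → ZMod 5)) := by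
          rcases hx with h | h
          · exact Or.inl (hext _ _ h)
          · exact Or.inr (hext _ _ h)
        have : g +ᵥ x ∈ g +ᵥ ({fun _ => 0, fun _ => 1} : Set (Fin 1 → ZMod 5)) := Set.vadd_mem_vadd_set hx'
        rw [hg] at this
        rcases this with h | h
        · exact Or.inl (congrFun h 0)
        · exact Or.inr (congrFun h 0)
      have k1 := hstep (fun _ => 0) (Or.inl rfl)
      have k2 := hstep (fun _ => 1) (Or.inr rfl)
      simp only [Pi.add_apply] at k1 k2
      have : ∀ a : ZMod 5, (a + 0 = 0 ∨ a + 0 = 1) → (a + 1 = 0 ∨ a + 1 = 1) → a = 0 := by decide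
      exact hext _ _ (this _ k1 k2)
    · rintro rfl
      simp
  · rw [Set.ne_univ_iff_exists_notMem]
    refine ⟨fun _ => 4, fun h => ?_⟩
    obtain ⟨x, hx, y, hy, z, hz, h⟩ := mem3.1 h
    have h0 := congrFun h 0
    rcases hx with rfl | rfl <;> rcases hy with rfl | rfl <;> rcases hz with rfl | rfl <;>
      exact absurd h0 (by decide)
  · intro g hg
    by_contra hcon
    have := hup _ hcon
    rw [Set.union_singleton, Set.ncard_insert_of_notMem hg, Set.ncard_pair] at this
    · omega
    · intro h; exact absurd (congrFun h 0) (by decide)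
  · rw [Set.ncard_pair]
    intro h; exact absurd (congrFun h 0) (by decide)
  · rintro m ⟨A, _, h3, _, rfl⟩
    exact hup A h3

theorem stmt1 (n : ℕ) (hn : 1 ≤ n) :
    (n = 1 → Nk (Fin n → ZMod 5) 3 = 2) ∧
    (2 ≤ n → Nk (Fin n → ZMod 5) 3 = (3 * 5 ^ (n - 1) - 1) / 2) := by
  constructor
  · rintro rfl
    exact case1
  · intro h2
    obtain ⟨m, rfl⟩ : ∃ m, n = m + 1 := ⟨n - 1, by omega⟩
    obtain ⟨A, hA1, hA2, hA3, hA4⟩ := lower m (by omega)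
    refine IsGreatest.csSup_eq ⟨⟨A, hA1, hA2, hA3, ?_⟩, ?_⟩
    · rw [Nat.add_sub_cancel]; omega
    · rintro k ⟨C, hp, h3, hm, rfl⟩
      have := upper h2 hp h3 hm
      rw [Nat.add_sub_cancel] at *
      omega
end

section
/- Let n ≥ 1 be an integer and let A be a subset of G = (ℤ/5ℤ)^n with |A| > 0.3·5^n. If 3A ≠ G, then there is no subgroup F of G of index 5 such that A has non-empty intersection with exactly three cosets of F. -/
open Pointwise

open Finset in
theorem comb5 : ∀ x y z t : ZMod 5, x ≠ y → x ≠ z → y ≠ z →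
    (x + y + z = t) ∨
    (x + x + y = t ∧ y + y + z = t) ∨ (x + x + z = t ∧ z + z + y = t) ∨
    (y + y + x = t ∧ x + x + z = t) ∨ (y + y + z = t ∧ z + z + x = t) ∨
    (z + z + x = t ∧ x + x + y = t) ∨ (z + z + y = t ∧ y + y + x = t) ∨
    (x + x + y = t ∧ z + z + z = t) ∨ (x + x + z = t ∧ y + y + y = t) ∨
    (y + y + x = t ∧ z + z + z = t) ∨ (y + y + z = t ∧ x + x + x = t) ∨
    (z + z + x = t ∧ y + y + y = t) ∨ (z + z + y = t ∧ x + x + x = t) := by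
  decide

theorem core5 {G : Type*} [AddCommGroup G] [Fintype G] [DecidableEq G]
    (f : G →+ ZMod 5) (hf : Function.Surjective f) (A : Finset G)
    (hA : 3 * Fintype.card G < 10 * A.card) (hS : (A.image f).card = 3) (g : G) :
    ∃ a ∈ A, ∃ b ∈ A, ∃ c ∈ A, a + b + c = g := by
  classical
  set N := (Finset.univ.filter fun h => f h = 0).card with hN
  have hfib : ∀ i, (Finset.univ.filter fun h => f h = i).card = N := fun i =>
    AddMonoidHom.card_fiber_eq_of_mem_range f (hf i) (hf 0)
  have hG : Fintype.card G = 5 * N := by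
    have := Finset.card_eq_sum_card_fiberwise (f := f) (s := Finset.univ) (t := Finset.univ)
      (by intro x _; simp)
    rw [← Finset.card_univ, this]
    simp [hfib, ZMod.card]
  let b : ZMod 5 → ℕ := fun i => (A.filter fun h => f h = i).card
  have key : ∀ i j k : ZMod 5, i + j + k = f g → N < b i + b j → 0 < b k →
      ∃ a ∈ A, ∃ b ∈ A, ∃ c ∈ A, a + b + c = g := by
    intro i j k hs hij hk
    obtain ⟨c, hc⟩ := Finset.card_pos.1 hk
    rw [Finset.mem_filter] at hc
    by_contra hno
    have hd : Disjoint (A.filter fun h => f h = i)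
        ((A.filter fun h => f h = j).image fun y => g - c - y) := by
      rw [Finset.disjoint_left]
      intro a ha ha'
      obtain ⟨y, hy, rfl⟩ := Finset.mem_image.1 ha'
      rw [Finset.mem_filter] at ha hy
      exact hno ⟨_, ha.1, y, hy.1, c, hc.1, by abel⟩
    have h1 := Finset.card_union_of_disjoint hd
    rw [Finset.card_image_of_injective _ (fun u v h => by simpa using h)] at h1
    have h2 : (A.filter fun h => f h = i) ∪
        ((A.filter fun h => f h = j).image fun y => g - c - y) ⊆
        Finset.univ.filter fun h => f h = i := by
      intro a ha
      rw [Finset.mem_union] at ha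
      rcases ha with ha | ha
      · simpa using (Finset.mem_filter.1 ha).2
      · obtain ⟨y, hy, rfl⟩ := Finset.mem_image.1 ha
        have := (Finset.mem_filter.1 hy).2
        simp only [Finset.mem_filter, Finset.mem_univ, true_and, map_sub, this, hc.2, ← hs]
        abel
    have h3 := Finset.card_le_card h2
    rw [hfib, h1] at h3
    exact absurd h3 (not_le.2 hij)
  obtain ⟨x, y, z, hxy, hxz, hyz, hI⟩ := Finset.card_eq_three.1 hS
  have hpos : ∀ i ∈ A.image f, 0 < b i := by
    intro i hi
    obtain ⟨a, ha, rfl⟩ := Finset.mem_image.1 hi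
    exact Finset.card_pos.2 ⟨a, by simp [ha]⟩
  have hsum : A.card = b x + b y + b z := by
    rw [Finset.card_eq_sum_card_image f A, hI, Finset.sum_insert (by simp [hxy, hxz]),
      Finset.sum_insert (by simp [hyz]), Finset.sum_singleton, add_assoc]
  have hx := hpos x (by simp [hI])
  have hy := hpos y (by simp [hI])
  have hz := hpos z (by simp [hI])
  have T0 : ∀ x y z, x + y + z = f g → 3 * N < 2 * (b x + b y + b z) → 0 < b x → 0 < b y →
      0 < b z → ∃ a ∈ A, ∃ b ∈ A, ∃ c ∈ A, a + b + c = g := by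
    intro x y z h hs hx hy hz
    by_cases h1 : N < b x + b y
    · exact key x y z h h1 hz
    by_cases h2 : N < b x + b z
    · exact key x z y (by rw [← h]; abel) h2 hy
    · exact key y z x (by rw [← h]; abel) (by omega) hx
  have T1 : ∀ x y z, x + x + y = f g → y + y + z = f g → 3 * N < 2 * (b x + b y + b z) →
      0 < b x → 0 < b y → 0 < b z → ∃ a ∈ A, ∃ b ∈ A, ∃ c ∈ A, a + b + c = g := by
    intro x y z h h' hs hx hy hz
    by_cases h1 : N < b x + b x
    · exact key x x y h h1 hy
    · exact key y z y (by rw [← h']; abel) (by omega) hy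
  have T2 : ∀ x y z, x + x + y = f g → z + z + z = f g → 3 * N < 2 * (b x + b y + b z) →
      0 < b x → 0 < b y → 0 < b z → ∃ a ∈ A, ∃ b ∈ A, ∃ c ∈ A, a + b + c = g := by
    intro x y z h h' hs hx hy hz
    by_cases h1 : N < b x + b y
    · exact key x y x (by rw [← h]; abel) h1 hx
    · exact key z z z h' (by omega) hz
  have hs : 3 * N < 2 * (b x + b y + b z) := by omega
  rcases comb5 x y z (f g) hxy hxz hyz with h | ⟨h, h'⟩ | ⟨h, h'⟩ | ⟨h, h'⟩ | ⟨h, h'⟩ | ⟨h, h'⟩ |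
    ⟨h, h'⟩ | ⟨h, h'⟩ | ⟨h, h'⟩ | ⟨h, h'⟩ | ⟨h, h'⟩ | ⟨h, h'⟩ | ⟨h, h'⟩
  · exact T0 _ _ _ h hs hx hy hz
  iterate 6 exact T1 _ _ _ h h' (by omega) (by assumption) (by assumption) (by assumption)
  iterate 6 exact T2 _ _ _ h h' (by omega) (by assumption) (by assumption) (by assumption)

/-- If `A ⊆ (ℤ/5ℤ)ⁿ` has `|A| > 0.3·5ⁿ` and `3A ≠ G`, then `A` cannot meet exactly three
cosets of an index-5 subgroup. -/
theorem stmt2 (n : ℕ) (hn : 1 ≤ n) (A : Set (Fin n → ZMod 5))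
    (hA : (A.ncard : ℝ) > 0.3 * 5 ^ n)
    (h3A : itSum 3 A ≠ Set.univ) :
    ¬ ∃ F : AddSubgroup (Fin n → ZMod 5),
        F.index = 5 ∧
        (QuotientAddGroup.mk '' A : Set ((Fin n → ZMod 5) ⧸ F)).ncard = 3 := by
  classical
  rintro ⟨F, hF, hc⟩
  apply h3A
  have hcard : Nat.card ((Fin n → ZMod 5) ⧸ F) = 5 := hF
  haveI : Fact (Nat.Prime 5) := ⟨by norm_num⟩
  haveI : IsAddCyclic ((Fin n → ZMod 5) ⧸ F) := isAddCyclic_of_prime_card hcard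
  have e0 := zmodAddCyclicAddEquiv (G := (Fin n → ZMod 5) ⧸ F) inferInstance
  rw [hcard] at e0
  let f : (Fin n → ZMod 5) →+ ZMod 5 := e0.symm.toAddMonoidHom.comp (QuotientAddGroup.mk' F)
  have hf : Function.Surjective f :=
    e0.symm.surjective.comp (QuotientAddGroup.mk'_surjective F)
  have hcA : A.toFinset.card = A.ncard := (Set.ncard_eq_toFinset_card' A).symm
  have him : (A.toFinset.image f).card = 3 := by
    rw [← hc, ← Set.ncard_coe_finset, Finset.coe_image, Set.coe_toFinset,
      ← Set.ncard_image_of_injective _ e0.symm.injective, Set.image_image]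
    rfl
  ext g
  simp only [Set.mem_univ, iff_true]
  obtain ⟨a, ha, b, hb, c, hc', h⟩ := core5 f hf A.toFinset (by
    rw [hcA]
    have h1 : (3 * 5 ^ n : ℝ) < 10 * A.ncard := by linarith
    simp only [Fintype.card_fun, ZMod.card, Fintype.card_fin]
    exact_mod_cast h1) him g
  rw [Set.mem_toFinset] at ha hb hc'
  rw [← h]
  exact Set.add_mem_add (Set.add_mem_add (by simpa [itSum] using ha) hb) hc'
end

section
/- Let n ≥ 1 be an integer and let A be a subset of G = (ℤ/5ℤ)^n. If the 2-fold sumset 2A satisfies |2A| < 0.5·5^n, then |A| < 0.25·5^n. -/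
open Pointwise

section Kneser
variable {G : Type*} [AddCommGroup G] [Fintype G] [DecidableEq G]

/-- stabilizer of a finite set -/
def stb (C : Finset G) : Finset G := Finset.univ.filter (fun g => ∀ x, g + x ∈ C ↔ x ∈ C)

theorem mem_stb {C : Finset G} {g : G} : g ∈ stb C ↔ ∀ x, g + x ∈ C ↔ x ∈ C := by
  simp [stb]

theorem mem_stb_of {C : Finset G} {g : G} (h : ∀ x ∈ C, g + x ∈ C) : g ∈ stb C := by
  rw [mem_stb]
  have h1 : C.image (fun x => g + x) = C := by
    apply Finset.eq_of_subset_of_card_le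
    · intro y hy
      obtain ⟨x, hx, rfl⟩ := Finset.mem_image.1 hy
      exact h x hx
    · rw [Finset.card_image_of_injective _ (add_right_injective g)]
  intro x
  refine ⟨fun hx => ?_, h x⟩
  rw [← h1] at hx
  obtain ⟨y, hy, hyx⟩ := Finset.mem_image.1 hx
  have : y = x := add_left_cancel hyx
  exact this ▸ hy

theorem stb_zero (C : Finset G) : (0 : G) ∈ stb C := by simp [mem_stb]

theorem stb_add {C : Finset G} {g h : G} (hg : g ∈ stb C) (hh : h ∈ stb C) : g + h ∈ stb C := by
  rw [mem_stb] at *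
  intro x
  rw [add_assoc, hg, hh]

theorem stb_neg {C : Finset G} {g : G} (hg : g ∈ stb C) : -g ∈ stb C := by
  rw [mem_stb] at *
  intro x
  rw [← hg (-g + x)]; simp

theorem stb_sub {C : Finset G} {g h : G} (hg : g ∈ stb C) (hh : h ∈ stb C) : g - h ∈ stb C := by
  rw [sub_eq_add_neg]; exact stb_add hg (stb_neg hh)

/-- the counting inequality in a double coset -/
theorem key (C1 C2 : Finset G) (c : G) :
    ((stb C1).filter (fun h => c + h ∉ C2)).card * ((stb C2).filter (fun h => c + h ∈ C1)).card
      ≤ (stb C1 ∩ stb C2).card * (C1 \ C2).card := by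
  rw [← Finset.card_product]
  apply Finset.card_le_mul_card_image_of_maps_to (f := fun p : G × G => c + p.1 + p.2)
  · rintro ⟨g, h⟩ hp
    simp only [Finset.mem_product, Finset.mem_filter] at hp
    obtain ⟨⟨hg, hg2⟩, hh, hh1⟩ := hp
    rw [Finset.mem_sdiff]
    constructor
    · have := (mem_stb.1 hg (c + h)).2 hh1
      convert this using 1; abel
    · have := (mem_stb.1 hh (c + g)).not.2 hg2
      convert this using 2; abel
  · intro d _
    rcases Finset.eq_empty_or_nonempty (Finset.filter (fun p : G × G => c + p.1 + p.2 = d)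
      (((stb C1).filter (fun h => c + h ∉ C2)) ×ˢ ((stb C2).filter (fun h => c + h ∈ C1))))
      with he | ⟨⟨g0, h0⟩, hp0⟩
    · rw [he]; simp
    · simp only [Finset.mem_product, Finset.mem_filter] at hp0
      apply Finset.card_le_card_of_injOn (fun p : G × G => p.1 - g0)
      · rintro ⟨g, h⟩ hp
        simp only [Finset.coe_filter, Finset.mem_product, Finset.mem_filter,
          Set.mem_ofPred_eq] at hp
        have e : g - g0 = h0 - h := by
          have := hp.2.trans hp0.2.symm
          rw [add_assoc, add_assoc] at this
          have := add_left_cancel this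
          rw [sub_eq_sub_iff_add_eq_add, this, add_comm]
        simp only [Finset.coe_inter, Set.mem_inter_iff, Finset.mem_coe]
        refine ⟨stb_sub hp.1.1.1 hp0.1.1.1, ?_⟩
        rw [e]
        exact stb_sub hp0.1.2.1 hp.1.2.1
      · rintro ⟨g, h⟩ hp ⟨g', h'⟩ hp' hgg
        simp only [Finset.coe_filter, Finset.mem_product, Finset.mem_filter,
          Set.mem_ofPred_eq] at hp hp'
        have e : g = g' := sub_left_injective hgg
        subst e
        have := add_left_cancel (hp.2.trans hp'.2.symm)
        rw [this]

theorem union_arith (k m1 m2 x y a b : ℤ) (hk : 0 < k) (hm : m2 ≤ m1)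
    (hx : k ≤ x) (hy : k ≤ m1 - y) (hxm : x ≤ m2) 
    (hy0 : y = 0 ∨ k ≤ y) (hx0 : m2 - x = 0 ∨ k ≤ m2 - x)
    (ha : (m1 - y) * x ≤ k * a) (hb : (m2 - x) * y ≤ k * b) : m2 - k ≤ a ∨ m1 - k ≤ b := by
  rcases hy0 with rfl | hy0
  · left
    have : k * (m2 - k) ≤ k * a := by nlinarith
    exact le_of_mul_le_mul_left this hk
  rcases hx0 with h | hx0
  · left
    have : k * (m2 - k) ≤ k * a := by nlinarith
    exact le_of_mul_le_mul_left this hk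
  by_contra! hc
  have h1 : k * (x + m1 - y - k) ≤ k * a := by nlinarith
  have h2 : k * (y + m2 - x - k) ≤ k * b := by nlinarith
  have h1 := le_of_mul_le_mul_left h1 hk
  have h2 := le_of_mul_le_mul_left h2 hk
  linarith

/-- a set stable under `K` contains a translate of it as soon as it is nonempty -/
theorem card_ge {K V : Finset G} (hV : ∀ v ∈ V, ∀ k ∈ K, v + k ∈ V) (hne : V.Nonempty) :
    K.card ≤ V.card := by
  obtain ⟨v, hv⟩ := hne
  exact Finset.card_le_card_of_injOn (fun k => v + k) (fun k hk => hV v hv k hk)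
    (fun a _ b _ h => add_left_cancel h)

theorem union_aux (C1 C2 : Finset G) (c : G) (h1 : c ∈ C1) (h2 : c ∉ C2)
    (hm : (stb C2).card ≤ (stb C1).card) (N : ℕ)
    (hN1 : N ≤ C1.card + (stb C1).card) (hN2 : N ≤ C2.card + (stb C2).card) :
    N ≤ (C1 ∪ C2).card + (stb (C1 ∪ C2)).card := by
  set K := stb C1 ∩ stb C2 with hK
  have hKs : K ⊆ stb (C1 ∪ C2) := by
    intro g hg
    simp only [hK, Finset.mem_inter, mem_stb] at hg
    simp only [mem_stb, Finset.mem_union]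
    intro x; rw [hg.1, hg.2]
  have hKc := Finset.card_le_card hKs
  have e1 := key C1 C2 c
  have e2 := key C2 C1 c
  rw [Finset.inter_comm] at e2
  rw [← hK] at e1 e2
  have s1 := Finset.card_filter_add_card_filter_not (s := stb C1) (fun h => c + h ∈ C2)
  have s2 := Finset.card_filter_add_card_filter_not (s := stb C2) (fun h => c + h ∈ C1)
  have z : ∀ (D1 D2 : Finset G), K ⊆ stb D1 → K ⊆ stb D2 →
      ((stb D1).filter (fun h => c + h ∈ D2)).Nonempty →
      K.card ≤ ((stb D1).filter (fun h => c + h ∈ D2)).card := by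
    intro D1 D2 i1 i2 hne
    apply card_ge _ hne
    intro v hv k hk
    simp only [Finset.mem_filter] at hv ⊢
    refine ⟨stb_add hv.1 (i1 hk), ?_⟩
    have := (mem_stb.1 (i2 hk) (c + v)).2 hv.2
    convert this using 1; abel
  have z' : ∀ (D1 D2 : Finset G), K ⊆ stb D1 → K ⊆ stb D2 →
      ((stb D1).filter (fun h => c + h ∉ D2)).Nonempty →
      K.card ≤ ((stb D1).filter (fun h => c + h ∉ D2)).card := by
    intro D1 D2 i1 i2 hne
    apply card_ge _ hne
    intro v hv k hk
    simp only [Finset.mem_filter] at hv ⊢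
    refine ⟨stb_add hv.1 (i1 hk), ?_⟩
    have := (mem_stb.1 (i2 hk) (c + v)).not.2 hv.2
    convert this using 2; abel
  have i1 : K ⊆ stb C1 := Finset.inter_subset_left
  have i2 : K ⊆ stb C2 := Finset.inter_subset_right
  have q1 := z C2 C1 i2 i1 ⟨0, by simp [stb_zero, h1]⟩
  have q2 := z' C1 C2 i1 i2 ⟨0, by simp [stb_zero, h2]⟩
  have q3 := z C1 C2 i1 i2
  have q4 := z' C2 C1 i2 i1
  have hKpos : 0 < K.card := Finset.card_pos.2 ⟨0, by simp [hK, stb_zero]⟩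
  rw [← Finset.card_pos] at q3 q4
  have u1 : (C1 ∪ C2).card = (C1 \ C2).card + C2.card := by
    rw [← Finset.card_sdiff_add_card]
  have u2 : (C1 ∪ C2).card = (C2 \ C1).card + C1.card := by
    rw [Finset.union_comm, ← Finset.card_sdiff_add_card]
  generalize ((stb C1).filter (fun h => c + h ∈ C2)).card = y at *
  generalize ((stb C2).filter (fun h => c + h ∈ C1)).card = x at *
  generalize ((stb C1).filter (fun h => c + h ∉ C2)).card = y' at *
  generalize ((stb C2).filter (fun h => c + h ∉ C1)).card = x' at *
  have := union_arith K.card (stb C1).card (stb C2).card x y (C1 \ C2).card (C2 \ C1).card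
    (by exact_mod_cast hKpos) (by exact_mod_cast hm) (by exact_mod_cast q1) (by omega) (by omega)
    (by omega) (by omega)
    (by rw [show ((stb C1).card : ℤ) - y = y' by omega]; exact_mod_cast e1)
    (by rw [show ((stb C2).card : ℤ) - x = x' by omega]; exact_mod_cast e2)
  omega

theorem union_main (C1 C2 : Finset G) (N : ℕ)
    (hN1 : N ≤ C1.card + (stb C1).card) (hN2 : N ≤ C2.card + (stb C2).card) :
    N ≤ (C1 ∪ C2).card + (stb (C1 ∪ C2)).card := by
  by_cases h1 : C1 ⊆ C2
  · rwa [Finset.union_eq_right.2 h1]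
  by_cases h2 : C2 ⊆ C1
  · rwa [Finset.union_eq_left.2 h2]
  obtain ⟨c, hc1, hc2⟩ := Finset.not_subset.1 h1
  obtain ⟨d, hd1, hd2⟩ := Finset.not_subset.1 h2
  rcases le_total (stb C2).card (stb C1).card with h | h
  · exact union_aux C1 C2 c hc1 hc2 h N hN1 hN2
  · rw [Finset.union_comm]
    exact union_aux C2 C1 d hd1 hd2 h N hN2 hN1

theorem dyson (c : G) (m : ℕ) : ∀ A B : Finset G, B.card ≤ m → 0 ∈ B → c ∈ A →
    ∃ C : Finset G, c ∈ C ∧ C ⊆ A + B ∧ A.card + B.card ≤ C.card + (stb C).card := by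
  induction m with
  | zero =>
    intro A B hB h0 _
    have := Finset.card_pos.2 ⟨0, h0⟩
    omega
  | succ m ih =>
    intro A B hB h0 hc
    by_cases h : ∀ e ∈ A, ∀ b ∈ B, e + b ∈ A
    · refine ⟨A, hc, ?_, ?_⟩
      · intro x hx
        exact Finset.mem_add.2 ⟨x, hx, 0, h0, add_zero x⟩
      · have : B ⊆ stb A := fun b hb => mem_stb_of (fun x hx => by
          rw [add_comm]; exact h x hx b hb)
        have := Finset.card_le_card this
        omega
    · push Not at h
      obtain ⟨e, he, b, hb, hn⟩ := h
      have hlt : (B.filter (fun b => e + b ∈ A)).card < B.card :=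
        Finset.card_lt_card (Finset.filter_ssubset.2 ⟨b, hb, hn⟩)
      obtain ⟨C, hC1, hC2, hC3⟩ := ih (A ∪ B.image (fun b => e + b)) (B.filter (fun b => e + b ∈ A))
        (by omega) (by simp [h0, he]) (by simp [hc])
      refine ⟨C, hC1, hC2.trans ?_, ?_⟩
      · intro x hx
        obtain ⟨u, hu, v, hv, rfl⟩ := Finset.mem_add.1 hx
        rw [Finset.mem_filter] at hv
        rcases Finset.mem_union.1 hu with hu | hu
        · exact Finset.add_mem_add hu hv.1
        · obtain ⟨w, hw, rfl⟩ := Finset.mem_image.1 hu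
          exact Finset.mem_add.2 ⟨e + v, hv.2, w, hw, by abel⟩
      · have hi : (A ∩ B.image (fun b => e + b)).card = (B.filter (fun b => e + b ∈ A)).card := by
          rw [← Finset.card_image_of_injective (B.filter (fun b => e + b ∈ A))
            (add_right_injective e)]
          congr 1
          ext x
          simp only [Finset.mem_inter, Finset.mem_image, Finset.mem_filter]
          constructor
          · rintro ⟨hx, w, hw, rfl⟩
            exact ⟨w, ⟨hw, hx⟩, rfl⟩
          · rintro ⟨w, ⟨hw, hx⟩, rfl⟩
            exact ⟨hx, w, hw, rfl⟩
        have hu := Finset.card_union_add_card_inter A (B.image (fun b => e + b))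
        rw [Finset.card_image_of_injective _ (add_right_injective e)] at hu
        omega

theorem kneser (A B : Finset G) (h0 : 0 ∈ B) (hA : A.Nonempty) :
    A.card + B.card ≤ (A + B).card + (stb (A + B)).card := by
  have hc : ∀ c ∈ A + B, ∃ C : Finset G, c ∈ C ∧ C ⊆ A + B ∧
      A.card + B.card ≤ C.card + (stb C).card := by
    intro c hc
    obtain ⟨a, ha, b, hb, rfl⟩ := Finset.mem_add.1 hc
    obtain ⟨C, h1, h2, h3⟩ := dyson (a + b) _ (A.image (fun x => x + b)) (B.image (fun x => x - b))
      le_rfl (Finset.mem_image.2 ⟨b, hb, sub_self b⟩) (Finset.mem_image.2 ⟨a, ha, rfl⟩)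
    rw [Finset.card_image_of_injective _ (add_left_injective b),
      Finset.card_image_of_injective _ (sub_left_injective)] at h3
    refine ⟨C, h1, h2.trans ?_, h3⟩
    intro x hx
    obtain ⟨u, hu, v, hv, rfl⟩ := Finset.mem_add.1 hx
    obtain ⟨u, hu', rfl⟩ := Finset.mem_image.1 hu
    obtain ⟨v, hv', rfl⟩ := Finset.mem_image.1 hv
    exact Finset.mem_add.2 ⟨u, hu', v, hv', by abel⟩
  choose! f hf1 hf2 hf3 using hc
  have hne : (A + B).Nonempty := hA.add ⟨0, h0⟩
  have hs : (A + B).sup' hne f = A + B := by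
    apply le_antisymm
    · exact Finset.sup'_le _ _ (fun c hc => hf2 c hc)
    · intro x hx
      exact Finset.le_sup' f hx (hf1 x hx)
  have := Finset.sup'_induction (p := fun C => A.card + B.card ≤ C.card + (stb C).card) hne f
    (fun C1 h1 C2 h2 => union_main C1 C2 _ h1 h2) hf3
  rwa [hs] at this

/-- stabilizer as a subgroup -/
def stbG (C : Finset G) : AddSubgroup G where
  carrier := stb C
  zero_mem' := stb_zero C
  add_mem' := fun h1 h2 => stb_add h1 h2
  neg_mem' := fun h => stb_neg h

theorem final (n : ℕ) (hG : Nat.card G = 5 ^ n) (A : Finset G) (h0 : 0 ∈ A)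
    (h : 2 * (A + A).card < 5 ^ n) : 4 * A.card < 5 ^ n := by
  set H := stb (A + A) with hH
  have hAA : (A + H) + (A + H) = A + A := by
    apply Finset.Subset.antisymm
    · intro x hx
      obtain ⟨u, hu, v, hv, rfl⟩ := Finset.mem_add.1 hx
      obtain ⟨a, ha, g, hg, rfl⟩ := Finset.mem_add.1 hu
      obtain ⟨b, hb, k, hk, rfl⟩ := Finset.mem_add.1 hv
      have := (mem_stb.1 (stb_add hg hk) (a + b)).2 (Finset.add_mem_add ha hb)
      convert this using 1; abel
    · have : A ⊆ A + H := fun x hx => Finset.mem_add.2 ⟨x, hx, 0, stb_zero _, add_zero x⟩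
      exact Finset.add_subset_add this this
  have hz : (0 : G) ∈ A + H := Finset.mem_add.2 ⟨0, h0, 0, stb_zero _, add_zero 0⟩
  have hk := kneser (A + H) (A + H) hz ⟨0, hz⟩
  rw [hAA, ← hH] at hk
  have hle : A.card ≤ (A + H).card :=
    Finset.card_le_card fun x hx => Finset.mem_add.2 ⟨x, hx, 0, stb_zero _, add_zero x⟩
  have hcard : Nat.card (stbG (A + A)) = H.card := by
    exact Nat.card_eq_card_toFinset (H : Set G) |>.trans (by simp)
  have hdvd : H.card ∣ (A + H).card := by
    have := AddSubgroup.card_add_eq_card_addSubgroup_add_card_quotient (stbG (A + A)) (A : Set G)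
    rw [hcard] at this
    have e : ((A : Set G) + (stbG (A + A) : Set G)) = ((A + H : Finset G) : Set G) := by
      rw [Finset.coe_add]; rfl
    rw [e] at this
    have e2 : Nat.card ((A + H : Finset G) : Set G) = (A + H).card :=
      Set.ncard_coe_finset (A + H)
    rw [e2] at this
    exact ⟨_, this⟩
  have hq : H.card ∣ 5 ^ n := by
    rw [← hG, ← hcard]; exact AddSubgroup.card_addSubgroup_dvd_card _
  obtain ⟨j, hj, hjH⟩ := (Nat.dvd_prime_pow (by norm_num)).1 hq
  have hq4 : 5 ^ (n - j) % 4 = 1 := by rw [Nat.pow_mod]; simp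
  have hsplit : 5 ^ n = 5 ^ j * 5 ^ (n - j) := by rw [← pow_add]; congr 1; omega
  obtain ⟨a, ha⟩ := hdvd
  rw [ha, hjH] at hk
  rw [ha, hjH] at hle
  rw [hsplit] at h ⊢
  generalize 5 ^ (n - j) = q at *
  have hp : 0 < 5 ^ j := by positivity
  generalize 5 ^ j = p at *
  have h1 : p * (4 * a) < p * (q + 2) := by nlinarith
  have h2 := lt_of_mul_lt_mul_left h1 (Nat.zero_le _)
  have h3 : 4 * a < q := by omega
  have : p * (4 * a) < p * q := (Nat.mul_lt_mul_left hp).2 h3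
  nlinarith

end Kneser

/-- If `A ⊆ (ℤ/5ℤ)ⁿ` satisfies `|2A| < 0.5·5ⁿ`, then `|A| < 0.25·5ⁿ`. -/
theorem stmt3 (n : ℕ) (hn : 1 ≤ n) (A : Set (Fin n → ZMod 5))
    (h2A : ((itSum 2 A).ncard : ℝ) < 0.5 * 5 ^ n) :
    (A.ncard : ℝ) < 0.25 * 5 ^ n := by
  classical
  rcases A.eq_empty_or_nonempty with rfl | ⟨a0, ha0⟩
  · simp; norm_num
  have hi : itSum 2 A = A + A := by simp [itSum]
  rw [hi] at h2A
  set F : Finset (Fin n → ZMod 5) := A.toFinite.toFinset with hF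
  have hFA : (F : Set (Fin n → ZMod 5)) = A := by simp [hF]
  rw [← hFA, ← Finset.coe_add, Set.ncard_coe_finset] at h2A
  rw [← hFA, Set.ncard_coe_finset]
  have ha : a0 ∈ F := by rw [← Finset.mem_coe, hFA]; exact ha0
  have hcF : (F.image (fun x => x - a0)).card = F.card :=
    Finset.card_image_of_injective _ sub_left_injective
  have hcFF : (F.image (fun x => x - a0) + F.image (fun x => x - a0)).card ≤ (F + F).card := by
    rw [← Finset.card_image_of_injective (F + F) (sub_left_injective (b := a0 + a0))]
    apply Finset.card_le_card
    intro x hx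
    obtain ⟨u, hu, v, hv, rfl⟩ := Finset.mem_add.1 hx
    obtain ⟨u, hu', rfl⟩ := Finset.mem_image.1 hu
    obtain ⟨v, hv', rfl⟩ := Finset.mem_image.1 hv
    exact Finset.mem_image.2 ⟨u + v, Finset.add_mem_add hu' hv', by abel⟩
  have h2 : 2 * (F + F).card < 5 ^ n := by
    have : (2 : ℝ) * ((F + F).card : ℝ) < 5 ^ n := by linarith
    exact_mod_cast this
  have := final n (by simp) (F.image (fun x => x - a0))
    (Finset.mem_image.2 ⟨a0, ha, sub_self a0⟩) (by omega)
  rw [hcF] at this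
  have : (4 : ℝ) * (F.card : ℝ) < 5 ^ n := by exact_mod_cast this
  linarith
end

section
/- Let n ≥ 1 be an integer and let A be a subset of G = (ℤ/5ℤ)^n with |A| > 0.3·5^n and 3A ≠ G. If F is a subgroup of G of index 5 and there is a coset c + F with |A ∩ (c + F)| > 0.5·|F|, then A has non-empty intersection with at most three cosets of F. -/
open Pointwise

lemma core {F : Type*} [AddCommGroup F] [Finite F] [DecidableEq F] (k : ℕ) :
    ∀ X Y : Finset F, Y.card ≤ k → (0 : F) ∈ Y → X.Nonempty →
    ∃ (H : AddSubgroup F) (A : Finset F), X ⊆ A ∧ A ⊆ X + Y ∧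
      (∀ a ∈ A, ∀ h ∈ H, a + h ∈ A) ∧ X.card + Y.card ≤ A.card + Nat.card H := by
  induction k with
  | zero =>
    intro X Y hY h0
    have := Finset.card_pos.2 ⟨0, h0⟩
    omega
  | succ k ih =>
    intro X Y hY h0 hX
    by_cases hst : ∀ a ∈ X, ∀ b ∈ Y, a + b ∈ X
    · refine ⟨AddSubgroup.closure (Y : Set F), X, Finset.Subset.refl _, ?_, ?_, ?_⟩
      · intro x hx
        exact Finset.mem_add.2 ⟨x, hx, 0, h0, add_zero x⟩
      · have key : ∀ b ∈ Y, ∀ a, a + b ∈ X ↔ a ∈ X := by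
          intro b hb
          have himg : X.image (· + b) = X := by
            apply Finset.eq_of_subset_of_card_le
            · intro x hx
              obtain ⟨a, ha, rfl⟩ := Finset.mem_image.1 hx
              exact hst a ha b hb
            · rw [Finset.card_image_of_injective _ (add_left_injective b)]
          intro a
          constructor
          · intro h
            rw [← himg] at h
            obtain ⟨a', ha', h'⟩ := Finset.mem_image.1 h
            have : a' = a := add_left_injective b h'
            rwa [← this]
          · intro h; exact hst a h b hb
        have key2 : ∀ h ∈ AddSubgroup.closure (Y : Set F), ∀ a, a + h ∈ X ↔ a ∈ X := by
          intro h hh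
          induction hh using AddSubgroup.closure_induction with
          | mem x hx => exact key x hx
          | zero => simp
          | add x y _ _ h1 h2 =>
            intro a
            rw [← add_assoc, h2, h1]
          | neg x _ h1 =>
            intro a
            rw [← h1, neg_add_cancel_right]
        intro a ha h hh
        exact (key2 h hh a).2 ha
      · have : (Y : Set F).ncard ≤ Nat.card (AddSubgroup.closure (Y : Set F)) := by
          change _ ≤ Nat.card ((AddSubgroup.closure (Y : Set F) : Set F))
          rw [Nat.card_coe_set_eq]
          exact Set.ncard_le_ncard AddSubgroup.subset_closure (Set.toFinite _)
        rw [Set.ncard_coe_finset] at this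
        omega
    · push Not at hst
      obtain ⟨a, ha, b, hb, hab⟩ := hst
      set Y1 := Y.filter (fun y => a + y ∈ X) with hY1
      set Y2 := Y.filter (fun y => ¬ (a + y ∈ X)) with hY2
      set X1 := X ∪ Y2.image (a + ·) with hX1
      have hc : Y1.card + Y2.card = Y.card := Finset.card_filter_add_card_filter_not _
      have hb2 : 0 < Y2.card := Finset.card_pos.2 ⟨b, by simp [hY2, hb, hab]⟩
      have hX1c : X1.card = X.card + Y2.card := by
        rw [hX1, Finset.card_union_of_disjoint, Finset.card_image_of_injective _ (add_right_injective a)]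
        rw [Finset.disjoint_left]
        intro x hx hx'
        obtain ⟨y, hy, rfl⟩ := Finset.mem_image.1 hx'
        exact (Finset.mem_filter.1 hy).2 hx
      obtain ⟨H, A, h1, h2, h3, h4⟩ := ih X1 Y1 (by omega) (by simp [hY1, h0, ha])
        (hX.mono Finset.subset_union_left)
      refine ⟨H, A, Finset.subset_union_left.trans h1, ?_, h3, by omega⟩
      intro x hx
      obtain ⟨u, hu, v, hv, rfl⟩ := Finset.mem_add.1 (h2 hx)
      have hv' := Finset.mem_filter.1 hv
      rcases Finset.mem_union.1 hu with hu | hu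
      · exact Finset.add_mem_add hu hv'.1
      · obtain ⟨y, hy, rfl⟩ := Finset.mem_image.1 hu
        have : a + y + v = (a + v) + y := by abel
        rw [this]
        exact Finset.add_mem_add hv'.2 (Finset.mem_filter.1 hy).1

lemma dvd_stable {F : Type*} [AddCommGroup F] [Finite F] (H : AddSubgroup F) (A : Finset F)
    (h : ∀ a ∈ A, ∀ h ∈ H, a + h ∈ A) : Nat.card H ∣ A.card := by
  have e : (QuotientAddGroup.mk ⁻¹' (QuotientAddGroup.mk '' (A : Set F) : Set (F ⧸ H)) : Set F)
      = A := by
    ext x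
    constructor
    · rintro ⟨y, hy, hxy⟩
      have := h y hy _ (QuotientAddGroup.eq.1 hxy)
      simpa using this
    · intro hx; exact ⟨x, hx, rfl⟩
  have := Nat.card_congr (QuotientAddGroup.preimageMkEquivAddSubgroupProdSet H
    (QuotientAddGroup.mk '' (A : Set F)))
  rw [e, Nat.card_prod] at this
  rw [Nat.card_coe_set_eq, Set.ncard_coe_finset] at this
  exact ⟨_, this⟩

lemma core2 {F : Type*} [AddCommGroup F] [Finite F] [DecidableEq F] (m : ℕ)
    (hm : Nat.card F = 5 ^ m)
    (X Y Z : Finset F) (hX : X.Nonempty) (hY : Y.Nonempty) (hZ : Z.Nonempty) (g : F)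
    (hg : ∀ x ∈ X, ∀ y ∈ Y, ∀ z ∈ Z, x + y + z ≠ g) :
    ∃ d a : ℕ, (Nat.card F = 5 * d ∨ 25 * d ≤ Nat.card F) ∧ d ∣ a ∧
      X.card + Y.card ≤ a + d ∧ a + Z.card ≤ Nat.card F := by
  have := Fintype.ofFinite F
  obtain ⟨y0, hy0⟩ := hY
  obtain ⟨H, A, h1, h2, h3, h4⟩ := core _ X (Y.image (· - y0)) le_rfl
    (Finset.mem_image.2 ⟨y0, hy0, sub_self _⟩) hX
  rw [Finset.card_image_of_injective _ (sub_left_injective)] at h4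
  have hdis : Disjoint A (Z.image (fun z => g - y0 - z)) := by
    rw [Finset.disjoint_left]
    intro x hx hx'
    obtain ⟨z, hz, rfl⟩ := Finset.mem_image.1 hx'
    obtain ⟨u, hu, v, hv, huv⟩ := Finset.mem_add.1 (h2 hx)
    obtain ⟨y, hy, rfl⟩ := Finset.mem_image.1 hv
    apply hg u hu y hy z hz
    have : u + y + z = (u + (y - y0)) + y0 + z := by abel
    rw [this, huv]; abel
  have hcard : A.card + Z.card ≤ Nat.card F := by
    rw [← Finset.card_image_of_injective Z (f := fun z => g - y0 - z) sub_right_injective,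
      ← Finset.card_union_of_disjoint hdis, Nat.card_eq_fintype_card]
    exact Finset.card_le_univ _
  have hApos : 0 < A.card := Finset.card_pos.2 (hX.mono h1)
  have hZpos : 0 < Z.card := Finset.card_pos.2 hZ
  have hdvd := dvd_stable H A h3
  refine ⟨Nat.card H, A.card, ?_, hdvd, h4, hcard⟩
  have hle := Nat.le_of_dvd hApos hdvd
  have hH : Nat.card H ∣ 5 ^ m := hm ▸ AddSubgroup.card_addSubgroup_dvd_card H
  obtain ⟨j, hj, hj'⟩ := (Nat.dvd_prime_pow (by norm_num : Nat.Prime 5)).1 hH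
  rw [hm] at hcard ⊢
  rw [hj'] at hle ⊢
  have hjm : j ≠ m := by
    rintro rfl
    omega
  obtain ⟨i, rfl⟩ : ∃ i, m = j + 1 + i := ⟨m - j - 1, by omega⟩
  rcases i with _ | i
  · left; rw [add_zero, pow_succ]; ring
  · right
    have : 5 ^ (j + 1 + (i + 1)) = 25 * 5 ^ j * 5 ^ i := by ring
    rw [this]
    exact Nat.le_mul_of_pos_right _ (by positivity)

lemma P1 {F : Type*} [AddCommGroup F] [Finite F] [DecidableEq F] (m : ℕ)
    (hm : Nat.card F = 5 ^ m)
    (X Y Z : Finset F) (hX : X.Nonempty) (hY : Y.Nonempty) (hZ : Z.Nonempty) (g : F)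
    (hg : ∀ x ∈ X, ∀ y ∈ Y, ∀ z ∈ Z, x + y + z ≠ g) :
    5 * (X.card + Y.card + Z.card) ≤ 6 * Nat.card F := by
  obtain ⟨d, a, h1, h2, h3, h4⟩ := core2 m hm X Y Z hX hY hZ g hg
  omega

lemma P2 {F : Type*} [AddCommGroup F] [Finite F] [DecidableEq F] (m : ℕ)
    (hm : Nat.card F = 5 ^ m)
    (X Y : Finset F) (hX : X.Nonempty) (hY : Y.Nonempty) (g : F)
    (hd : Nat.card F < 2 * X.card)
    (hg : ∀ x ∈ X, ∀ y ∈ Y, ∀ z ∈ Y, x + y + z ≠ g) :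
    10 * Y.card ≤ 3 * Nat.card F := by
  obtain ⟨d, a, h1, h2, h3, h4⟩ := core2 m hm X Y Y hX hY hY g hg
  obtain ⟨q, rfl⟩ := h2
  by_contra hcon
  rcases h1 with h1 | h1
  · rcases le_or_gt q 3 with h | h
    · have : d * q ≤ d * 3 := Nat.mul_le_mul_left _ h
      omega
    · have : d * 4 ≤ d * q := Nat.mul_le_mul_left _ h
      omega
  · omega

lemma pigeon {F : Type*} [AddCommGroup F] [Finite F] [DecidableEq F]
    (X : Finset F) (hd : Nat.card F < 2 * X.card) (g : F) :
    ∃ x ∈ X, ∃ y ∈ X, x + y = g := by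
  have := Fintype.ofFinite F
  by_contra hcon
  push Not at hcon
  have hdis : Disjoint X (X.image (fun z => g - z)) := by
    rw [Finset.disjoint_left]
    intro x hx hx'
    obtain ⟨z, hz, rfl⟩ := Finset.mem_image.1 hx'
    exact hcon _ hx z hz (by abel)
  have h := Finset.card_le_univ (X ∪ X.image (fun z => g - z))
  rw [Finset.card_union_of_disjoint hdis,
    Finset.card_image_of_injective X (f := fun z => g - z) sub_right_injective,
    ← Nat.card_eq_fintype_card] at h
  omega

/-- Let `A ⊆ (ℤ/5ℤ)ⁿ` with `|A| > 0.3·5ⁿ` and `3A ≠ G`. If `A` has density larger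
than `0.5` in some coset of an index-5 subgroup `F`, then `A` meets at most three
cosets of `F`. -/
theorem stmt4 (n : ℕ) (hn : 1 ≤ n) (A : Set (Fin n → ZMod 5))
    (hA : (A.ncard : ℝ) > 0.3 * 5 ^ n)
    (h3A : itSum 3 A ≠ Set.univ)
    (F : AddSubgroup (Fin n → ZMod 5)) (hF : F.index = 5)
    (hdens : ∃ c : Fin n → ZMod 5,
      ((A ∩ (c +ᵥ (F : Set (Fin n → ZMod 5)))).ncard : ℝ) > 0.5 * Nat.card F) :
    (QuotientAddGroup.mk '' A : Set ((Fin n → ZMod 5) ⧸ F)).ncard ≤ 3 := by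
  classical
  by_contra hcon
  push Not at hcon
  obtain ⟨g, hg⟩ := (Set.ne_univ_iff_exists_notMem _).1 h3A
  have hg3 : ∀ x ∈ A, ∀ y ∈ A, ∀ z ∈ A, x + y + z ≠ g := by
    intro x hx y hy z hz h
    apply hg
    refine Set.mem_add.2 ⟨x + y, Set.mem_add.2 ⟨x, Set.mem_add.2 ⟨0, rfl, x, hx, zero_add x⟩,
      y, hy, rfl⟩, z, hz, h⟩
  obtain ⟨c, hc⟩ := hdens
  have hQ : Nat.card ((Fin n → ZMod 5) ⧸ F) = 5 := hF
  have hcardG : Nat.card (Fin n → ZMod 5) = 5 ^ n := by simp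
  have hcardF : Nat.card F * 5 = 5 ^ n := by
    have := F.card_mul_index
    rwa [hF, hcardG] at this
  obtain ⟨m, rfl⟩ : ∃ m, n = m + 1 := ⟨n - 1, by omega⟩
  have hm : Nat.card F = 5 ^ m := by
    rw [pow_succ] at hcardF; omega
  -- slices
  let T : (Fin (m+1) → ZMod 5) → Finset F := fun a =>
    (Set.toFinite {f : F | a + (f : Fin (m+1) → ZMod 5) ∈ A}).toFinset
  have hT : ∀ a f, f ∈ T a ↔ a + (f : Fin (m+1) → ZMod 5) ∈ A := by
    intro a f; simp [T]
  have hTc : ∀ a, (T a).card = (A ∩ (a +ᵥ (F : Set (Fin (m+1) → ZMod 5)))).ncard := by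
    intro a
    rw [← Set.ncard_coe_finset,
      ← Set.ncard_image_of_injective (T a : Set F) (f := fun f : F => a + (f : Fin (m+1) → ZMod 5))
        (fun x y h => Subtype.ext (add_left_cancel h))]
    congr 1
    ext x
    constructor
    · rintro ⟨f, hf, rfl⟩
      exact ⟨(hT _ _).1 hf, Set.mem_vadd_set.2 ⟨f, f.2, rfl⟩⟩
    · rintro ⟨hx, hx'⟩
      obtain ⟨f, hf, rfl⟩ := Set.mem_vadd_set.1 hx'
      exact ⟨⟨f, hf⟩, (hT _ _).2 hx, rfl⟩
  have hdc : Nat.card F < 2 * (T c).card := by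
    rw [← hTc] at hc
    have : (Nat.card F : ℝ) < 2 * (T c).card := by linarith
    exact_mod_cast this
  -- the class g - 2c is not met
  let φ := QuotientAddGroup.mk' F
  have hφ : ∀ x y, φ x = φ y ↔ -x + y ∈ F := fun x y => QuotientAddGroup.eq
  have hmiss : ∀ a ∈ A, φ a ≠ φ (g - c - c) := by
    intro a ha h
    rw [hφ] at h
    obtain ⟨x, hx, y, hy, hxy⟩ := pigeon (T c) hdc ⟨_, h⟩
    have hxy' := congrArg Subtype.val hxy
    simp only [AddSubgroup.coe_add] at hxy'
    apply hg3 _ ((hT _ _).1 hx) _ ((hT _ _).1 hy) a ha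
    have : c + (x : Fin (m+1) → ZMod 5) + (c + y) + a = (x + y) + c + c + a := by abel
    rw [this, hxy']; abel
  -- direction
  let e : Fin (m+1) → ZMod 5 := c - (g - c - c)
  have h5 : (5 : ℕ) • e = 0 := by
    ext i
    simp only [Pi.smul_apply, Pi.zero_apply, nsmul_eq_mul]
    have : ((5 : ℕ) : ZMod 5) = 0 := by decide
    rw [this, zero_mul]
  have hTcne : (T c).Nonempty := Finset.card_pos.1 (by omega)
  have heF : e ∉ F := by
    intro h
    obtain ⟨f, hf⟩ := hTcne
    apply hmiss _ ((hT _ _).1 hf)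
    rw [hφ]
    have : -(c + (f : Fin (m+1) → ZMod 5)) + (g - c - c) = -(f + e) := by
      simp only [e]; abel
    rw [this]
    exact F.neg_mem (F.add_mem f.2 h)
  have hcov : ∀ q : (Fin (m+1) → ZMod 5) ⧸ F, ∃ i : Fin 5, q = φ (c + (i : ℕ) • e) := by
    have hord : addOrderOf (φ e) = 5 := by
      have : Fact (Nat.Prime 5) := ⟨by norm_num⟩
      apply addOrderOf_eq_prime
      · rw [← map_nsmul, h5, map_zero]
      · intro h
        exact heF ((QuotientAddGroup.eq_zero_iff e).1 h)
    have hinj : Function.Injective (fun i : Fin 5 => φ (c + (i : ℕ) • e)) := by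
      intro i j hij
      simp only [map_add, map_nsmul] at hij
      have := nsmul_injOn_Iio_addOrderOf (x := φ e) (by simp [hord]) (by simp [hord])
        (add_left_cancel hij)
      exact Fin.ext this
    have hbij := (Nat.bijective_iff_injective_and_card _).2 ⟨hinj, by rw [hQ]; simp⟩
    intro q
    obtain ⟨i, hi⟩ := hbij.2 q
    exact ⟨i, hi.symm⟩
  have h4 : φ (c + (4 : ℕ) • e) = φ (g - c - c) := by
    have : c + (4 : ℕ) • e = (g - c - c) + (5 : ℕ) • e := by
      simp only [e]; abel
    rw [this, h5, add_zero]
  have hcovA : ∀ a ∈ A, ∃ i : ℕ, i < 4 ∧ a ∈ (c + i • e) +ᵥ (F : Set (Fin (m+1) → ZMod 5)) := by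
    intro a ha
    obtain ⟨i, hi⟩ := hcov (φ a)
    refine ⟨i, ?_, ?_⟩
    · by_contra hlt
      have h4' : (i : ℕ) = 4 := by omega
      rw [h4', h4] at hi
      exact hmiss a ha hi
    · rw [eq_comm, hφ] at hi
      exact Set.mem_vadd_set.2 ⟨_, hi, by rw [vadd_eq_add, add_neg_cancel_left]⟩
  have hne : ∀ i : ℕ, i < 4 → (T (c + i • e)).Nonempty := by
    intro i hi
    by_contra hemp
    have hsub : (QuotientAddGroup.mk '' A : Set ((Fin (m+1) → ZMod 5) ⧸ F)) ⊆
        (((Finset.range 4).erase i).image (fun j : ℕ => φ (c + j • e)) : Finset _) := by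
      rintro _ ⟨a, ha, rfl⟩
      obtain ⟨j, hj, hja⟩ := hcovA a ha
      obtain ⟨f, hf, hfa⟩ := Set.mem_vadd_set.1 hja
      rw [Finset.mem_coe, Finset.mem_image]
      refine ⟨j, ?_, ?_⟩
      · rw [Finset.mem_erase, Finset.mem_range]
        refine ⟨?_, hj⟩
        rintro rfl
        apply hemp
        refine ⟨⟨f, hf⟩, (hT _ _).2 ?_⟩
        rw [vadd_eq_add] at hfa
        rwa [← hfa] at ha
      · change φ _ = φ a
        rw [hφ, ← hfa, vadd_eq_add, neg_add_cancel_left]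
        exact hf
    have hle := Set.ncard_le_ncard hsub (Finset.finite_toSet _)
    rw [Set.ncard_coe_finset] at hle
    have hle2 := Finset.card_image_le (s := (Finset.range 4).erase i)
      (f := fun j : ℕ => φ (c + j • e))
    rw [Finset.card_erase_of_mem (Finset.mem_range.2 hi), Finset.card_range] at hle2
    omega
  have hgc : g = c + c + c + (4 : ℕ) • e := by
    have : c + c + c + (4 : ℕ) • e = g + (5 : ℕ) • e := by
      simp only [e]; abel
    rw [this, h5, add_zero]
  have hp1 := P1 m hm (T (c + 0 • e)) (T (c + 1 • e)) (T (c + 3 • e)) (hne 0 (by omega))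
    (hne 1 (by omega)) (hne 3 (by omega)) 0 (by
      intro x hx y hy z hz h
      have h' := congrArg Subtype.val h
      simp only [AddSubgroup.coe_add, AddSubgroup.coe_zero] at h'
      apply hg3 _ ((hT _ _).1 hx) _ ((hT _ _).1 hy) _ ((hT _ _).1 hz)
      rw [hgc]
      rw [← add_zero (c + c + c + 4 • e), ← h']
      abel)
  have hp2 := P2 m hm (T (c + 0 • e)) (T (c + 2 • e)) (hne 0 (by omega))
    (hne 2 (by omega)) 0 (by simpa using hdc) (by
      intro x hx y hy z hz h
      have h' := congrArg Subtype.val h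
      simp only [AddSubgroup.coe_add, AddSubgroup.coe_zero] at h'
      apply hg3 _ ((hT _ _).1 hx) _ ((hT _ _).1 hy) _ ((hT _ _).1 hz)
      rw [hgc]
      rw [← add_zero (c + c + c + 4 • e), ← h']
      abel)
  have hsum : A.ncard ≤ (T (c + 0 • e)).card + (T (c + 1 • e)).card + (T (c + 2 • e)).card
      + (T (c + 3 • e)).card := by
    simp only [hTc]
    have hsub : A ⊆ (A ∩ ((c + 0 • e) +ᵥ (F : Set (Fin (m+1) → ZMod 5)))) ∪
        (A ∩ ((c + 1 • e) +ᵥ (F : Set (Fin (m+1) → ZMod 5)))) ∪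
        (A ∩ ((c + 2 • e) +ᵥ (F : Set (Fin (m+1) → ZMod 5)))) ∪
        (A ∩ ((c + 3 • e) +ᵥ (F : Set (Fin (m+1) → ZMod 5)))) := by
      intro a ha
      obtain ⟨i, hi, hia⟩ := hcovA a ha
      interval_cases i
      · exact Or.inl (Or.inl (Or.inl ⟨ha, hia⟩))
      · exact Or.inl (Or.inl (Or.inr ⟨ha, hia⟩))
      · exact Or.inl (Or.inr ⟨ha, hia⟩)
      · exact Or.inr ⟨ha, hia⟩
    refine (Set.ncard_le_ncard hsub (Set.toFinite _)).trans ?_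
    refine (Set.ncard_union_le _ _).trans (Nat.add_le_add_right ?_ _)
    refine (Set.ncard_union_le _ _).trans (Nat.add_le_add_right ?_ _)
    exact Set.ncard_union_le _ _
  have hAn : 3 * Nat.card F < 2 * A.ncard := by
    have h1 : (Nat.card F : ℝ) * 5 = 5 ^ (m+1) := by exact_mod_cast hcardF
    have : (3 : ℝ) * Nat.card F < 2 * A.ncard := by linarith
    exact_mod_cast this
  omega
end

section
/- Let n ≥ 1 be an integer and let A, B, C be subsets of G = (ℤ/5ℤ)^n with densities α = 5^(-n)|A|, β = 5^(-n)|B|, γ = 5^(-n)|C|. If 0.4 < α < 0.5, 0.4 < β < 0.5, and α + β + 3γ > 1.5, then A + B + C = G. -/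
open Pointwise

set_option linter.unusedSectionVars false

section Kneser
variable {G : Type*} [AddCommGroup G] [Fintype G] [DecidableEq G]

/-- `C` is a union of cosets of `H`. -/
def KInv (H : AddSubgroup G) (C : Finset G) : Prop := ∀ h ∈ H, ∀ c ∈ C, h + c ∈ C

open Classical in
/-- trace of `C - c` on `H` -/
noncomputable def KW (H : AddSubgroup G) (C : Finset G) (c : G) : Finset G :=
  Finset.univ.filter (fun x => x ∈ H ∧ c + x ∈ C)

lemma KInv.compl {H : AddSubgroup G} {C : Finset G} (h : KInv H C) : KInv H Cᶜ := by
  intro x hx c hc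
  rw [Finset.mem_compl] at hc ⊢
  intro h1
  apply hc
  have := h (-x) (H.neg_mem hx) _ h1
  simpa using this

lemma KInv.mono {H K : AddSubgroup G} {C : Finset G} (h : KInv H C) (hk : K ≤ H) : KInv K C :=
  fun x hx c hc => h x (hk hx) c hc

lemma mem_KW {H : AddSubgroup G} {C : Finset G} {c x : G} :
    x ∈ KW H C c ↔ x ∈ H ∧ c + x ∈ C := by
  simp [KW]

lemma card_sub_eq (H : AddSubgroup G) : ∃ F : Finset G, F.card = Nat.card H ∧ ∀ x, x ∈ F ↔ x ∈ H := by
  classical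
  refine ⟨Finset.univ.filter (fun x => x ∈ H), ?_, by simp⟩
  rw [Nat.card_eq_fintype_card, Fintype.card_subtype]

lemma KW_ge {H K : AddSubgroup G} {C : Finset G} {c : G} (hC : KInv K C) (hK : K ≤ H)
    (hne : (KW H C c).Nonempty) : Nat.card K ≤ (KW H C c).card := by
  obtain ⟨x, hx⟩ := hne
  obtain ⟨F, hF, hm⟩ := card_sub_eq K
  rw [← hF]
  apply Finset.card_le_card_of_injOn (fun y => y + x)
  · intro y hy
    have hy' : y ∈ K := (hm y).1 hy
    rw [mem_KW] at hx
    refine Finset.mem_coe.2 (mem_KW.2 ⟨H.add_mem (hK hy') hx.1, ?_⟩)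
    have := hC y hy' _ hx.2
    rwa [add_left_comm] at this
  · intro a _ b _ h
    simpa using h

lemma KW_compl (H : AddSubgroup G) (C : Finset G) (c : G) :
    (KW H C c).card + (KW H Cᶜ c).card = Nat.card H := by
  classical
  obtain ⟨F, hF, hm⟩ := card_sub_eq H
  have h1 : KW H C c = F.filter (fun x => c + x ∈ C) := by
    ext x; simp [mem_KW, hm]
  have h2 : KW H Cᶜ c = F.filter (fun x => ¬ c + x ∈ C) := by
    ext x; simp [mem_KW, hm]
  rw [h1, h2, ← hF, Finset.card_filter_add_card_filter_not]

lemma grid (H1 H2 : AddSubgroup G) (D1 D2 : Finset G) (c : G) (h1 : KInv H1 D1)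
    (h2 : KInv H2 D2) :
    (KW H1 D2 c).card * (KW H2 D1 c).card ≤ (D1 ∩ D2).card * Nat.card (H1 ⊓ H2 : AddSubgroup G) := by
  obtain ⟨F, hF, hm⟩ := card_sub_eq (H1 ⊓ H2)
  rw [← Finset.card_product, mul_comm]
  apply Finset.card_le_mul_card_image_of_maps_to (f := fun p : G × G => c + p.1 + p.2)
  · rintro ⟨x, y⟩ hxy
    simp only [Finset.mem_product, mem_KW, Finset.mem_inter] at hxy ⊢
    obtain ⟨⟨hx, hcx⟩, hy, hcy⟩ := hxy
    constructor
    · have := h1 x hx _ hcy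
      rwa [show x + (c + y) = c + x + y by abel] at this
    · have := h2 y hy _ hcx
      rwa [show y + (c + x) = c + x + y by abel] at this
  · intro z _
    rcases Finset.eq_empty_or_nonempty
      ((KW H1 D2 c ×ˢ KW H2 D1 c).filter (fun p : G × G => c + p.1 + p.2 = z)) with he | ⟨⟨x0, y0⟩, h0⟩
    · rw [he]; simp
    rw [← hF]
    simp only [Finset.mem_filter, Finset.mem_product, mem_KW] at h0
    apply Finset.card_le_card_of_injOn (fun p : G × G => p.1 - x0)
    · rintro ⟨x, y⟩ hxy
      simp only [Finset.coe_filter, Set.mem_setOf_eq, Finset.mem_product, mem_KW] at hxy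
      have e : x - x0 = y0 - y := by
        have := hxy.2.trans h0.2.symm
        rw [add_assoc, add_assoc] at this
        have := add_left_cancel this
        rw [sub_eq_sub_iff_add_eq_add, this, add_comm]
      refine Finset.mem_coe.2 ((hm _).2 ⟨H1.sub_mem hxy.1.1.1 h0.1.1.1, ?_⟩)
      show x - x0 ∈ H2
      rw [e]
      exact H2.sub_mem h0.1.2.1 hxy.1.2.1
    · rintro ⟨x, y⟩ hxy ⟨x', y'⟩ hxy' h
      simp only [Finset.coe_filter, Set.mem_setOf_eq] at hxy hxy'
      have hx : x = x' := by simpa using h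
      subst hx
      have := hxy.2.trans hxy'.2.symm
      simpa using this

lemma arith_half {p q u1 u2 m1 m2 X Y h : ℕ} (hh : 0 < h) (hp : h ≤ p) (hu1 : h ≤ u1)
    (hu2 : u2 = 0 ∨ h ≤ u2) (e1 : u2 + p = m1) (e2 : u1 + q = m2)
    (a1 : p * u1 ≤ X * h) (a2 : u2 * q ≤ Y * h) (b1 : X + h < m2) (b2 : Y + h < m1) :
    m1 < m2 := by
  rcases hu2 with h0 | h2
  · subst h0
    have : p * u1 ≤ X * u1 := a1.trans (Nat.mul_le_mul_left _ hu1)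
    have := Nat.le_of_mul_le_mul_right this (by omega)
    omega
  · exfalso
    subst e1 e2
    obtain ⟨p, rfl⟩ := Nat.exists_eq_add_of_le hp
    obtain ⟨v1, rfl⟩ := Nat.exists_eq_add_of_le hu1
    obtain ⟨v2, rfl⟩ := Nat.exists_eq_add_of_le h2
    have c1 : (X + h + 1) * h ≤ (h + v1 + q) * h := Nat.mul_le_mul_right _ b1
    have c2 : (Y + h + 1) * h ≤ (h + v2 + (h + p)) * h := Nat.mul_le_mul_right _ b2
    have hq : h + p < q := by
      have : (h + p) * h < q * h := by nlinarith [Nat.zero_le (p * v1)]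
      exact Nat.lt_of_mul_lt_mul_right this
    obtain ⟨r, rfl⟩ := Nat.exists_eq_add_of_lt hq
    have : r * h + p * h + h + h * h < p * h + h * h := by
      nlinarith [Nat.zero_le (v2 * (p + r)), Nat.zero_le v2]
    nlinarith [Nat.zero_le (r * h)]

lemma half_s5 {H1 H2 : AddSubgroup G} {C1 C2 : Finset G} (h1 : KInv H1 C1) (h2 : KInv H2 C2) {c : G}
    (hc1 : c ∈ C1) (hc2 : c ∉ C2)
    (b1 : (C1 ∩ C2ᶜ).card + Nat.card (H1 ⊓ H2 : AddSubgroup G) < Nat.card H2)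
    (b2 : (C1ᶜ ∩ C2).card + Nat.card (H1 ⊓ H2 : AddSubgroup G) < Nat.card H1) :
    Nat.card H1 < Nat.card H2 := by
  refine arith_half (p := (KW H1 C2ᶜ c).card) (u1 := (KW H2 C1 c).card)
    (u2 := (KW H1 C2 c).card) (q := (KW H2 C1ᶜ c).card) Nat.card_pos
    (KW_ge (h2.compl.mono inf_le_right) inf_le_left ⟨0, mem_KW.2 ⟨H1.zero_mem, by simpa using hc2⟩⟩)
    (KW_ge (h1.mono inf_le_left) inf_le_right ⟨0, mem_KW.2 ⟨H2.zero_mem, by simpa using hc1⟩⟩)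
    ?_ (KW_compl _ _ _) (KW_compl _ _ _) (grid H1 H2 C1 C2ᶜ c h1 h2.compl)
    (grid H1 H2 C1ᶜ C2 c h1.compl h2) b1 b2
  rcases Finset.eq_empty_or_nonempty (KW H1 C2 c) with he | hne
  · left; simp [he]
  · right; exact KW_ge (h2.mono inf_le_right) inf_le_left hne

lemma union2 {H1 H2 : AddSubgroup G} {C1 C2 : Finset G} (h1 : KInv H1 C1) (h2 : KInv H2 C2)
    (k : ℕ) (k1 : k ≤ C1.card + Nat.card H1) (k2 : k ≤ C2.card + Nat.card H2) :
    ∃ H : AddSubgroup G, KInv H (C1 ∪ C2) ∧ k ≤ (C1 ∪ C2).card + Nat.card H := by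
  by_cases s1 : C1 ⊆ C2
  · exact ⟨H2, by rwa [Finset.union_eq_right.2 s1], by rwa [Finset.union_eq_right.2 s1]⟩
  by_cases s2 : C2 ⊆ C1
  · exact ⟨H1, by rwa [Finset.union_eq_left.2 s2], by rwa [Finset.union_eq_left.2 s2]⟩
  obtain ⟨c, hc1, hc2⟩ := Finset.not_subset.1 s1
  obtain ⟨d, hd2, hd1⟩ := Finset.not_subset.1 s2
  refine ⟨H1 ⊓ H2, ?_, ?_⟩
  · intro x hx y hy
    rcases Finset.mem_union.1 hy with hy | hy
    · exact Finset.mem_union_left _ (h1 x hx.1 y hy)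
    · exact Finset.mem_union_right _ (h2 x hx.2 y hy)
  · by_contra hlt
    push Not at hlt
    have e1 : (C1 ∪ C2).card = C2.card + (C1 ∩ C2ᶜ).card := by
      rw [← Finset.sdiff_eq_inter_compl, ← Finset.card_sdiff_add_card C1 C2, add_comm]
    have e2 : (C1 ∪ C2).card = C1.card + (C1ᶜ ∩ C2).card := by
      rw [Finset.inter_comm, ← Finset.sdiff_eq_inter_compl, Finset.union_comm,
        ← Finset.card_sdiff_add_card C2 C1, add_comm]
    have b1 : (C1 ∩ C2ᶜ).card + Nat.card (H1 ⊓ H2 : AddSubgroup G) < Nat.card H2 := by omega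
    have b2 : (C1ᶜ ∩ C2).card + Nat.card (H1 ⊓ H2 : AddSubgroup G) < Nat.card H1 := by omega
    have l1 := half_s5 h1 h2 hc1 hc2 b1 b2
    have l2 := half_s5 h2 h1 hd2 hd1 (by rwa [Finset.inter_comm, inf_comm])
      (by rwa [Finset.inter_comm, inf_comm])
    omega

lemma union_all (C : Finset G) (hC : C.Nonempty) (k : ℕ)
    (h : ∀ c ∈ C, ∃ D ⊆ C, c ∈ D ∧ ∃ H : AddSubgroup G, KInv H D ∧ k ≤ D.card + Nat.card H) :
    ∃ H : AddSubgroup G, KInv H C ∧ k ≤ C.card + Nat.card H := by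
  classical
  let S := C.powerset.filter
    (fun D => ∃ H : AddSubgroup G, KInv H D ∧ k ≤ D.card + Nat.card H)
  have hS : S.Nonempty := by
    obtain ⟨c, hc⟩ := hC
    obtain ⟨D, hD, _, hH⟩ := h c hc
    exact ⟨D, by simp only [S, Finset.mem_filter, Finset.mem_powerset]; exact ⟨hD, hH⟩⟩
  obtain ⟨D, hDS, hmax⟩ := Finset.exists_max_image S Finset.card hS
  simp only [S, Finset.mem_filter, Finset.mem_powerset] at hDS hmax
  obtain ⟨hDC, H, hH, hk⟩ := hDS
  by_cases e : C ⊆ D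
  · rw [Finset.Subset.antisymm e hDC]; exact ⟨H, hH, hk⟩
  exfalso
  obtain ⟨c, hc, hcD⟩ := Finset.not_subset.1 e
  obtain ⟨E, hE, hcE, K, hK, hkE⟩ := h c hc
  have := hmax (D ∪ E) ⟨Finset.union_subset hDC hE, union2 hH hK k hk hkE⟩
  have h2 : D.card < (D ∪ E).card := by
    apply Finset.card_lt_card
    refine ⟨Finset.subset_union_left, fun hs => hcD (hs (Finset.mem_union_right _ hcE))⟩
  omega

lemma dyson_s5 (N : ℕ) : ∀ A B : Finset G, B.card ≤ N → ∀ a ∈ A, ∀ b ∈ B,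
    ∃ D ⊆ A + B, a + b ∈ D ∧ ∃ H : AddSubgroup G, KInv H D ∧
      A.card + B.card ≤ D.card + Nat.card H := by
  induction N with
  | zero =>
    intro A B hB a _ b hb
    have : B = ∅ := by simpa using hB
    simp [this] at hb
  | succ N ih =>
    intro A B hB a0 ha0 b0 hb0
    by_cases hall : ∀ a ∈ A, ∀ b ∈ B, a - b0 + b ∈ A
    · let K : AddSubgroup G := AddSubgroup.closure {x | ∃ b ∈ B, x = b - b0}
      have hKA : ∀ x ∈ K, ∀ a ∈ A, x + a ∈ A := by
        intro x hx
        induction hx using AddSubgroup.closure_induction with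
        | mem x hx =>
          obtain ⟨b, hb, rfl⟩ := hx
          intro a ha
          have := hall a ha b hb
          rwa [show b - b0 + a = a - b0 + b by abel]
        | zero => simp
        | add x y _ _ hx hy =>
          intro a ha
          rw [add_assoc]
          exact hx _ (hy _ ha)
        | neg x _ hx =>
          have hinj : Set.InjOn (fun a => x + a) (A : Set G) := fun a _ b _ h => by simpa using h
          have hsurj := Finset.surjOn_of_injOn_of_card_le (s := A) (t := A) (fun a => x + a)
            (fun a ha => hx a ha) hinj le_rfl
          intro a ha
          obtain ⟨a', ha', h'⟩ := hsurj (Finset.mem_coe.2 ha)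
          have h' : x + a' = a := h'
          rw [← h']
          simpa using ha'
      refine ⟨A + {b0}, Finset.add_subset_add_left (by simpa using hb0),
        Finset.add_mem_add ha0 (by simp), K, ?_, ?_⟩
      · intro h hh c hc
        obtain ⟨a, ha, b, hb, rfl⟩ := Finset.mem_add.1 hc
        rw [← add_assoc]
        exact Finset.add_mem_add (hKA h hh a ha) hb
      · have e1 : (A + {b0}).card = A.card := by simp
        rw [e1]
        obtain ⟨F, hF, hm⟩ := card_sub_eq K
        rw [← hF]
        refine Nat.add_le_add_left ?_ _
        apply Finset.card_le_card_of_injOn (fun b => b - b0)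
        · intro b hb
          exact Finset.mem_coe.2 ((hm _).2 (AddSubgroup.subset_closure ⟨b, hb, rfl⟩))
        · intro x _ y _ h; simpa using h
    · push Not at hall
      obtain ⟨a, ha, b, hb, hab⟩ := hall
      let A' := (Finset.addDysonETransform (a - b0) (A, B)).1
      let B' := (Finset.addDysonETransform (a - b0) (A, B)).2
      have hA' : ∀ x, x ∈ A → x ∈ A' := by
        intro x hx; simp [A', Finset.addDysonETransform, hx]
      have hB'm : ∀ x, x ∈ B' ↔ x ∈ B ∧ (a - b0) + x ∈ A := by
        intro x
        simp only [B', Finset.addDysonETransform, Finset.mem_inter, Finset.mem_neg_vadd_finset_iff,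
          vadd_eq_add]
      have hb0' : b0 ∈ B' := (hB'm _).2 ⟨hb0, by simpa using ha⟩
      have hlt : B'.card < B.card := by
        apply Finset.card_lt_card
        refine ⟨fun x hx => ((hB'm x).1 hx).1, fun hs => hab ((hB'm b).1 (hs hb)).2⟩
      obtain ⟨D, hD, hm, H, hH, hk⟩ := ih A' B' (by omega) a0 (hA' _ ha0) b0 hb0'
      refine ⟨D, hD.trans (Finset.addDysonETransform.subset (a - b0) (A, B)), hm, H, hH, ?_⟩
      have := Finset.addDysonETransform.card (a - b0) (A, B)
      change A'.card + B'.card = A.card + B.card at this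
      omega

theorem kneser_weak_s5 (A B : Finset G) (hA : A.Nonempty) (hB : B.Nonempty) :
    ∃ H : AddSubgroup G, KInv H (A + B) ∧ A.card + B.card ≤ (A + B).card + Nat.card H := by
  apply union_all _ (hA.add hB)
  intro c hc
  obtain ⟨a, ha, b, hb, rfl⟩ := Finset.mem_add.1 hc
  exact dyson_s5 _ A B le_rfl a ha b hb

/-- full stabilizer -/
def KStab (S : Finset G) : AddSubgroup G where
  carrier := {h | ∀ c, h + c ∈ S ↔ c ∈ S}
  zero_mem' := by simp
  add_mem' := by
    intro a b ha hb c
    rw [add_assoc, ha, hb]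
  neg_mem' := by
    intro a ha c
    rw [← ha, add_neg_cancel_left]

lemma le_KStab {S : Finset G} {H : AddSubgroup G} (h : KInv H S) : H ≤ KStab S := by
  intro x hx c
  refine ⟨fun hc => ?_, h x hx c⟩
  have := h (-x) (H.neg_mem hx) _ hc
  simpa using this

lemma KInv_KStab (S : Finset G) : KInv (KStab S) S := fun x hx c hc => (hx c).2 hc

lemma KInv.dvd {H : AddSubgroup G} {S : Finset G} (h : KInv H S) : Nat.card H ∣ S.card := by
  have e : (H : Set G) + (S : Set G) = S := by
    ext x
    constructor
    · rintro ⟨a, ha, b, hb, rfl⟩; exact h a ha b hb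
    · intro hx; exact ⟨0, H.zero_mem, x, hx, zero_add x⟩
  have := AddSubgroup.card_add_eq_card_addSubgroup_add_card_quotient H (S : Set G)
  rw [add_comm, e] at this
  rw [show S.card = Nat.card (S : Set G) by simp, this]
  exact dvd_mul_right _ _

/-- Kneser's theorem for three sets. -/
theorem kneser3 (A B C : Finset G) (hA : A.Nonempty) (hB : B.Nonempty) (hC : C.Nonempty)
    (hne : A + B + C ≠ Finset.univ) :
    ∃ (K : AddSubgroup G) (N a b c : ℕ), Nat.card G = Nat.card K * N ∧ 2 ≤ N ∧
      A.card ≤ Nat.card K * a ∧ B.card ≤ Nat.card K * b ∧ C.card ≤ Nat.card K * c ∧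
      a + b + c ≤ N + 1 := by
  set S := A + B + C with hS
  let K := KStab S
  obtain ⟨F, hF, hm⟩ := card_sub_eq K
  have h0 : (0 : G) ∈ F := (hm 0).2 K.zero_mem
  have hinvF : KInv K F := fun x hx c hc => (hm _).2 (K.add_mem hx ((hm _).1 hc))
  have hFS : F + S = S := by
    ext x
    constructor
    · intro hx
      obtain ⟨f, hf, s, hs, rfl⟩ := Finset.mem_add.1 hx
      exact KInv_KStab S f ((hm f).1 hf) s hs
    · intro hx
      simpa using Finset.add_mem_add h0 hx
  have hFF : F + F = F := by
    ext x
    constructor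
    · intro hx
      obtain ⟨f, hf, s, hs, rfl⟩ := Finset.mem_add.1 hx
      exact hinvF f ((hm f).1 hf) s hs
    · intro hx
      simpa using Finset.add_mem_add h0 hx
  have hinv : ∀ X : Finset G, KInv K (F + X) := by
    intro X x hx c hc
    obtain ⟨f, hf, s, hs, rfl⟩ := Finset.mem_add.1 hc
    rw [← add_assoc]
    exact Finset.add_mem_add (hinvF x hx f hf) hs
  have hsub : ∀ X : Finset G, X.card ≤ (F + X).card := fun X =>
    Finset.card_le_card (Finset.subset_add_right X h0)
  have hFne : F.Nonempty := ⟨0, h0⟩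
  have hsum : (F + A) + (F + B) + (F + C) = S := by
    rw [show (F + A) + (F + B) + (F + C) = F + (F + (F + (A + B + C))) by abel, ← hS, hFS, hFS, hFS]
  obtain ⟨H1, i1, k1⟩ := kneser_weak_s5 (F + A) (F + B) (hFne.add hA) (hFne.add hB)
  obtain ⟨H2, i2, k2⟩ := kneser_weak_s5 ((F + A) + (F + B)) (F + C)
    ((hFne.add hA).add (hFne.add hB)) (hFne.add hC)
  have i1' : KInv H1 S := by
    rw [← hsum]
    intro x hx c hc
    obtain ⟨f, hf, s, hs, rfl⟩ := Finset.mem_add.1 hc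
    rw [← add_assoc x f s]
    exact Finset.add_mem_add (i1 x hx f hf) hs
  rw [hsum] at i2 k2
  have c1 : Nat.card H1 ≤ Nat.card K := AddSubgroup.card_le_of_le (le_KStab i1')
  have c2 : Nat.card H2 ≤ Nat.card K := AddSubgroup.card_le_of_le (le_KStab i2)
  obtain ⟨a, ea⟩ := (hinv A).dvd
  obtain ⟨b, eb⟩ := (hinv B).dvd
  obtain ⟨c, ec⟩ := (hinv C).dvd
  obtain ⟨s, es⟩ := (KInv_KStab S).dvd
  obtain ⟨N, eN⟩ := AddSubgroup.card_addSubgroup_dvd_card K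
  have hKpos : 0 < Nat.card K := Nat.card_pos
  have hsN : s < N := by
    have : S.card < Nat.card G := by
      rw [Nat.card_eq_fintype_card]
      exact (Finset.card_lt_iff_ne_univ S).2 hne
    rw [es, eN] at this
    exact Nat.lt_of_mul_lt_mul_left this
  have hspos : 0 < s := by
    have : 0 < S.card := ((hA.add hB).add hC).card_pos
    rw [es] at this
    exact Nat.pos_of_mul_pos_left this
  refine ⟨K, N, a, b, c, eN, by omega, ea ▸ hsub A, eb ▸ hsub B, ec ▸ hsub C, ?_⟩
  have : Nat.card K * (a + b + c) ≤ Nat.card K * (s + 2) := by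
    change S.card = Nat.card K * s at es
    rw [mul_add, mul_add, mul_add, ← ea, ← eb, ← ec, ← es]
    omega
  have := Nat.le_of_mul_le_mul_left this hKpos
  omega

end Kneser

/-- If `A, B, C ⊆ (ℤ/5ℤ)ⁿ` have densities `α, β, γ` with `0.4 < α < 0.5`,
`0.4 < β < 0.5` and `α + β + 3γ > 1.5`, then `A + B + C = G`. -/
theorem stmt5 (n : ℕ) (hn : 1 ≤ n) (A B C : Set (Fin n → ZMod 5))
    (hα₁ : (0.4 : ℝ) < (A.ncard : ℝ) / 5 ^ n) (hα₂ : (A.ncard : ℝ) / 5 ^ n < 0.5)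
    (hβ₁ : (0.4 : ℝ) < (B.ncard : ℝ) / 5 ^ n) (hβ₂ : (B.ncard : ℝ) / 5 ^ n < 0.5)
    (hsum : (A.ncard : ℝ) / 5 ^ n + (B.ncard : ℝ) / 5 ^ n
        + 3 * ((C.ncard : ℝ) / 5 ^ n) > 1.5) :
    A + B + C = Set.univ := by
  classical
  have hpos : (0 : ℝ) < 5 ^ n := by positivity
  have r1 : 2 * 5 ^ n < 5 * A.ncard := by
    rw [lt_div_iff₀ hpos] at hα₁
    have : (2 * 5 ^ n : ℝ) < 5 * A.ncard := by linarith
    exact_mod_cast this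
  have r2 : 2 * 5 ^ n < 5 * B.ncard := by
    rw [lt_div_iff₀ hpos] at hβ₁
    have : (2 * 5 ^ n : ℝ) < 5 * B.ncard := by linarith
    exact_mod_cast this
  have r3 : 3 * 5 ^ n < 2 * (A.ncard + B.ncard + 3 * C.ncard) := by
    have e : (A.ncard : ℝ) / 5 ^ n + (B.ncard : ℝ) / 5 ^ n + 3 * ((C.ncard : ℝ) / 5 ^ n)
      = (A.ncard + B.ncard + 3 * C.ncard) / 5 ^ n := by ring
    rw [e, gt_iff_lt, lt_div_iff₀ hpos] at hsum
    have : (3 * 5 ^ n : ℝ) < 2 * (A.ncard + B.ncard + 3 * C.ncard) := by linarith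
    exact_mod_cast this
  have r4 : 0 < C.ncard := by
    rw [Nat.pos_iff_ne_zero]
    intro h
    rw [h] at hsum
    norm_num at hsum hα₂ hβ₂
    linarith
  clear hα₁ hα₂ hβ₁ hβ₂ hsum
  obtain ⟨A, rfl⟩ : ∃ A' : Finset (Fin n → ZMod 5), A = A' := ⟨A.toFinset, by simp⟩
  obtain ⟨B, rfl⟩ : ∃ A' : Finset (Fin n → ZMod 5), B = A' := ⟨B.toFinset, by simp⟩
  obtain ⟨C, rfl⟩ : ∃ A' : Finset (Fin n → ZMod 5), C = A' := ⟨C.toFinset, by simp⟩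
  simp only [Set.ncard_coe_finset] at r1 r2 r3 r4
  rw [← Finset.coe_add, ← Finset.coe_add, Finset.coe_eq_univ]
  by_contra hne
  obtain ⟨K, N, a, b, c, eN, hN, ha, hb, hc, habc⟩ := kneser3 A B C
    (Finset.card_pos.1 (by omega)) (Finset.card_pos.1 (by omega)) (Finset.card_pos.1 r4) hne
  have hG : Nat.card (Fin n → ZMod 5) = 5 ^ n := by simp
  rw [hG] at eN
  have hK : 0 < Nat.card K := Nat.card_pos
  obtain ⟨m, hm, rfl⟩ := (Nat.dvd_prime_pow (by norm_num : Nat.Prime 5)).1 (Dvd.intro_left _ eN.symm)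
  have q1 : 2 * 5 ^ m < 5 * a := by
    apply Nat.lt_of_mul_lt_mul_left (a := Nat.card K)
    linarith
  have q2 : 2 * 5 ^ m < 5 * b := by
    apply Nat.lt_of_mul_lt_mul_left (a := Nat.card K)
    linarith
  have q3 : 3 * 5 ^ m < 2 * (a + b + 3 * c) := by
    apply Nat.lt_of_mul_lt_mul_left (a := Nat.card K)
    linarith
  have q4 : 0 < c := by
    rw [Nat.pos_iff_ne_zero]
    rintro rfl
    omega
  match m, hN, q1, q2, q3, habc with
  | 0, hN, _, _, _, _ => norm_num at hN
  | 1, _, q1, q2, q3, habc => omega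
  | 2, _, q1, q2, q3, habc => omega
  | m + 3, _, q1, q2, q3, habc =>
    have : 5 ^ (m + 3) = 125 * 5 ^ m := by ring
    have h1 : 0 < 5 ^ m := by positivity
    omega
end

section
/- Let n ≥ 1 be an integer and let A be a subset of G = (ℤ/5ℤ)^n with |A| > 0.3·5^n and 3A ≠ G. If F is a subgroup of G of index 5 such that |A ∩ (c + F)| < 0.5·|F| for every coset c + F of F, then there is at most one coset c + F of F with |A ∩ (c + F)| > 0.4·|F|. -/
open Pointwise

/-- stabilizer of a set -/
def stabS {G : Type*} [AddCommGroup G] (S : Set G) : AddSubgroup G where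
  carrier := {h | ∀ x, x + h ∈ S ↔ x ∈ S}
  zero_mem' := by intro x; simp
  add_mem' := by
    intro a b ha hb x
    rw [← add_assoc]
    exact (hb _).trans (ha x)
  neg_mem' := by
    intro a ha x
    have := ha (x + -a)
    simpa using this.symm

lemma mem_stabS {G : Type*} [AddCommGroup G] [Finite G] {S : Set G} {h : G}
    (hh : ∀ x ∈ S, x + h ∈ S) : h ∈ stabS S := by
  have h1 : (fun x => x + h) '' S ⊆ S := by
    rintro _ ⟨x, hx, rfl⟩
    exact hh x hx
  have h2 : (fun x => x + h) '' S = S := by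
    apply Set.eq_of_subset_of_ncard_le h1 _ (Set.toFinite _)
    rw [Set.ncard_image_of_injective _ (add_left_injective h)]
  intro x
  constructor
  · intro hx
    rw [← h2] at hx
    obtain ⟨y, hy, hxy⟩ := hx
    have : y = x := by simpa using hxy
    exact this ▸ hy
  · exact hh x

lemma etr {G : Type*} [AddCommGroup G] [Finite G] (k : ℕ) :
    ∀ (A B : Set G) (_ : B.ncard = k) (a b : G) (_ : a ∈ A) (_ : b ∈ B),
    ∃ (C : Set G) (H : AddSubgroup G), a + b ∈ C ∧ C ⊆ A + B ∧
      (∀ x ∈ C, ∀ h ∈ H, x + h ∈ C) ∧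
      A.ncard + B.ncard ≤ C.ncard + (H : Set G).ncard := by
  induction k using Nat.strong_induction_on with
  | _ k ih =>
  intro A B hk a b ha hb
  by_cases hc : ∀ e ∈ A, ∀ y ∈ B, y - b + e ∈ A
  · refine ⟨(fun x => x + b) '' A, stabS A, ⟨a, ha, rfl⟩, ?_, ?_, ?_⟩
    · rintro _ ⟨x, hx, rfl⟩
      exact Set.add_mem_add hx hb
    · rintro _ ⟨x, hx, rfl⟩ h hh
      refine ⟨x + h, (hh x).2 hx, ?_⟩
      simp only; abel
    · rw [Set.ncard_image_of_injective _ (add_left_injective b)]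
      have : (fun y => y - b) '' B ⊆ (stabS A : Set G) := by
        rintro _ ⟨y, hy, rfl⟩
        apply mem_stabS
        intro x hx
        rw [add_comm]
        exact hc x hx y hy
      have h2 := Set.ncard_le_ncard this (Set.toFinite _)
      rw [Set.ncard_image_of_injective _ (sub_left_injective)] at h2
      omega
  · push Not at hc
    obtain ⟨e, he, y, hy, hye⟩ := hc
    let f : G → G := fun y => y - b + e
    have hf : Function.Injective f := by
      intro u v huv
      simpa [f] using huv
    let B' : Set G := {y ∈ B | f y ∈ A}
    have hB' : B'.ncard < B.ncard := by
      apply Set.ncard_lt_ncard _ (Set.toFinite _)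
      refine ⟨fun z hz => hz.1, fun hz => hye (hz hy).2⟩
    obtain ⟨C, H, h1, h2, h3, h4⟩ := ih B'.ncard (hk ▸ hB') (A ∪ f '' B) B' rfl a b (Or.inl ha)
      ⟨hb, by simpa [f] using he⟩
    refine ⟨C, H, h1, ?_, h3, ?_⟩
    · refine h2.trans ?_
      rintro _ ⟨x, hx, z, hz, rfl⟩
      rcases hx with hx | ⟨w, hw, rfl⟩
      · exact Set.add_mem_add hx hz.1
      · refine ⟨f z, hz.2, w, hw, ?_⟩
        simp only [f]; abel
    · have h5 := Set.ncard_union_add_ncard_inter A (f '' B)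
      have h6 : A ∩ f '' B = f '' B' := by
        ext x
        constructor
        · rintro ⟨hx, w, hw, rfl⟩
          exact ⟨w, ⟨hw, hx⟩, rfl⟩
        · rintro ⟨w, ⟨hw, hx⟩, rfl⟩
          exact ⟨hx, w, hw, rfl⟩
      rw [h6, Set.ncard_image_of_injective _ hf, Set.ncard_image_of_injective _ hf] at h5
      omega

lemma grid_arith {h u u' v v' d1 d2 : ℕ} (hp : 0 < h) (hu : h ≤ u) (hv : h ≤ v)
    (hu' : h ≤ u') (hv' : h ≤ v') (e1 : v * u' ≤ d1 * h) (e2 : u * v' ≤ d2 * h)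
    (l1 : d1 + h < v + v') (l2 : d2 + h < u + u') : False := by
  obtain ⟨p, rfl⟩ := Nat.exists_eq_add_of_le hu'
  obtain ⟨q, rfl⟩ := Nat.exists_eq_add_of_le hv'
  have a1 : v * p < q * h := by nlinarith
  have a2 : u * q < p * h := by nlinarith
  nlinarith

/-- fibre counting -/
lemma fib_s6 {G : Type*} [AddCommGroup G] [Finite G] (H1 H2 : AddSubgroup G) (x : G)
    (U V D : Set G) (hU : U ⊆ H2) (hV : V ⊆ H1)
    (hD : ∀ s ∈ U, ∀ t ∈ V, x + s + t ∈ D) :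
    V.ncard * U.ncard ≤ D.ncard * ((H1 ⊓ H2 : AddSubgroup G) : Set G).ncard := by
  classical
  have := Fintype.ofFinite G
  rw [Set.ncard_eq_toFinset_card' V, Set.ncard_eq_toFinset_card' U,
    Set.ncard_eq_toFinset_card' D, ← Finset.card_product, mul_comm]
  apply Finset.card_le_mul_card_image_of_maps_to (f := fun p : G × G => x + p.2 + p.1)
  · rintro ⟨t, s⟩ hp
    rw [Finset.mem_product, Set.mem_toFinset, Set.mem_toFinset] at hp
    rw [Set.mem_toFinset]
    exact hD s hp.2 t hp.1
  · intro b hb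
    rw [Set.ncard_eq_toFinset_card']
    by_cases hne : ∃ p0 ∈ (V.toFinset ×ˢ U.toFinset), x + p0.2 + p0.1 = b
    · obtain ⟨⟨t0, s0⟩, hp0, hb0⟩ := hne
      simp only [Finset.mem_product, Set.mem_toFinset] at hp0 hb0
      apply Finset.card_le_card_of_injOn (fun p => p.1 - t0)
      · rintro ⟨t, s⟩ hp
        simp only [Finset.coe_filter, Finset.mem_product, Set.mem_toFinset, Set.mem_ofPred_eq] at hp
        obtain ⟨⟨ht, hs⟩, hb1⟩ := hp
        simp only [Set.coe_toFinset, SetLike.mem_coe, AddSubgroup.mem_inf]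
        refine ⟨H1.sub_mem (hV ht) (hV hp0.1), ?_⟩
        have : t - t0 = s0 - s := by
          rw [sub_eq_sub_iff_add_eq_add]
          rw [← hb0] at hb1
          have : x + (s + t) = x + (s0 + t0) := by rw [← add_assoc, hb1, add_assoc]
          have := add_left_cancel this
          rw [add_comm, this]
        rw [this]
        exact H2.sub_mem (hU hp0.2) (hU hs)
      · rintro ⟨t, s⟩ hp ⟨t', s'⟩ hp' heq
        simp only [Finset.coe_filter, Finset.mem_product, Set.mem_toFinset, Set.mem_ofPred_eq] at hp hp' heq
        have ht : t = t' := by simpa using heq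
        subst ht
        have := hp.2.trans hp'.2.symm
        simp at this
        rw [this]
    · rw [Finset.filter_false_of_mem]
      · simp
      · intro p hp h
        exact hne ⟨p, hp, h⟩

lemma union_half {G : Type*} [AddCommGroup G] [Finite G] (C1 C2 : Set G) (H1 H2 : AddSubgroup G)
    (h1 : ∀ x ∈ C1, ∀ h ∈ H1, x + h ∈ C1) (h2 : ∀ x ∈ C2, ∀ h ∈ H2, x + h ∈ C2)
    (x : G) (hx2 : x ∈ C2) (hx1 : x ∉ C1)
    (n1 : (C2 \ C1).ncard + ((H1 ⊓ H2 : AddSubgroup G) : Set G).ncard < (H1 : Set G).ncard)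
    (n2 : (C1 \ C2).ncard + ((H1 ⊓ H2 : AddSubgroup G) : Set G).ncard < (H2 : Set G).ncard) :
    (H2 : Set G).ncard ≤ (C2 \ C1).ncard := by
  have i1 : ∀ y, ∀ h ∈ H1, (y + h ∈ C1 ↔ y ∈ C1) := fun y h hh =>
    ⟨fun hy => by simpa using h1 _ hy _ (H1.neg_mem hh), fun hy => h1 _ hy _ hh⟩
  have i2 : ∀ y, ∀ h ∈ H2, (y + h ∈ C2 ↔ y ∈ C2) := fun y h hh =>
    ⟨fun hy => by simpa using h2 _ hy _ (H2.neg_mem hh), fun hy => h2 _ hy _ hh⟩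
  have trans_le : ∀ (S T : Set G) (z : G), (∀ s ∈ S, z + s ∈ T) → S.ncard ≤ T.ncard := by
    intro S T z hST
    apply Set.ncard_le_ncard_of_injOn (fun s => z + s) hST
      (fun a _ b _ hab => add_left_cancel hab) (Set.toFinite _)
  set H : AddSubgroup G := H1 ⊓ H2 with hH
  let U : Set G := {s | s ∈ H2 ∧ x + s ∈ C1}
  let U' : Set G := {s | s ∈ H2 ∧ x + s ∉ C1}
  let V : Set G := {s | s ∈ H1 ∧ x + s ∈ C2}
  let V' : Set G := {s | s ∈ H1 ∧ x + s ∉ C2}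
  have hUU : U.ncard + U'.ncard = (H2 : Set G).ncard := by
    rw [← Set.ncard_union_eq]
    · congr 1; ext s; simp only [U, U', Set.mem_union, Set.mem_ofPred_eq, SetLike.mem_coe]; tauto
    · rw [Set.disjoint_left]; intro s hs hs'; exact hs'.2 hs.2
  have hVV : V.ncard + V'.ncard = (H1 : Set G).ncard := by
    rw [← Set.ncard_union_eq]
    · congr 1; ext s; simp only [V, V', Set.mem_union, Set.mem_ofPred_eq, SetLike.mem_coe]; tauto
    · rw [Set.disjoint_left]; intro s hs hs'; exact hs'.2 hs.2
  by_cases hUe : ∃ s, s ∈ U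
  swap
  · apply trans_le _ _ x
    intro s hs
    refine ⟨(i2 _ _ hs).2 hx2, fun h => hUe ⟨s, hs, h⟩⟩
  exfalso
  by_cases hVe : ∃ s, s ∈ V'
  swap
  · have : (H1 : Set G).ncard ≤ (C2 \ C1).ncard := by
      apply trans_le _ _ x
      intro s hs
      refine ⟨?_, fun h => hx1 ((i1 _ _ hs).1 h)⟩
      by_contra h
      exact hVe ⟨s, hs, h⟩
    omega
  obtain ⟨s, hs⟩ := hUe
  obtain ⟨t, ht⟩ := hVe
  have hpos : 0 < (H : Set G).ncard := (Set.ncard_pos (Set.toFinite _)).2 ⟨0, H.zero_mem⟩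
  have b1 : (H : Set G).ncard ≤ U.ncard := by
    apply trans_le _ _ s
    intro h hh
    refine ⟨H2.add_mem hs.1 hh.2, ?_⟩
    rw [← add_assoc, i1 _ _ hh.1]; exact hs.2
  have b2 : (H : Set G).ncard ≤ U'.ncard := by
    apply trans_le _ _ 0
    intro h hh
    rw [zero_add]
    refine ⟨hh.2, ?_⟩
    rw [i1 _ _ hh.1]; exact hx1
  have b3 : (H : Set G).ncard ≤ V.ncard := by
    apply trans_le _ _ 0
    intro h hh
    rw [zero_add]
    refine ⟨hh.1, ?_⟩
    rw [i2 _ _ hh.2]; exact hx2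
  have b4 : (H : Set G).ncard ≤ V'.ncard := by
    apply trans_le _ _ t
    intro h hh
    refine ⟨H1.add_mem ht.1 hh.1, ?_⟩
    rw [← add_assoc, i2 _ _ hh.2]; exact ht.2
  have e1 := fib_s6 H1 H2 x U' V (C2 \ C1) (fun s hs => hs.1) (fun s hs => hs.1) (by
    intro s hs t ht
    refine ⟨?_, ?_⟩
    · rw [add_right_comm, i2 _ _ hs.1]; exact ht.2
    · rw [i1 _ _ ht.1]; exact hs.2)
  have e2 := fib_s6 H1 H2 x U V' (C1 \ C2) (fun s hs => hs.1) (fun s hs => hs.1) (by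
    intro s hs t ht
    refine ⟨?_, ?_⟩
    · rw [i1 _ _ ht.1]; exact hs.2
    · rw [add_right_comm, i2 _ _ hs.1]; exact ht.2)
  rw [mul_comm V'.ncard] at e2
  exact grid_arith hpos b1 b3 b2 b4 e1 e2 (by omega) (by omega)

lemma union_lem {G : Type*} [AddCommGroup G] [Finite G] (C1 C2 : Set G) (H1 H2 : AddSubgroup G)
    (m : ℕ)
    (h1 : ∀ x ∈ C1, ∀ h ∈ H1, x + h ∈ C1) (h2 : ∀ x ∈ C2, ∀ h ∈ H2, x + h ∈ C2)
    (m1 : m ≤ C1.ncard + (H1 : Set G).ncard) (m2 : m ≤ C2.ncard + (H2 : Set G).ncard) :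
    ∃ H : AddSubgroup G, (∀ x ∈ C1 ∪ C2, ∀ h ∈ H, x + h ∈ C1 ∪ C2) ∧
      m ≤ (C1 ∪ C2).ncard + (H : Set G).ncard := by
  by_cases hs1 : C2 ⊆ C1
  · rw [Set.union_eq_self_of_subset_right hs1]; exact ⟨H1, h1, m1⟩
  by_cases hs2 : C1 ⊆ C2
  · rw [Set.union_eq_self_of_subset_left hs2]; exact ⟨H2, h2, m2⟩
  obtain ⟨x, hx2, hx1⟩ := Set.not_subset.1 hs1
  obtain ⟨y, hy1, hy2⟩ := Set.not_subset.1 hs2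
  refine ⟨H1 ⊓ H2, ?_, ?_⟩
  · rintro z (hz | hz) h hh
    · exact Or.inl (h1 _ hz _ hh.1)
    · exact Or.inr (h2 _ hz _ hh.2)
  have c1 : (C2 \ C1).ncard + C1.ncard = (C1 ∪ C2).ncard := by
    rw [Set.ncard_sdiff_add_ncard, Set.union_comm]
  have c2 : (C1 \ C2).ncard + C2.ncard = (C1 ∪ C2).ncard := by
    rw [Set.ncard_sdiff_add_ncard]
  by_contra hcon
  have n1 : (C2 \ C1).ncard + ((H1 ⊓ H2 : AddSubgroup G) : Set G).ncard < (H1 : Set G).ncard := by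
    omega
  have n2 : (C1 \ C2).ncard + ((H1 ⊓ H2 : AddSubgroup G) : Set G).ncard < (H2 : Set G).ncard := by
    omega
  have r1 := union_half C1 C2 H1 H2 h1 h2 x hx2 hx1 n1 n2
  have r2 := union_half C2 C1 H2 H1 h2 h1 y hy1 hy2 (by rwa [inf_comm]) (by rwa [inf_comm])
  omega

lemma kneser_weak_s6 {G : Type*} [AddCommGroup G] [Finite G] (A B : Set G) (hA : A.Nonempty)
    (hB : B.Nonempty) :
    ∃ H : AddSubgroup G, (∀ x ∈ A + B, ∀ h ∈ H, x + h ∈ A + B) ∧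
      A.ncard + B.ncard ≤ (A + B).ncard + (H : Set G).ncard := by
  let P : Set (Set G) := {C | C ⊆ A + B ∧ ∃ H : AddSubgroup G, (∀ x ∈ C, ∀ h ∈ H, x + h ∈ C) ∧
      A.ncard + B.ncard ≤ C.ncard + (H : Set G).ncard}
  have hP : P.Nonempty := by
    obtain ⟨a, ha⟩ := hA
    obtain ⟨b, hb⟩ := hB
    obtain ⟨C, H, _, h2, h3, h4⟩ := etr _ A B rfl a b ha hb
    exact ⟨C, h2, H, h3, h4⟩
  obtain ⟨C, hC⟩ := (Set.toFinite P).exists_maximal hP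
  obtain ⟨hCs, H, hH, hc⟩ := hC.1
  have : A + B ⊆ C := by
    rintro _ ⟨a, ha, b, hb, rfl⟩
    obtain ⟨C', H', h1, h2, h3, h4⟩ := etr _ A B rfl a b ha hb
    have hmem : C ∪ C' ∈ P := ⟨Set.union_subset hCs h2, union_lem C C' H H' _ hH h3 hc h4⟩
    exact hC.2 hmem Set.subset_union_left (Or.inr h1)
  have e : C = A + B := hCs.antisymm this
  subst e
  exact ⟨H, hH, hc⟩

lemma ncard_add_sub {G : Type*} [AddCommGroup G] [Finite G] (H : AddSubgroup G) (X : Set G) :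
    ∃ a, (X + (H : Set G)).ncard = a * (H : Set G).ncard := by
  refine ⟨Nat.card (X.image (QuotientAddGroup.mk : G → G ⧸ H)), ?_⟩
  have := AddSubgroup.card_add_eq_card_addSubgroup_add_card_quotient H X
  rw [mul_comm]
  exact this

lemma tri {G : Type*} [AddCommGroup G] [Finite G] (F : AddSubgroup G) (k : ℕ)
    (hN : (F : Set G).ncard = 5 ^ k) (x0 y0 z0 g : G) (X Y Z : Set G)
    (hX : ∀ x ∈ X, x - x0 ∈ F) (hY : ∀ x ∈ Y, x - y0 ∈ F) (hZ : ∀ x ∈ Z, x - z0 ∈ F)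
    (hg : g - (x0 + y0 + z0) ∈ F)
    (cX : 2 * (F : Set G).ncard < 5 * X.ncard) (cY : 2 * (F : Set G).ncard < 5 * Y.ncard)
    (neZ : Z.Nonempty) (hgn : ∀ x ∈ X, ∀ y ∈ Y, ∀ z ∈ Z, x + y + z ≠ g) :
    5 * Z.ncard < (F : Set G).ncard ∧
      10 * (X.ncard + Y.ncard + Z.ncard) ≤ 11 * (F : Set G).ncard := by
  have neX : X.Nonempty := by
    rw [← Set.ncard_pos (Set.toFinite _)]; omega
  have neY : Y.Nonempty := by
    rw [← Set.ncard_pos (Set.toFinite _)]; omega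
  set H := stabS (X + Y) with hH
  have hHs : ∀ s, ∀ h ∈ H, s + h ∈ X + Y ↔ s ∈ X + Y := fun s h hh => hh s
  have hXY : ∀ s ∈ X + Y, s - (x0 + y0) ∈ F := by
    rintro _ ⟨x, hx, y, hy, rfl⟩
    have := F.add_mem (hX x hx) (hY y hy)
    convert this using 1
    simp only; abel
  have hHF : H ≤ F := by
    intro h hh
    obtain ⟨s, hs⟩ := neX.add neY
    have := F.sub_mem (hXY _ ((hHs s h hh).2 hs)) (hXY _ hs)
    convert this using 1
    abel
  have hsum : (X + (H : Set G)) + (Y + (H : Set G)) = X + Y := by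
    apply Set.Subset.antisymm
    · rintro _ ⟨_, ⟨x, hx, h, hh, rfl⟩, _, ⟨y, hy, h', hh', rfl⟩, rfl⟩
      have := (hHs (x + y) (h + h') (H.add_mem hh hh')).2 (Set.add_mem_add hx hy)
      convert this using 1
      simp only; abel
    · rintro _ ⟨x, hx, y, hy, rfl⟩
      exact ⟨x, ⟨x, hx, 0, H.zero_mem, by simp⟩, y, ⟨y, hy, 0, H.zero_mem, by simp⟩, rfl⟩
  have neH : (H : Set G).Nonempty := ⟨0, H.zero_mem⟩
  obtain ⟨H', hH', hk⟩ := kneser_weak_s6 (X + (H : Set G)) (Y + (H : Set G)) (neX.add neH) (neY.add neH)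
  rw [hsum] at hH' hk
  have hle : (H' : Set G).ncard ≤ (H : Set G).ncard := by
    apply Set.ncard_le_ncard _ (Set.toFinite _)
    intro h hh
    exact mem_stabS fun x hx => hH' x hx h hh
  have hdisj : (X + Y).ncard + (Z + (H : Set G)).ncard ≤ (F : Set G).ncard := by
    let f : G → G := fun s => s - (x0 + y0)
    let f' : G → G := fun z => g - z - (x0 + y0)
    have hf : Function.Injective f := fun a b hab => by simpa [f] using hab
    have hf' : Function.Injective f' := fun a b hab => by simpa [f'] using hab
    rw [← Set.ncard_image_of_injective (X + Y) hf,
      ← Set.ncard_image_of_injective (Z + (H : Set G)) hf', ← Set.ncard_union_eq]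
    · apply Set.ncard_le_ncard _ (Set.toFinite _)
      rintro _ (⟨s, hs, rfl⟩ | ⟨_, ⟨z, hz, h, hh, rfl⟩, rfl⟩)
      · exact hXY s hs
      · have := F.sub_mem (F.sub_mem hg (hZ z hz)) (hHF hh)
        have e : f' (z + h) = g - (x0 + y0 + z0) - (z - z0) - h := by simp only [f']; abel
        change f' (z + h) ∈ F
        rw [e]; exact this
    · rw [Set.disjoint_left]
      rintro _ ⟨s, hs, rfl⟩ ⟨_, ⟨z, hz, h, hh, rfl⟩, h2⟩
      have h3 : s + h = g - z := by
        have h4 : g - (z + h) = s := sub_left_injective h2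
        rw [← h4]; abel
      have h5 := (hHs s h hh).2 hs
      rw [h3] at h5
      obtain ⟨x, hx, y, hy, hxy⟩ := h5
      apply hgn x hx y hy z hz
      simp only at hxy
      rw [hxy]; abel
  have sub : ∀ T : Set G, T.ncard ≤ (T + (H : Set G)).ncard := by
    intro T
    apply Set.ncard_le_ncard _ (Set.toFinite _)
    intro t ht
    exact ⟨t, ht, 0, H.zero_mem, by simp⟩
  have sX := sub X
  have sY := sub Y
  have sZ := sub Z
  obtain ⟨a, ha⟩ := ncard_add_sub H X
  obtain ⟨b, hb⟩ := ncard_add_sub H Y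
  obtain ⟨c, hc⟩ := ncard_add_sub H Z
  have hpos : 0 < (H : Set G).ncard := (Set.ncard_pos (Set.toFinite _)).2 neH
  have zpos : 0 < Z.ncard := (Set.ncard_pos (Set.toFinite _)).2 neZ
  have hdvd : (H : Set G).ncard ∣ (F : Set G).ncard := AddSubgroup.card_dvd_of_le hHF
  obtain ⟨m, hm⟩ := hdvd
  have hm5 : m = 1 ∨ 5 ∣ m := by
    have : m ∣ 5 ^ k := by rw [← hN, hm]; exact Dvd.intro_left _ rfl
    obtain ⟨j, _, rfl⟩ := (Nat.dvd_prime_pow (by norm_num)).1 this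
    rcases j with _ | j
    · left; rfl
    · right; exact ⟨5 ^ j, by rw [pow_succ, mul_comm]⟩
  rw [ha] at sX hk
  rw [hb] at sY hk
  rw [hc] at sZ hdisj
  rw [hm] at hdisj cX cY ⊢
  generalize (H : Set G).ncard = t at *
  have q : a + b + c ≤ m + 1 := by
    have : (a + b + c) * t ≤ (m + 1) * t := by nlinarith
    exact Nat.le_of_mul_le_mul_right this hpos
  have qa : 2 * m < 5 * a := by
    have : (2 * m) * t < (5 * a) * t := by nlinarith
    exact Nat.lt_of_mul_lt_mul_right this
  have qb : 2 * m < 5 * b := by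
    have : (2 * m) * t < (5 * b) * t := by nlinarith
    exact Nat.lt_of_mul_lt_mul_right this
  have qc : 1 ≤ c := by
    by_contra h
    have : c = 0 := by omega
    subst this; omega
  rcases hm5 with rfl | ⟨r, rfl⟩
  · omega
  · have q1 : c + 1 ≤ r := by omega
    have q2 : 2 ≤ r := by omega
    have q3 : c * t + t ≤ r * t := by nlinarith
    have q4 : 2 * t ≤ r * t := by nlinarith
    have q5 : (a + b + c) * t ≤ (5 * r + 1) * t := Nat.mul_le_mul_right _ q
    have q6 : c * t + t ≤ r * t := q3
    have q7 : (a + b + c) * t = a * t + b * t + c * t := by ring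
    have q8 : (5 * r + 1) * t = 5 * (r * t) + t := by ring
    have q9 : t * (5 * r) = 5 * (r * t) := by ring
    rw [q7, q8] at q5
    rw [q9]
    clear hk hdisj cX cY hm hN
    constructor <;> omega

theorem stmt6 (n : ℕ) (hn : 1 ≤ n) (A : Set (Fin n → ZMod 5))
    (hA : (A.ncard : ℝ) > 0.3 * 5 ^ n)
    (h3A : itSum 3 A ≠ Set.univ)
    (F : AddSubgroup (Fin n → ZMod 5)) (hF : F.index = 5)
    (hdens : ∀ c : Fin n → ZMod 5,
      ((A ∩ (c +ᵥ (F : Set (Fin n → ZMod 5)))).ncard : ℝ) < 0.5 * Nat.card F) :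
    ∀ c₁ c₂ : Fin n → ZMod 5,
      ((A ∩ (c₁ +ᵥ (F : Set (Fin n → ZMod 5)))).ncard : ℝ) > 0.4 * Nat.card F →
      ((A ∩ (c₂ +ᵥ (F : Set (Fin n → ZMod 5)))).ncard : ℝ) > 0.4 * Nat.card F →
      c₁ - c₂ ∈ F := by
  intro c₁ c₂ h1 h2
  by_contra hnot
  obtain ⟨k, rfl⟩ : ∃ k, n = k + 1 := ⟨n - 1, by omega⟩
  have hcard : Nat.card F = 5 ^ k := by
    have := F.card_mul_index
    rw [hF] at this
    simp only [Nat.card_eq_fintype_card (α := Fin (k + 1) → ZMod 5), Fintype.card_pi, ZMod.card,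
      Finset.prod_const, Finset.card_univ, Fintype.card_fin, pow_succ] at this
    omega
  have hN : (F : Set (Fin (k + 1) → ZMod 5)).ncard = 5 ^ k := hcard
  obtain ⟨g, hg⟩ := (Set.ne_univ_iff_exists_notMem _).1 h3A
  have hg3 : ∀ x ∈ A, ∀ y ∈ A, ∀ z ∈ A, x + y + z ≠ g := by
    rintro x hx y hy z hz rfl
    apply hg
    refine ⟨x + y, ⟨x, ⟨0, rfl, x, hx, by simp⟩, y, hy, rfl⟩, z, hz, rfl⟩
  let d := c₂ - c₁
  let P : ℕ → Set (Fin (k + 1) → ZMod 5) := fun i =>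
    A ∩ ((c₁ + i • d) +ᵥ (F : Set (Fin (k + 1) → ZMod 5)))
  have hPA : ∀ i, P i ⊆ A := fun i => Set.inter_subset_left
  have hPF : ∀ i, ∀ x ∈ P i, x - (c₁ + i • d) ∈ F := by
    rintro i x ⟨_, y, hy, rfl⟩
    simpa using hy
  have hcov : ∀ x, ∃ i < 5, x - i • d ∈ F := by
    intro x
    have hq : Nat.card ((Fin (k + 1) → ZMod 5) ⧸ F) = 5 := hF
    have hd : (d : (Fin (k + 1) → ZMod 5) ⧸ F) ≠ 0 := by
      rw [Ne, QuotientAddGroup.eq_zero_iff]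
      intro h
      apply hnot
      have := F.neg_mem h
      simpa [d] using this
    have : Fact (Nat.Prime 5) := ⟨by norm_num⟩
    have hz := mem_multiples_of_prime_card hq hd (g' := (x : (Fin (k + 1) → ZMod 5) ⧸ F))
    obtain ⟨i, hi⟩ := hz
    refine ⟨i % 5, Nat.mod_lt _ (by norm_num), ?_⟩
    have h5 : (i % 5) • d = i • d := by
      conv_rhs => rw [← Nat.mod_add_div i 5]
      rw [add_nsmul, mul_nsmul]
      have : 5 • d = 0 := by
        ext j
        have : ((5 : ℕ) : ZMod 5) = 0 := ZMod.natCast_self 5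
        simp only [Pi.smul_apply, nsmul_eq_mul, this, zero_mul, Pi.zero_apply]
      rw [this]; simp
    rw [h5, ← QuotientAddGroup.eq_zero_iff]
    simp only at hi
    rw [QuotientAddGroup.mk_sub, QuotientAddGroup.mk_nsmul, hi, sub_self]
  have hAle : A.ncard ≤ (P 0).ncard + (P 1).ncard + (P 2).ncard + (P 3).ncard + (P 4).ncard := by
    have hs : A ⊆ P 0 ∪ P 1 ∪ P 2 ∪ P 3 ∪ P 4 := by
      intro x hx
      obtain ⟨i, hi, hxi⟩ := hcov (x - c₁)
      have hm : x ∈ P i := ⟨hx, x - c₁ - i • d, hxi, by simp [vadd_eq_add]⟩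
      interval_cases i <;> simp only [Set.mem_union] <;> tauto
    have e0 := Set.ncard_le_ncard hs (Set.toFinite _)
    have e1 := Set.ncard_union_le (P 0) (P 1)
    have e2 := Set.ncard_union_le (P 0 ∪ P 1) (P 2)
    have e3 := Set.ncard_union_le (P 0 ∪ P 1 ∪ P 2) (P 3)
    have e4 := Set.ncard_union_le (P 0 ∪ P 1 ∪ P 2 ∪ P 3) (P 4)
    omega
  have hNpos : 0 < 5 ^ k := by positivity
  have hA' : 3 * 5 ^ k < 2 * A.ncard := by
    have : (3 * 5 ^ k : ℝ) < 2 * A.ncard := by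
      rw [pow_succ] at hA
      linarith
    exact_mod_cast this
  have hd' : ∀ i, 2 * (P i).ncard < 5 ^ k := by
    intro i
    have h := hdens (c₁ + i • d)
    rw [hcard] at h
    push_cast at h
    have : (2 * (P i).ncard : ℝ) < 5 ^ k := by
      change ((P i).ncard : ℝ) < _ at h
      linarith
    exact_mod_cast this
  have hP0 : 2 * 5 ^ k < 5 * (P 0).ncard := by
    have e : P 0 = A ∩ (c₁ +ᵥ (F : Set (Fin (k + 1) → ZMod 5))) := by simp [P]
    rw [hcard, ← e] at h1
    push_cast at h1
    have : (2 * 5 ^ k : ℝ) < 5 * (P 0).ncard := by linarith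
    exact_mod_cast this
  have hP1 : 2 * 5 ^ k < 5 * (P 1).ncard := by
    have e : P 1 = A ∩ (c₂ +ᵥ (F : Set (Fin (k + 1) → ZMod 5))) := by simp [P, d]
    rw [hcard, ← e] at h2
    push_cast at h2
    have : (2 * 5 ^ k : ℝ) < 5 * (P 1).ncard := by linarith
    exact_mod_cast this
  obtain ⟨j, hj, hgj⟩ := hcov (g - (c₁ + c₁ + c₁))
  have key : ∀ p q r, p + q + r = j → 2 * 5 ^ k < 5 * (P p).ncard → 2 * 5 ^ k < 5 * (P q).ncard →
      (P r).Nonempty → 5 * (P r).ncard < 5 ^ k ∧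
        10 * ((P p).ncard + (P q).ncard + (P r).ncard) ≤ 11 * 5 ^ k := by
    intro p q r hpqr hp hq hr
    have := tri F k hN (c₁ + p • d) (c₁ + q • d) (c₁ + r • d) g (P p) (P q) (P r)
      (hPF p) (hPF q) (hPF r) (by
        convert hgj using 1
        rw [← hpqr, add_nsmul, add_nsmul]; abel) (by rwa [hN]) (by rwa [hN]) hr
      (fun x hx y hy z hz => hg3 x (hPA _ hx) y (hPA _ hy) z (hPA _ hz))
    rwa [hN] at this
  have key' : ∀ p q r, p + q + r = j → 2 * 5 ^ k < 5 * (P p).ncard → 2 * 5 ^ k < 5 * (P q).ncard →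
      5 * (P r).ncard < 5 ^ k ∧
        10 * ((P p).ncard + (P q).ncard + (P r).ncard) ≤ 11 * 5 ^ k := by
    intro p q r hpqr hp hq
    rcases Set.eq_empty_or_nonempty (P r) with h | h
    · rw [h, Set.ncard_empty]
      have := hd' p
      have := hd' q
      omega
    · exact key p q r hpqr hp hq h
  clear_value P
  clear key
  have hj4 : j = 4 := by
    by_contra hne
    interval_cases j
    · have := key' 0 0 0 rfl hP0 hP0; omega
    · have := key' 0 0 1 rfl hP0 hP0; omega
    · have := key' 0 1 1 rfl hP0 hP1; omega
    · have := key' 1 1 1 rfl hP1 hP1; omega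
    · exact hne rfl
  subst hj4
  have k1 := key' 0 0 4 rfl hP0 hP0
  have k2 := key' 1 1 2 rfl hP1 hP1
  have k3 := key' 0 1 3 rfl hP0 hP1
  omega
end
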